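/- There exists a constant c > 0 such that for every integer n ≥ 3, every simple drawing of K_n contains a plane path of length at least c · (log n)/(log log n); that is, a sequence of at least 1 + c · (log n)/(log log n) distinct vertices in which the edges joining consecutive vertices pairwise do not cross. -/

import Mathlib

/-!
The proof works with the algebraic intersection number `itx` of two paths, defined through changes of
argument, instead of topological facts such as the Jordan curve theorem.

In a `SimpleDrawing` two independent edges meet in at most one point, but they may touch there without
crossing. Call two such edges touching if they meet and have intersection number zero. For fixed
vertices `p, q`, the touching pairs `pk`, `ql` contain no four-cycle `k₁, l₁, k₂, l₂`: rerouting at the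
touching points would produce a drawing of `K₃,₃` in which all independent pairs of paths have
intersection number zero, contradicting an algebraic form of the nonplanarity of `K₃,₃`
(`touch_C4`, `K33`). By the Kővári–Sós–Turán bound touching pairs are rare, and the first moment method
finds a subdrawing without touching pairs on about `n ^ (1 / 9)` vertices (`exists_noTouch`).

In a touch-free drawing, fix an edge `vw` and write `s ≺ s'` if the edge `ss'` crosses `vw` from right to
left, say. No path can cross a simple closed curve twice, both times in the same direction
(`cycle_false`). Applied to triangles, this shows that `≺` is a strict partial order (`Prec.trans`);
applied to quadrilaterals, it shows that `ik` and `jl` do not cross if `i ≺ j ≺ k ≺ l` (`interleaved`).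
Hence a chain of `2h` vertices gives a plane zigzag path with `2h - 1` edges (`path_of_chain`). If no edge
has a long chain, then by Mirsky's theorem every edge `vw` has large antichains: sets of vertices whose
mutual edges do not cross `vw`. A plane path is then built greedily, continuing from `w` inside such an
antichain (`path_of_no_chain`).

Together, `(2k + 2) ^ k` vertices in the touch-free subdrawing give a plane path with `k` edges
(`exists_planeSeq`), and some `k` of order `log n / log log n` is admissible (`exists_length`).
-/

open Set

/-- Points of the plane. -/
abbrev Pt : Type := ℝ × ℝ

/-- `A` is a simple (continuous, injective) arc from `p` to `q`. -/
def IsSimpleArc (A : Set Pt) (p q : Pt) : Prop :=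
  ∃ f : ℝ → Pt, ContinuousOn f (Set.Icc 0 1) ∧ Set.InjOn f (Set.Icc 0 1) ∧
    f 0 = p ∧ f 1 = q ∧ A = f '' Set.Icc 0 1

/-- A simple drawing of the complete graph `K n` in the plane:  vertices are distinct
points, edges are simple arcs connecting their endpoints, no edge passes through a
vertex other than its endpoints, two edges sharing an endpoint meet exactly in that
endpoint, and two independent edges meet in at most one point. -/
structure SimpleDrawing (n : ℕ) where
  vtx : Fin n → Pt
  vtx_inj : Function.Injective vtx
  arc : Fin n → Fin n → Set Pt
  arc_symm : ∀ i j, arc i j = arc j i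
  arc_simple : ∀ i j, i ≠ j → IsSimpleArc (arc i j) (vtx i) (vtx j)
  vtx_not_mem : ∀ i j k, i ≠ j → k ≠ i → k ≠ j → vtx k ∉ arc i j
  adj_inter : ∀ i j k, i ≠ j → i ≠ k → j ≠ k → arc i j ∩ arc i k = {vtx i}
  indep_inter : ∀ i j k l, i ≠ j → k ≠ l → i ≠ k → i ≠ l → j ≠ k → j ≠ l →
    (arc i j ∩ arc k l).Subsingleton

namespace SimpleDrawing

variable {n : ℕ}

/-- The union of all edges of the drawing. -/
def drawingSet (D : SimpleDrawing n) : Set Pt :=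
  ⋃ (i : Fin n) (j : Fin n) (_ : i ≠ j), D.arc i j

/-- The edges `v_i v_j` and `v_k v_l` cross: they meet in a point that is not a common
endpoint of the two edges. -/
def Crosses (D : SimpleDrawing n) (i j k l : Fin n) : Prop :=
  ∃ x : Pt, x ∈ D.arc i j ∧ x ∈ D.arc k l ∧
    ¬ ((x = D.vtx i ∨ x = D.vtx j) ∧ (x = D.vtx k ∨ x = D.vtx l))

end SimpleDrawing

/-- The ray emanating from `O` in direction `d`. -/
def rayFrom (O d : Pt) : Set Pt := {x : Pt | ∃ t : ℝ, 0 ≤ t ∧ x = O + t • d}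

namespace SimpleDrawing

/-- `D` is c-monotone with respect to the point `O`: `O` does not lie on the drawing and
every ray emanating from `O` meets every edge of `D` in at most one point. -/
def CMonotoneAt (D : SimpleDrawing n) (O : Pt) : Prop :=
  O ∉ D.drawingSet ∧
    ∀ d : Pt, d ≠ 0 → ∀ i j : Fin n, i ≠ j → (rayFrom O d ∩ D.arc i j).Subsingleton

/-- `D` is c-monotone. -/
def CMonotone (D : SimpleDrawing n) : Prop := ∃ O : Pt, D.CMonotoneAt O

/-- `D` is generalized twisted with respect to `O` and the ray from `O` with direction `d`:
`D` is c-monotone with respect to `O` and the ray meets every edge of `D`. -/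
def GenTwistedAt (D : SimpleDrawing n) (O d : Pt) : Prop :=
  D.CMonotoneAt O ∧ d ≠ 0 ∧ ∀ i j : Fin n, i ≠ j → (rayFrom O d ∩ D.arc i j).Nonempty

/-- `D` is generalized twisted. -/
def GenTwisted (D : SimpleDrawing n) : Prop := ∃ O d : Pt, D.GenTwistedAt O d

/-- The vertices `v_1, …, v_n` of `D` appear counterclockwise around `O`, at angles
`θ 0 < θ 1 < … < θ (n-1)`, all lying strictly (counterclockwise) between the angle `φ`
of the ray `r` with direction `d` and `φ + 2π`;  i.e. the vertices are labeled
counterclockwise around `O` and the ray `r` lies counterclockwise between the ray through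
`v_n` and the ray through `v_1`. -/
def IsCCWLabeling (D : SimpleDrawing n) (O d : Pt) (φ : ℝ) (θ : Fin n → ℝ) : Prop :=
  (∃ s : ℝ, 0 < s ∧ d = s • ((Real.cos φ, Real.sin φ) : Pt)) ∧
  StrictMono θ ∧
  (∀ i : Fin n, θ i ∈ Set.Ioo φ (φ + 2 * Real.pi)) ∧
  (∀ i : Fin n, ∃ s : ℝ, 0 < s ∧
    D.vtx i = O + s • ((Real.cos (θ i), Real.sin (θ i)) : Pt))

/-- `C` is a cell of `D`: a connected component of the complement of the drawing. -/
def IsCell (D : SimpleDrawing n) (C : Set Pt) : Prop :=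
  ∃ x : Pt, x ∉ D.drawingSet ∧ C = connectedComponentIn D.drawingSetᶜ x

/-- `C` is a vi-cell of `D`: a cell whose closure contains a vertex. -/
def IsViCell (D : SimpleDrawing n) (C : Set Pt) : Prop :=
  D.IsCell C ∧ ∃ i : Fin n, D.vtx i ∈ closure C

/-- The triangle of `D` on the three vertices `i`, `j`, `k` (as a subset of the plane). -/
def triangleSet (D : SimpleDrawing n) (i j k : Fin n) : Set Pt :=
  D.arc i j ∪ D.arc j k ∪ D.arc i k

/-- Two cells are antipodal if for every triangle of `D` they lie in different sides
(connected components of the complement) of that triangle. -/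
def Antipodal (D : SimpleDrawing n) (C₁ C₂ : Set Pt) : Prop :=
  ∀ i j k : Fin n, i ≠ j → j ≠ k → i ≠ k →
    ∀ x ∈ C₁, ∀ y ∈ C₂,
      connectedComponentIn (D.triangleSet i j k)ᶜ x ≠
        connectedComponentIn (D.triangleSet i j k)ᶜ y

/-- `D` and `E` are weakly isomorphic: some bijection of the vertices preserves
crossing pairs of edges. -/
def WeaklyIso (D E : SimpleDrawing n) : Prop :=
  ∃ σ : Fin n ≃ Fin n, ∀ i j k l : Fin n, i ≠ j → k ≠ l →
    (D.Crosses i j k l ↔ E.Crosses (σ i) (σ j) (σ k) (σ l))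

end SimpleDrawing

namespace PlanePath

/-! ### Change of argument along a path -/

/-- `turn f z` is the change of the argument of `f t - z` as `t` runs from `0` to `1`
(the junk value is `0` if `f - z` has no continuous logarithm on `[0, 1]`). -/
noncomputable def turn (f : ℝ → ℂ) (z : ℂ) : ℝ :=
  open Classical in
  if h : ∃ L : ℝ → ℂ, ContinuousOn L (Icc 0 1) ∧ ∀ t ∈ Icc (0 : ℝ) 1, Complex.exp (L t) = f t - z
  then (h.choose 1 - h.choose 0).im else 0

/-- The path `f` avoids the point `z`. -/
def Off (f : ℝ → ℂ) (z : ℂ) : Prop := ∀ t ∈ Icc (0 : ℝ) 1, f t ≠ z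

/-- The paths `f` and `g` are disjoint. -/
def Disj (f g : ℝ → ℂ) : Prop := ∀ s ∈ Icc (0 : ℝ) 1, ∀ t ∈ Icc (0 : ℝ) 1, f s ≠ g t

/-- Two continuous logarithms of the same function differ by a constant. -/
lemma lifts_const {s : Set ℝ} (hs : IsPreconnected s) {L L' : ℝ → ℂ} (hL : ContinuousOn L s)
    (hL' : ContinuousOn L' s) (h : ∀ t ∈ s, Complex.exp (L t) = Complex.exp (L' t))
    {a b : ℝ} (ha : a ∈ s) (hb : b ∈ s) : L b - L a = L' b - L' a := by
  have key := hs.constant_of_mapsTo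
    (f := fun t => L t - L' t)
    (T := (AddSubgroup.zmultiples (2 * Real.pi * Complex.I) : Set ℂ))
    ⟨NormedSpace.discreteTopology_zmultiples _⟩ (hL.sub hL') ?_ ha hb
  · linear_combination -key
  · intro t ht
    obtain ⟨n, hn⟩ := Complex.exp_eq_exp_iff_exists_int.1 (h t ht)
    exact AddSubgroup.mem_zmultiples_iff.2 ⟨n, by simp [hn]⟩

lemma turn_eq {f : ℝ → ℂ} {z : ℂ} {L : ℝ → ℂ} (hL : ContinuousOn L (Icc 0 1))
    (h : ∀ t ∈ Icc (0 : ℝ) 1, Complex.exp (L t) = f t - z) : turn f z = (L 1 - L 0).im := by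
  have hex : ∃ L : ℝ → ℂ, ContinuousOn L (Icc 0 1) ∧
      ∀ t ∈ Icc (0 : ℝ) 1, Complex.exp (L t) = f t - z := ⟨L, hL, h⟩
  rw [turn, dif_pos hex]
  congr 1
  refine lifts_const isPreconnected_Icc hex.choose_spec.1 hL (fun t ht => ?_)
    (by simp) (by simp)
  rw [hex.choose_spec.2 t ht, h t ht]

/-- Clamping of a real number to `[0, 1]`. -/
noncomputable def clamp (t : ℝ) : ℝ := max 0 (min t 1)

lemma clamp_cont : Continuous clamp := by unfold clamp; fun_prop

lemma clamp_mem (t : ℝ) : clamp t ∈ Icc (0 : ℝ) 1 := by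
  unfold clamp; constructor
  · exact le_max_left _ _
  · exact max_le zero_le_one (min_le_right _ _)

lemma clamp_of_mem {t : ℝ} (h : t ∈ Icc (0 : ℝ) 1) : clamp t = t := by
  unfold clamp; rw [min_eq_left h.2, max_eq_right h.1]

/-- Nonvanishing continuous functions on the unit square have a continuous logarithm. -/
lemma exists_log_square {F : ℝ × ℝ → ℂ} (hF : ContinuousOn F (Icc 0 1 ×ˢ Icc 0 1))
    (h0 : ∀ p ∈ Icc (0 : ℝ) 1 ×ˢ Icc (0 : ℝ) 1, F p ≠ 0) :
    ∃ L : ℝ × ℝ → ℂ, Continuous L ∧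
      ∀ p ∈ Icc (0 : ℝ) 1 ×ˢ Icc (0 : ℝ) 1, Complex.exp (L p) = F p := by
  let c : ℝ × ℝ → ℝ × ℝ := fun p => (clamp p.1, clamp p.2)
  have hc : Continuous c := by
    have := clamp_cont
    fun_prop
  have hcm : ∀ p, c p ∈ Icc (0 : ℝ) 1 ×ˢ Icc (0 : ℝ) 1 := fun p => ⟨clamp_mem _, clamp_mem _⟩
  have hsc : IsSimplyConnected (univ : Set (ℝ × ℝ)) :=
    by
    rw [IsSimplyConnected]
    have : SimplyConnectedSpace (univ : Set (ℝ × ℝ)) := by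
      have : ContractibleSpace (univ : Set (ℝ × ℝ)) := convex_univ.contractibleSpace univ_nonempty
      infer_instance
    exact this
  obtain ⟨L, hL, h⟩ := Complex.exists_continuousOn_eqOn_exp_comp hsc isOpen_univ
    (g := F ∘ c) (hF.comp_continuous hc hcm).continuousOn (by
      rintro ⟨p, -, hp⟩; exact h0 _ (hcm p) hp)
  refine ⟨L, continuousOn_univ.1 hL, fun p hp => ?_⟩
  have := h (mem_univ p)
  simp only [Function.comp] at this
  rw [this]
  congr 1
  exact Prod.ext (clamp_of_mem hp.1) (clamp_of_mem hp.2)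

lemma exists_log {f : ℝ → ℂ} (hf : ContinuousOn f (Icc 0 1)) {z : ℂ} (h : Off f z) :
    ∃ L : ℝ → ℂ, Continuous L ∧ ∀ t ∈ Icc (0 : ℝ) 1, Complex.exp (L t) = f t - z := by
  obtain ⟨L, hL, hL'⟩ := exists_log_square (F := fun p => f p.1 - z)
    ((hf.comp continuousOn_fst (fun p hp => hp.1)).sub continuousOn_const)
    (fun p hp => sub_ne_zero.2 (h _ hp.1))
  exact ⟨fun t => L (t, 0), by fun_prop, fun t ht => hL' (t, 0) ⟨ht, by simp⟩⟩

lemma turn_const (w z : ℂ) (h : w ≠ z) : turn (fun _ => w) z = 0 := by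
  rw [turn_eq (L := fun _ => Complex.log (w - z)) continuousOn_const]
  · simp
  · intro t _; exact Complex.exp_log (sub_ne_zero.2 h)

lemma lift_zero {L : ℝ → ℂ} (hL : Continuous L) {w : ℂ}
    (h : ∀ t ∈ Icc (0 : ℝ) 1, Complex.exp (L t) = w) : (L 1).im = (L 0).im := by
  have h1 := turn_eq (f := fun _ => w) (z := 0) hL.continuousOn (by simpa using h)
  have hw : w ≠ 0 := by rw [← h 0 (by simp)]; exact Complex.exp_ne_zero _
  rw [turn_const w 0 hw] at h1
  simp at h1; linarith

/-- Homotopy invariance of the change of argument, for straight-line homotopies. -/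
lemma turn_homotopy {f g : ℝ → ℂ} (hf : Continuous f) (hg : Continuous g) {z : ℂ}
    (h0 : f 0 = g 0) (h1 : f 1 = g 1)
    (h : ∀ t ∈ Icc (0 : ℝ) 1, ∀ s ∈ Icc (0 : ℝ) 1, (1 - s : ℂ) * f t + s * g t ≠ z) :
    turn f z = turn g z := by
  obtain ⟨L, hL, hL'⟩ := exists_log_square
    (F := fun p => (1 - (p.1 : ℂ)) * f p.2 + p.1 * g p.2 - z) (by fun_prop)
    (fun p hp => sub_ne_zero.2 (h _ hp.2 _ hp.1))
  have m0 : (0 : ℝ) ∈ Icc (0 : ℝ) 1 := by simp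
  have m1 : (1 : ℝ) ∈ Icc (0 : ℝ) 1 := by simp
  have e1 := turn_eq (f := f) (z := z) (L := fun t => L (0, t)) (by fun_prop)
    (fun t ht => by simpa using hL' (0, t) ⟨m0, ht⟩)
  have e2 := turn_eq (f := g) (z := z) (L := fun t => L (1, t)) (by fun_prop)
    (fun t ht => by simpa using hL' (1, t) ⟨m1, ht⟩)
  have e3 := lift_zero (L := fun s => L (s, 0)) (w := f 0 - z) (by fun_prop)
    (fun s hs => by rw [hL' (s, 0) ⟨hs, m0⟩]; simp only [h0]; ring)
  have e4 := lift_zero (L := fun s => L (s, 1)) (w := f 1 - z) (by fun_prop)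
    (fun s hs => by rw [hL' (s, 1) ⟨hs, m1⟩]; simp only [h1]; ring)
  rw [e1, e2]; simp only [Complex.sub_im]; linarith

/-- The four "corner" changes of argument of two disjoint paths sum to zero. -/
lemma turn_disj {f g : ℝ → ℂ} (hf : Continuous f) (hg : Continuous g) (h : Disj f g) :
    turn f (g 0) - turn f (g 1) + turn g (f 1) - turn g (f 0) = 0 := by
  obtain ⟨L, hL, hL'⟩ := exists_log_square
    (F := fun p => f p.1 - g p.2) (by fun_prop)
    (fun p hp => sub_ne_zero.2 (h _ hp.1 _ hp.2))
  have m0 : (0 : ℝ) ∈ Icc (0 : ℝ) 1 := by simp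
  have m1 : (1 : ℝ) ∈ Icc (0 : ℝ) 1 := by simp
  have e1 : ∀ t ∈ Icc (0 : ℝ) 1, turn f (g t) = (L (1, t) - L (0, t)).im := fun t ht =>
    turn_eq (f := f) (L := fun s => L (s, t)) (by fun_prop) (fun s hs => hL' (s, t) ⟨hs, ht⟩)
  have e2 : ∀ s ∈ Icc (0 : ℝ) 1, turn g (f s) = (L (s, 1) - L (s, 0)).im := fun s hs => by
    rw [turn_eq (f := g) (L := fun t => L (s, t) + Real.pi * Complex.I) (by fun_prop)
      (fun t ht => by
        rw [Complex.exp_add, Complex.exp_pi_mul_I, hL' (s, t) ⟨hs, ht⟩]; ring)]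
    simp
  rw [e1 0 m0, e1 1 m1, e2 0 m0, e2 1 m1]; simp only [Complex.sub_im]; ring

/-- The sub-path of `f` from parameter `a` to parameter `b` (reversed if `b < a`). -/
noncomputable def seg (f : ℝ → ℂ) (a b : ℝ) : ℝ → ℂ := fun t => f (a + t * (b - a))

lemma seg_cont {f : ℝ → ℂ} (hf : Continuous f) (a b : ℝ) : Continuous (seg f a b) := by
  unfold seg; fun_prop

@[simp] lemma seg_zero (f : ℝ → ℂ) (a b : ℝ) : seg f a b 0 = f a := by simp [seg]
@[simp] lemma seg_one (f : ℝ → ℂ) (a b : ℝ) : seg f a b 1 = f b := by simp [seg]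
lemma seg_self (f : ℝ → ℂ) : seg f 0 1 = f := by ext; simp [seg]

lemma seg_param_mem {a b t : ℝ} (ht : t ∈ Icc (0 : ℝ) 1) : a + t * (b - a) ∈ uIcc a b := by
  rcases le_total a b with h | h
  · rw [uIcc_of_le h]; constructor <;> nlinarith [ht.1, ht.2]
  · rw [uIcc_of_ge h]; constructor <;> nlinarith [ht.1, ht.2]

lemma uIcc_param {a b x : ℝ} (hx : x ∈ uIcc a b) : ∃ t ∈ Icc (0 : ℝ) 1, x = a + t * (b - a) := by
  rw [← segment_eq_uIcc, segment_eq_image'] at hx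
  obtain ⟨t, ht, rfl⟩ := hx
  exact ⟨t, ht, by simp⟩

lemma seg_off {f : ℝ → ℂ} {a b : ℝ} {z : ℂ} : Off (seg f a b) z ↔ ∀ x ∈ uIcc a b, f x ≠ z := by
  constructor
  · intro h x hx
    obtain ⟨t, ht, rfl⟩ := uIcc_param hx
    exact h t ht
  · intro h t ht; exact h _ (seg_param_mem ht)

/-- Additivity of the change of argument under subdivision. -/
lemma turn_seg_add {f : ℝ → ℂ} (hf : Continuous f) {z : ℂ} (h : Off f z) {a b c : ℝ}
    (ha : a ∈ Icc (0 : ℝ) 1) (hb : b ∈ Icc (0 : ℝ) 1) (hc : c ∈ Icc (0 : ℝ) 1) :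
    turn (seg f a c) z = turn (seg f a b) z + turn (seg f b c) z := by
  obtain ⟨L, hL, hL'⟩ := exists_log hf.continuousOn h
  have key : ∀ p ∈ Icc (0 : ℝ) 1, ∀ q ∈ Icc (0 : ℝ) 1,
      turn (seg f p q) z = (L q - L p).im := fun p hp q hq => by
    rw [turn_eq (L := fun t => L (p + t * (q - p))) (by fun_prop)]
    · simp
    · intro t ht
      exact hL' _ ((uIcc_subset_Icc hp hq) (seg_param_mem ht))
  rw [key a ha b hb, key a ha c hc, key b hb c hc]; simp only [Complex.sub_im]; ring

lemma turn_seg_rev {f : ℝ → ℂ} (hf : Continuous f) {z : ℂ} {a b : ℝ} (h : Off (seg f a b) z) :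
    turn (seg f b a) z = - turn (seg f a b) z := by
  obtain ⟨L, hL, hL'⟩ := exists_log (seg_cont hf a b).continuousOn h
  rw [turn_eq hL.continuousOn hL', turn_eq (L := fun t => L (1 - t)) (by fun_prop)]
  · simp
  · intro t ht
    rw [hL' (1 - t) ⟨by linarith [ht.2], by linarith [ht.1]⟩]
    simp only [seg]; congr 2; ring

/-- Concatenation of two paths. -/
noncomputable def cat (f g : ℝ → ℂ) : ℝ → ℂ :=
  fun t => if t ≤ 1 / 2 then f (2 * t) else g (2 * t - 1)

lemma cat_cont {f g : ℝ → ℂ} (hf : Continuous f) (hg : Continuous g) (h : f 1 = g 0) :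
    Continuous (cat f g) := by
  unfold cat
  refine Continuous.if_le (by fun_prop) (by fun_prop) (by fun_prop) (by fun_prop) ?_
  intro t ht; subst ht; norm_num [h]

lemma cat_zero (f g : ℝ → ℂ) : cat f g 0 = f 0 := by simp [cat]
lemma cat_one (f g : ℝ → ℂ) : cat f g 1 = g 1 := by norm_num [cat]

lemma seg_cat_left {f g : ℝ → ℂ} {t : ℝ} (ht : t ∈ Icc (0 : ℝ) 1) :
    seg (cat f g) 0 (1 / 2) t = f t := by
  have : (0 : ℝ) + t * (1 / 2 - 0) ≤ 1 / 2 := by linarith [ht.2]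
  simp only [seg, cat, if_pos this]; congr 1; ring

lemma seg_cat_right {f g : ℝ → ℂ} (h : f 1 = g 0) {t : ℝ} (ht : t ∈ Icc (0 : ℝ) 1) :
    seg (cat f g) (1 / 2) 1 t = g t := by
  rcases eq_or_lt_of_le ht.1 with h0 | h0
  · subst h0; norm_num [seg, cat, h]
  · have : ¬ ((1 / 2 : ℝ) + t * (1 - 1 / 2) ≤ 1 / 2) := by linarith
    simp only [seg, cat, if_neg this]; congr 1; ring

lemma turn_congr {f g : ℝ → ℂ} (h : ∀ t ∈ Icc (0 : ℝ) 1, f t = g t) (z : ℂ) :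
    turn f z = turn g z := by
  unfold turn
  have : (∃ L : ℝ → ℂ, ContinuousOn L (Icc 0 1) ∧
      ∀ t ∈ Icc (0 : ℝ) 1, Complex.exp (L t) = f t - z) ↔ (∃ L : ℝ → ℂ, ContinuousOn L (Icc 0 1) ∧
      ∀ t ∈ Icc (0 : ℝ) 1, Complex.exp (L t) = g t - z) := by
    refine exists_congr fun L => and_congr_right fun _ => forall₂_congr fun t ht => ?_
    rw [h t ht]
  by_cases hg : ∃ L : ℝ → ℂ, ContinuousOn L (Icc 0 1) ∧
      ∀ t ∈ Icc (0 : ℝ) 1, Complex.exp (L t) = g t - z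
  · obtain ⟨L, hL, hL'⟩ := hg
    have h1 := turn_eq (f := f) hL (fun t ht => by rw [hL' t ht, h t ht])
    have h2 := turn_eq (f := g) hL hL'
    unfold turn at h1 h2; rw [h1, h2]
  · rw [dif_neg hg, dif_neg (this.not.2 hg)]

lemma cat_mem {f g : ℝ → ℂ} {t : ℝ} (ht : t ∈ Icc (0 : ℝ) 1) :
    (∃ s ∈ Icc (0 : ℝ) 1, cat f g t = f s) ∨ ∃ s ∈ Icc (0 : ℝ) 1, cat f g t = g s := by
  unfold cat; split_ifs with h
  · exact Or.inl ⟨2 * t, ⟨by linarith [ht.1], by linarith⟩, rfl⟩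
  · exact Or.inr ⟨2 * t - 1, ⟨by linarith, by linarith [ht.2]⟩, rfl⟩

lemma cat_off {f g : ℝ → ℂ} {z : ℂ} (h1 : Off f z) (h2 : Off g z) : Off (cat f g) z := by
  intro t ht
  rcases cat_mem (f := f) (g := g) ht with ⟨s, hs, e⟩ | ⟨s, hs, e⟩ <;> rw [e]
  · exact h1 s hs
  · exact h2 s hs

lemma turn_cat {f g : ℝ → ℂ} (hf : Continuous f) (hg : Continuous g) (h : f 1 = g 0) {z : ℂ}
    (h1 : Off f z) (h2 : Off g z) : turn (cat f g) z = turn f z + turn g z := by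
  have := turn_seg_add (cat_cont hf hg h) (cat_off h1 h2) (a := 0) (b := 1 / 2) (c := 1)
    (by simp) (by norm_num) (by simp)
  rw [seg_self] at this
  rw [this, turn_congr (fun t ht => seg_cat_left ht), turn_congr (fun t ht => seg_cat_right h ht)]

/-! ### Cyclic order of arms at a point -/

/-- A path leaving `X` meets every small circle around `X` a last time, and does so near its
starting point. -/
lemma last_exit {f : ℝ → ℂ} (hf : Continuous f) {X : ℂ} (h0 : f 0 = X)
    (hX : ∀ t ∈ Ioc (0 : ℝ) 1, f t ≠ X) {δ : ℝ} (hδ : 0 < δ) :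
    ∀ᶠ ε in nhdsWithin (0 : ℝ) (Ioi 0), ∃ t₀ ∈ Ioo (0 : ℝ) 1, ‖f t₀ - X‖ = ε ∧
      (∀ t ∈ Icc (0 : ℝ) t₀, ‖f t - X‖ < δ) ∧ ∀ t ∈ Ioc t₀ 1, ε < ‖f t - X‖ := by
  have hcN : Continuous fun t => ‖f t - X‖ := by fun_prop
  have hev : ∀ᶠ t in nhds (0 : ℝ), ‖f t - X‖ < δ :=
    hcN.continuousAt.eventually_lt continuousAt_const (by simpa [h0] using hδ)
  obtain ⟨η, hη, hηδ⟩ := Metric.eventually_nhds_iff.1 hev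
  set r := min (η / 2) 1 with hr
  have hr0 : 0 < r := lt_min (by linarith) one_pos
  have hr1 : r ≤ 1 := min_le_right _ _
  have hrη : r < η := lt_of_le_of_lt (min_le_left _ _) (by linarith)
  obtain ⟨m, hm, hmin⟩ := isCompact_Icc.exists_isMinOn (nonempty_Icc.2 hr1) hcN.continuousOn
  have hmpos : 0 < ‖f m - X‖ :=
    norm_pos_iff.2 (sub_ne_zero.2 (hX m ⟨lt_of_lt_of_le hr0 hm.1, hm.2⟩))
  filter_upwards [Ioo_mem_nhdsGT hmpos] with ε hε
  have hfar : ∀ t ∈ Icc r 1, ε < ‖f t - X‖ := fun t ht => lt_of_lt_of_le hε.2 (hmin ht)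
  -- the last time at which the path is within distance `ε` of `X`
  have hK : IsCompact {t | t ∈ Icc (0 : ℝ) 1 ∧ ‖f t - X‖ ≤ ε} :=
    isCompact_Icc.inter_right (isClosed_le hcN continuous_const)
  obtain ⟨t₀, ⟨ht₀, ht₀ε⟩, hmax⟩ := hK.exists_isGreatest ⟨0, by simp, by simp [h0, hε.1.le]⟩
  have ht₀r : t₀ < r := by
    by_contra hcon
    exact absurd (hfar t₀ ⟨not_lt.1 hcon, ht₀.2⟩) (not_lt.2 ht₀ε)
  have hafter : ∀ t ∈ Ioc t₀ 1, ε < ‖f t - X‖ := fun t ht => by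
    by_contra hcon
    exact absurd (hmax ⟨⟨ht₀.1.trans ht.1.le, ht.2⟩, not_lt.1 hcon⟩) (not_le.2 ht.1)
  have heq : ‖f t₀ - X‖ = ε := by
    by_contra hne
    have hlt : ‖f t₀ - X‖ < ε := lt_of_le_of_ne ht₀ε hne
    obtain ⟨t, ht, hte⟩ := intermediate_value_Icc ht₀.2 hcN.continuousOn
      (show ε ∈ Icc ‖f t₀ - X‖ ‖f 1 - X‖ from ⟨ht₀ε, (hfar 1 ⟨hr1, le_rfl⟩).le⟩)
    rcases eq_or_lt_of_le ht.1 with h | h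
    · subst h; exact hne hte
    · exact absurd (hafter t ⟨h, ht.2⟩) (by simp only at hte; rw [hte]; exact lt_irrefl _)
  refine ⟨t₀, ⟨lt_of_le_of_ne ht₀.1 ?_, ht₀r.trans_le hr1⟩, heq, ?_, hafter⟩
  · rintro rfl; rw [h0] at heq; simp at heq; exact hε.1.ne heq
  · intro t ht
    apply hηδ
    rw [Real.dist_eq, sub_zero, abs_of_nonneg ht.1]
    linarith [ht.2]

/-- The direction of the chord from `e^(iψ)` to `1`. -/
lemma arg_one_sub_exp {ψ : ℝ} (h0 : 0 < ψ) (h1 : ψ < 2 * Real.pi) :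
    Complex.arg (1 - Complex.exp (ψ * Complex.I)) = (ψ - Real.pi) / 2 := by
  have hs : 0 < Real.sin (ψ / 2) := Real.sin_pos_of_pos_of_lt_pi (by linarith) (by linarith)
  have key : 1 - Complex.exp (ψ * Complex.I) = ((2 * Real.sin (ψ / 2) : ℝ) : ℂ) *
      (Complex.cos ((ψ - Real.pi) / 2 : ℝ) + Complex.sin ((ψ - Real.pi) / 2 : ℝ) * Complex.I) := by
    have e1 : Real.cos ((ψ - Real.pi) / 2) = Real.sin (ψ / 2) := by
      rw [← Real.cos_pi_div_two_sub, ← Real.cos_neg]; congr 1; ring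
    have e2 : Real.sin ((ψ - Real.pi) / 2) = - Real.cos (ψ / 2) := by
      rw [← Real.sin_pi_div_two_sub, ← Real.sin_neg]; congr 1; ring
    have e3 : Real.cos ψ = 1 - 2 * Real.sin (ψ / 2) ^ 2 := by
      have := Real.cos_sq' (ψ / 2)
      have h2 := Real.cos_two_mul (ψ / 2)
      rw [show 2 * (ψ / 2) = ψ by ring] at h2
      linarith
    have e4 : Real.sin ψ = 2 * Real.sin (ψ / 2) * Real.cos (ψ / 2) := by
      rw [← Real.sin_two_mul]; congr 1; ring
    rw [Complex.exp_mul_I, ← Complex.ofReal_cos, ← Complex.ofReal_sin, ← Complex.ofReal_cos,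
      ← Complex.ofReal_sin, e1, e2, e3, e4]
    push_cast; ring
  rw [key, Complex.arg_mul_cos_add_sin_mul_I (by linarith)]
  constructor <;> linarith [Real.pi_pos]

lemma arg_one_sub_exp_neg {ψ : ℝ} (h0 : ψ < 0) (h1 : -(2 * Real.pi) < ψ) :
    Complex.arg (1 - Complex.exp (ψ * Complex.I)) = (ψ + Real.pi) / 2 := by
  have key : Complex.exp (ψ * Complex.I) =
      Complex.exp ((ψ + 2 * Real.pi : ℝ) * Complex.I) := by
    push_cast
    rw [add_mul, Complex.exp_add, Complex.exp_two_pi_mul_I, mul_one]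
  rw [key, arg_one_sub_exp (by linarith) (by linarith)]; ring

/-- Change of argument along a radius of a circle, seen from another point of the circle. -/
lemma turn_radius (X : ℂ) {ε : ℝ} (hε : 0 < ε) {p q : ℝ} (hp : p ∈ Ioc (-Real.pi) Real.pi)
    (hq : q ∈ Ioc (-Real.pi) Real.pi) (hpq : p ≠ q) :
    turn (fun t => X + t * (ε * Complex.exp (p * Complex.I))) (X + ε * Complex.exp (q * Complex.I))
      = Complex.arg (1 - Complex.exp ((p - q : ℝ) * Complex.I)) := by
  set ψ := p - q with hψ
  have hcos : Real.cos ψ < 1 := by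
    refine lt_of_le_of_ne (Real.cos_le_one _) fun h => ?_
    rw [Real.cos_eq_one_iff_of_lt_of_lt (by linarith [hp.1, hp.2, hq.1, hq.2])
      (by linarith [hp.1, hp.2, hq.1, hq.2])] at h
    exact hpq (by linarith)
  have hslit : ∀ t ∈ Icc (0 : ℝ) 1,
      1 - (t : ℂ) * Complex.exp (ψ * Complex.I) ∈ Complex.slitPlane := by
    intro t ht
    left
    rw [Complex.sub_re, Complex.re_ofReal_mul, Complex.exp_ofReal_mul_I_re, Complex.one_re]
    rcases eq_or_lt_of_le ht.1 with h | h
    · rw [← h]; simp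
    · nlinarith [ht.2]
  have hne : -((ε : ℂ) * Complex.exp (q * Complex.I)) ≠ 0 :=
    neg_ne_zero.2 (mul_ne_zero (by exact_mod_cast hε.ne') (Complex.exp_ne_zero _))
  rw [turn_eq (L := fun t => Complex.log (-((ε : ℂ) * Complex.exp (q * Complex.I))) +
    Complex.log (1 - (t : ℂ) * Complex.exp (ψ * Complex.I)))]
  · simp [Complex.log_im]
  · refine continuousOn_const.add ?_
    exact ContinuousOn.clog (by fun_prop) hslit
  · intro t ht
    rw [Complex.exp_add, Complex.exp_log hne, Complex.exp_log (Complex.slitPlane_ne_zero (hslit t ht)),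
      hψ]
    have : Complex.exp (p * Complex.I) =
        Complex.exp (q * Complex.I) * Complex.exp ((p - q : ℝ) * Complex.I) := by
      rw [← Complex.exp_add]; congr 1; push_cast; ring
    rw [this]; ring

/-- `α` is a family of arms emanating from `X`, pairwise disjoint apart from `X`. -/
structure Arms {ι : Type} (X : ℂ) (α : ι → ℝ → ℂ) : Prop where
  cont : ∀ i, Continuous (α i)
  zero : ∀ i, α i 0 = X
  ne : ∀ i, ∀ t ∈ Ioc (0 : ℝ) 1, α i t ≠ X
  sep : ∀ i j, i ≠ j → ∀ s ∈ Ioc (0 : ℝ) 1, ∀ t ∈ Ioc (0 : ℝ) 1, α i s ≠ α j t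

/-- The twist of two arms: the difference of their changes of argument, each seen from the end
of the other one. -/
noncomputable def tw (f g : ℝ → ℂ) : ℝ := turn g (f 1) - turn f (g 1)

/-- Arms at a common point have a well-defined cyclic order `φ` around it: up to a coboundary `V`,
the twist of two arms only depends on their order. -/
lemma arms_rotation {ι : Type} [Finite ι] {X : ℂ} {α : ι → ℝ → ℂ} (h : Arms X α) :
    ∃ V φ : ι → ℝ, Function.Injective φ ∧ ∀ i j, i ≠ j →
      tw (α i) (α j) = V j - V i + Real.pi * (if φ j < φ i then 1 else -1) := by
  have m1 : (1 : ℝ) ∈ Ioc (0 : ℝ) 1 := by simp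
  have hδ : ∃ δ > 0, ∀ i, δ ≤ ‖α i 1 - X‖ := by
    have : ∀ᶠ δ in nhdsWithin (0 : ℝ) (Ioi 0), ∀ i, δ ≤ ‖α i 1 - X‖ :=
      Filter.eventually_all.2 fun i => by
        filter_upwards [Ioo_mem_nhdsGT
          (norm_pos_iff.2 (sub_ne_zero.2 (h.ne i 1 m1)))] with δ hδ using hδ.2.le
    obtain ⟨δ, hδ, hδ0⟩ := (this.and self_mem_nhdsWithin).exists
    exact ⟨δ, hδ0, hδ⟩
  obtain ⟨δ, hδ, hδe⟩ := hδ
  obtain ⟨ε, hε, hε0⟩ := ((Filter.eventually_all.2 fun i =>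
    last_exit (h.cont i) (h.zero i) (h.ne i) hδ).and self_mem_nhdsWithin).exists
  replace hε0 : 0 < ε := hε0
  choose T hT hTε hhead htail using hε
  let x : ι → ℂ := fun i => α i (T i)
  let τ : ι → ℝ → ℂ := fun i => seg (α i) (T i) 1
  let ρ : ι → ℝ → ℂ := fun i t => X + t * (ε * Complex.exp (Complex.arg (x i - X) * Complex.I))
  have hx : ∀ i, X + ε * Complex.exp (Complex.arg (x i - X) * Complex.I) = x i := fun i => by
    have := Complex.norm_mul_exp_arg_mul_I (x i - X)
    rw [show ‖x i - X‖ = ε from hTε i] at this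
    rw [this]; ring
  have hρ1 : ∀ i, ρ i 1 = x i := fun i => by simp [ρ, hx]
  have hρ0 : ∀ i, ρ i 0 = X := fun i => by simp [ρ]
  have hρc : ∀ i, Continuous (ρ i) := fun i => by simp only [ρ]; fun_prop
  have hτc : ∀ i, Continuous (τ i) := fun i => seg_cont (h.cont i) _ _
  have hρn : ∀ i, ∀ t ∈ Icc (0 : ℝ) 1, ‖ρ i t - X‖ = t * ε := fun i t ht => by
    simp only [ρ, add_sub_cancel_left, norm_mul, Complex.norm_real, Complex.norm_exp_ofReal_mul_I,
      mul_one, Real.norm_eq_abs, abs_of_nonneg ht.1, abs_of_pos hε0]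
  have hτn : ∀ i, ∀ t ∈ Icc (0 : ℝ) 1, t = 0 ∨ ε < ‖τ i t - X‖ := fun i t ht => by
    rcases eq_or_lt_of_le ht.1 with h0 | h0
    · exact Or.inl h0.symm
    · right; apply htail; constructor <;> nlinarith [(hT i).1, (hT i).2, ht.2]
  have hxne : ∀ i j, i ≠ j → x i ≠ x j := fun i j hij =>
    h.sep i j hij _ ⟨(hT i).1, (hT i).2.le⟩ _ ⟨(hT j).1, (hT j).2.le⟩
  have hφne : ∀ i j, i ≠ j → Complex.arg (x i - X) ≠ Complex.arg (x j - X) := fun i j hij he => by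
    apply hxne i j hij; rw [← hx i, ← hx j, he]
  -- the change of argument of an arm splits into those of its head and its tail, and the head
  -- may be replaced by a radius
  have hsplit : ∀ i j, i ≠ j →
      turn (α j) (α i 1) = turn (ρ j) (α i 1) + turn (τ j) (α i 1) := fun i j hij => by
    have hoff : Off (α j) (α i 1) := by
      intro t ht
      rcases eq_or_lt_of_le ht.1 with h0 | h0
      · rw [← h0, h.zero]; exact (h.ne i 1 m1).symm
      · exact h.sep j i hij.symm t ⟨h0, ht.2⟩ 1 m1
    have := turn_seg_add (h.cont j) hoff (a := 0) (b := T j) (c := 1) (by simp)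
      ⟨(hT j).1.le, (hT j).2.le⟩ (by simp)
    rw [seg_self] at this
    rw [this]
    congr 1
    apply turn_homotopy (seg_cont (h.cont j) _ _) (hρc j)
    · simp [h.zero, hρ0]
    · simp [hρ1, x]
    · intro t ht s hs heq
      have h1 : ‖seg (α j) 0 (T j) t - X‖ < δ := hhead j _ (by
        constructor <;> nlinarith [(hT j).1, (hT j).2, ht.2, ht.1])
      have h2 : ‖ρ j t - X‖ < δ := by
        rw [hρn j t ht]
        have : ε < δ := by rw [← hTε j]; exact hhead j _ ⟨(hT j).1.le, le_rfl⟩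
        nlinarith [ht.2, ht.1]
      have h3 := (convex_ball X δ) (mem_ball_iff_norm.2 h1) (mem_ball_iff_norm.2 h2)
        (sub_nonneg.2 hs.2) hs.1 (by ring)
      rw [mem_ball_iff_norm] at h3
      have h4 := hδe i
      rw [← heq] at h4
      simp only [Complex.real_smul, Complex.ofReal_sub, Complex.ofReal_one] at h3
      linarith
  have hττ : ∀ i j, i ≠ j → Disj (τ j) (τ i) := fun i j hij s hs t ht => by
    apply h.sep j i hij.symm <;> constructor <;>
      nlinarith [(hT i).1, (hT i).2, (hT j).1, (hT j).2, hs.1, hs.2, ht.1, ht.2]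
  have hτρ : ∀ i j, i ≠ j → Disj (τ j) (ρ i) := fun i j hij s hs t ht he => by
    rcases hτn j s hs with h0 | h0
    · have h1 := hρn i t ht
      rw [← he, h0] at h1
      have h2 : τ j 0 = x j := by simp [τ, x]
      rw [h2, show ‖x j - X‖ = ε from hTε j] at h1
      have : t = 1 := by nlinarith
      rw [this, hρ1, h0, h2] at he
      exact hxne j i hij.symm he
    · rw [he, hρn i t ht] at h0
      nlinarith [ht.2]
  refine ⟨fun i => turn (τ i) X + Complex.arg (x i - X), fun i => Complex.arg (x i - X), ?_, ?_⟩
  · intro i j hij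
    by_contra hne
    exact hφne i j hne hij
  · intro i j hij
    have e1 := hsplit i j hij
    have e2 := hsplit j i hij.symm
    have e3 := turn_disj (hτc j) (hτc i) (hττ i j hij)
    have e4 := turn_disj (hτc j) (hρc i) (hτρ i j hij)
    have e5 := turn_disj (hτc i) (hρc j) (hτρ j i hij.symm)
    have ez : ∀ k, τ k 0 = x k := fun k => by simp [τ, x]
    have eo : ∀ k, τ k 1 = α k 1 := fun k => by simp [τ]
    rw [ez, ez, eo, eo] at e3
    rw [hρ0, hρ1, ez, eo] at e4 e5
    have r1 := turn_radius X hε0 (Complex.arg_mem_Ioc (x j - X)) (Complex.arg_mem_Ioc (x i - X))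
      (hφne j i hij.symm)
    have r2 := turn_radius X hε0 (Complex.arg_mem_Ioc (x i - X)) (Complex.arg_mem_Ioc (x j - X))
      (hφne i j hij)
    rw [hx] at r1 r2
    change turn (ρ j) (x i) = _ at r1
    change turn (ρ i) (x j) = _ at r2
    have b1 := Complex.arg_mem_Ioc (x i - X)
    have b2 := Complex.arg_mem_Ioc (x j - X)
    simp only [tw]
    rcases lt_or_gt_of_ne (hφne i j hij) with hlt | hlt
    · rw [if_neg (by linarith)]
      rw [arg_one_sub_exp (by linarith) (by linarith [b1.1, b1.2, b2.1, b2.2])] at r1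
      rw [arg_one_sub_exp_neg (by linarith) (by linarith [b1.1, b1.2, b2.1, b2.2])] at r2
      linarith
    · rw [if_pos hlt]
      rw [arg_one_sub_exp (by linarith) (by linarith [b1.1, b1.2, b2.1, b2.2])] at r2
      rw [arg_one_sub_exp_neg (by linarith) (by linarith [b1.1, b1.2, b2.1, b2.2])] at r1
      linarith

/-- Four arms `a, b, c, d` at a point.  The paths `a⁻¹b` and `c⁻¹d` through that point have
algebraic intersection `0` or `±1` (times `2π`); in the latter case they interleave around the
point, so that both other pairings have algebraic intersection `0`. -/
lemma four_arms {X : ℂ} {α : Fin 4 → ℝ → ℂ} (h : Arms X α) :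
    (tw (α 0) (α 2) - tw (α 1) (α 2) - tw (α 0) (α 3) + tw (α 1) (α 3) = 0 ∨
      ((tw (α 0) (α 2) - tw (α 1) (α 2) - tw (α 0) (α 3) + tw (α 1) (α 3) = 2 * Real.pi ∨
        tw (α 0) (α 2) - tw (α 1) (α 2) - tw (α 0) (α 3) + tw (α 1) (α 3) = -(2 * Real.pi)) ∧
      tw (α 0) (α 1) - tw (α 2) (α 1) - tw (α 0) (α 3) + tw (α 2) (α 3) = 0 ∧
      tw (α 0) (α 1) - tw (α 3) (α 1) - tw (α 0) (α 2) + tw (α 3) (α 2) = 0)) := by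
  obtain ⟨V, φ, hφ, hM⟩ := arms_rotation h
  have hne : ∀ i j, i ≠ j → φ i ≠ φ j := fun i j hij => hφ.ne hij
  have n01 := hne 0 1 (by decide)
  have n02 := hne 0 2 (by decide)
  have n03 := hne 0 3 (by decide)
  have n12 := hne 1 2 (by decide)
  have n13 := hne 1 3 (by decide)
  have n23 := hne 2 3 (by decide)
  rw [hM 0 2 (by decide), hM 1 2 (by decide), hM 0 3 (by decide), hM 1 3 (by decide),
    hM 0 1 (by decide), hM 2 1 (by decide), hM 2 3 (by decide), hM 3 1 (by decide),
    hM 3 2 (by decide)]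
  clear hM hne h hφ
  generalize φ 0 = p0 at *
  generalize φ 1 = p1 at *
  generalize φ 2 = p2 at *
  generalize φ 3 = p3 at *
  rcases lt_or_gt_of_ne n01 with h01 | h01 <;> rcases lt_or_gt_of_ne n02 with h02 | h02 <;>
  rcases lt_or_gt_of_ne n03 with h03 | h03 <;> rcases lt_or_gt_of_ne n12 with h12 | h12 <;>
  rcases lt_or_gt_of_ne n13 with h13 | h13 <;> rcases lt_or_gt_of_ne n23 with h23 | h23 <;>
  first
    | (exfalso; linarith)
    | (simp only [h01, h02, h03, h12, h13, h23, h01.not_gt, h02.not_gt, h03.not_gt, h12.not_gt,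
        h13.not_gt, h23.not_gt, if_true, if_false]
       first
        | (left; ring1)
        | (right; refine ⟨?_, by ring1, by ring1⟩; first | (left; ring1) | (right; ring1)))

/-! ### Algebraic intersection numbers and crossings of closed curves -/

/-- `2π` times the algebraic intersection number of two paths, neither of which contains an
endpoint of the other. -/
noncomputable def itx (f g : ℝ → ℂ) : ℝ :=
  turn f (g 0) - turn f (g 1) + turn g (f 1) - turn g (f 0)

lemma itx_swap (f g : ℝ → ℂ) : itx g f = - itx f g := by unfold itx; ring

lemma itx_disj {f g : ℝ → ℂ} (hf : Continuous f) (hg : Continuous g) (h : Disj f g) :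
    itx f g = 0 := turn_disj hf hg h

lemma itx_seg_add {f g : ℝ → ℂ} (hf : Continuous f) (h0 : Off f (g 0)) (h1 : Off f (g 1))
    {a b c : ℝ} (ha : a ∈ Icc (0 : ℝ) 1) (hb : b ∈ Icc (0 : ℝ) 1) (hc : c ∈ Icc (0 : ℝ) 1) :
    itx (seg f a c) g = itx (seg f a b) g + itx (seg f b c) g := by
  unfold itx
  rw [turn_seg_add hf h0 ha hb hc, turn_seg_add hf h1 ha hb hc]
  simp only [seg_zero, seg_one]; ring

lemma Off.seg {f : ℝ → ℂ} {z : ℂ} (h : Off f z) {a b : ℝ} (ha : a ∈ Icc (0 : ℝ) 1)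
    (hb : b ∈ Icc (0 : ℝ) 1) : Off (seg f a b) z :=
  seg_off.2 fun _ hx => h _ (uIcc_subset_Icc ha hb hx)

lemma itx_seg_rev {f g : ℝ → ℂ} (hf : Continuous f) {a b : ℝ} (h0 : Off (seg f a b) (g 0))
    (h1 : Off (seg f a b) (g 1)) : itx (seg f b a) g = - itx (seg f a b) g := by
  unfold itx
  rw [turn_seg_rev hf h0, turn_seg_rev hf h1]
  simp only [seg_zero, seg_one]; ring

lemma itx_cat {f f' g : ℝ → ℂ} (hf : Continuous f) (hf' : Continuous f') (h : f 1 = f' 0)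
    (h0 : Off f (g 0)) (h1 : Off f (g 1)) (h0' : Off f' (g 0)) (h1' : Off f' (g 1)) :
    itx (cat f f') g = itx f g + itx f' g := by
  unfold itx
  rw [turn_cat hf hf' h h0 h0', turn_cat hf hf' h h1 h1', cat_zero, cat_one, h]; ring

lemma Disj.symm {f g : ℝ → ℂ} (h : Disj f g) : Disj g f := fun s hs t ht e => h t ht s hs e.symm

lemma seg_disj {f g : ℝ → ℂ} {a b a' b' : ℝ}
    (h : ∀ s ∈ uIcc a b, ∀ t ∈ uIcc a' b', f s ≠ g t) : Disj (seg f a b) (seg g a' b') :=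
  fun _ hs _ ht => h _ (seg_param_mem hs) _ (seg_param_mem ht)

lemma Arms.mk4 {X : ℂ} {a b c d : ℝ → ℂ} (ha : Continuous a) (hb : Continuous b)
    (hc : Continuous c) (hd : Continuous d) (a0 : a 0 = X) (b0 : b 0 = X) (c0 : c 0 = X)
    (d0 : d 0 = X) (an : ∀ t ∈ Ioc (0 : ℝ) 1, a t ≠ X) (bn : ∀ t ∈ Ioc (0 : ℝ) 1, b t ≠ X)
    (cn : ∀ t ∈ Ioc (0 : ℝ) 1, c t ≠ X) (dn : ∀ t ∈ Ioc (0 : ℝ) 1, d t ≠ X)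
    (ab : ∀ s ∈ Ioc (0 : ℝ) 1, ∀ t ∈ Ioc (0 : ℝ) 1, a s ≠ b t)
    (ac : ∀ s ∈ Ioc (0 : ℝ) 1, ∀ t ∈ Ioc (0 : ℝ) 1, a s ≠ c t)
    (ad : ∀ s ∈ Ioc (0 : ℝ) 1, ∀ t ∈ Ioc (0 : ℝ) 1, a s ≠ d t)
    (bc : ∀ s ∈ Ioc (0 : ℝ) 1, ∀ t ∈ Ioc (0 : ℝ) 1, b s ≠ c t)
    (bd : ∀ s ∈ Ioc (0 : ℝ) 1, ∀ t ∈ Ioc (0 : ℝ) 1, b s ≠ d t)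
    (cd : ∀ s ∈ Ioc (0 : ℝ) 1, ∀ t ∈ Ioc (0 : ℝ) 1, c s ≠ d t) : Arms X ![a, b, c, d] where
  cont i := by fin_cases i <;> assumption
  zero i := by fin_cases i <;> assumption
  ne i := by fin_cases i <;> assumption
  sep i j hij s hs t ht := by
    fin_cases i <;> fin_cases j <;> first
      | exact absurd rfl hij
      | exact ab s hs t ht
      | exact ac s hs t ht
      | exact ad s hs t ht
      | exact bc s hs t ht
      | exact bd s hs t ht
      | exact cd s hs t ht
      | exact (ab t ht s hs).symm
      | exact (ac t ht s hs).symm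
      | exact (ad t ht s hs).symm
      | exact (bc t ht s hs).symm
      | exact (bd t ht s hs).symm
      | exact (cd t ht s hs).symm

lemma seg_arm_ne {f : ℝ → ℂ} (hf : InjOn f (Icc 0 1)) {x p : ℝ} (hx : x ∈ Icc (0 : ℝ) 1)
    (hp : p ∈ Icc (0 : ℝ) 1) (hpx : p ≠ x) : ∀ t ∈ Ioc (0 : ℝ) 1, seg f x p t ≠ f x := by
  intro t ht he
  have := hf (uIcc_subset_Icc hx hp (seg_param_mem ⟨ht.1.le, ht.2⟩)) hx he
  have h2 : t * (p - x) = 0 := by linarith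
  rcases mul_eq_zero.1 h2 with h | h
  · exact ht.1.ne' h
  · exact hpx (by linarith)

lemma seg_arm_sep {f : ℝ → ℂ} (hf : InjOn f (Icc 0 1)) {x p q : ℝ} (hp : 0 ≤ p) (hpx : p < x)
    (hxq : x < q) (hq : q ≤ 1) :
    ∀ s ∈ Ioc (0 : ℝ) 1, ∀ t ∈ Ioc (0 : ℝ) 1, seg f x p s ≠ seg f x q t := by
  intro s hs t ht he
  have := hf (uIcc_subset_Icc ⟨by linarith, by linarith⟩ ⟨hp, by linarith⟩
    (seg_param_mem ⟨hs.1.le, hs.2⟩)) (uIcc_subset_Icc ⟨by linarith, by linarith⟩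
    ⟨by linarith, hq⟩ (seg_param_mem ⟨ht.1.le, ht.2⟩)) he
  nlinarith [hs.1, ht.1]

/-- The four arms at the only common point of two paths. -/
lemma cross_arms {f g : ℝ → ℂ} (hf : Continuous f) (hg : Continuous g) (hfi : InjOn f (Icc 0 1))
    (hgi : InjOn g (Icc 0 1)) {x y p q p' q' : ℝ} (hp : 0 ≤ p) (hpx : p < x) (hxq : x < q)
    (hq : q ≤ 1) (hp' : 0 ≤ p') (hpy : p' < y) (hyq : y < q') (hq' : q' ≤ 1) (hX : f x = g y)
    (hu : ∀ s ∈ Icc p q, ∀ t ∈ Icc p' q', f s = g t → s = x ∧ t = y) :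
    Arms (f x) ![seg f x p, seg f x q, seg g y p', seg g y q'] := by
  have hx : x ∈ Icc (0 : ℝ) 1 := ⟨by linarith, by linarith⟩
  have hy : y ∈ Icc (0 : ℝ) 1 := ⟨by linarith, by linarith⟩
  have hsep : ∀ r ∈ Icc p q, r ≠ x → ∀ r' ∈ Icc p' q', ∀ s ∈ Ioc (0 : ℝ) 1, ∀ t ∈ Ioc (0 : ℝ) 1,
      seg f x r s ≠ seg g y r' t := by
    intro r hr hrx r' hr' s hs t ht he
    have := (hu _ (uIcc_subset_Icc ⟨hpx.le, hxq.le⟩ hr (seg_param_mem ⟨hs.1.le, hs.2⟩))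
      _ (uIcc_subset_Icc ⟨hpy.le, hyq.le⟩ hr' (seg_param_mem ⟨ht.1.le, ht.2⟩)) he).1
    have h2 : s * (r - x) = 0 := by linarith
    rcases mul_eq_zero.1 h2 with h | h
    · exact hs.1.ne' h
    · exact hrx (by linarith)
  have mp : p ∈ Icc p q := ⟨le_rfl, by linarith⟩
  have mq : q ∈ Icc p q := ⟨by linarith, le_rfl⟩
  have mp' : p' ∈ Icc p' q' := ⟨le_rfl, by linarith⟩
  have mq' : q' ∈ Icc p' q' := ⟨by linarith, le_rfl⟩
  apply Arms.mk4 (seg_cont hf _ _) (seg_cont hf _ _) (seg_cont hg _ _) (seg_cont hg _ _)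
  · simp
  · simp
  · simp [hX]
  · simp [hX]
  · exact seg_arm_ne hfi hx ⟨hp, by linarith⟩ hpx.ne
  · exact seg_arm_ne hfi hx ⟨by linarith, hq⟩ hxq.ne'
  · rw [hX]; exact seg_arm_ne hgi hy ⟨hp', by linarith⟩ hpy.ne
  · rw [hX]; exact seg_arm_ne hgi hy ⟨by linarith, hq'⟩ hyq.ne'
  · exact seg_arm_sep hfi hp hpx hxq hq
  · exact hsep p mp hpx.ne p' mp'
  · exact hsep p mp hpx.ne q' mq'
  · exact hsep q mq hxq.ne' p' mp'
  · exact hsep q mq hxq.ne' q' mq'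
  · exact seg_arm_sep hgi hp' hpy hyq hq'

/-- The algebraic intersection of two paths through a common point in terms of the twists of
their four arms. -/
lemma itx_eq_tw {f g : ℝ → ℂ} (hf : Continuous f) (hg : Continuous g) {x y p q p' q' : ℝ}
    (h1 : Off (seg f p x) (g p')) (h2 : Off (seg f p x) (g q'))
    (h3 : Off (seg g p' y) (f p)) (h4 : Off (seg g p' y) (f q))
    (k1 : itx (seg f p q) (seg g p' q') = turn (seg f p x) (g p') + turn (seg f x q) (g p')
      - (turn (seg f p x) (g q') + turn (seg f x q) (g q'))
      + (turn (seg g p' y) (f q) + turn (seg g y q') (f q))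
      - (turn (seg g p' y) (f p) + turn (seg g y q') (f p))) :
    itx (seg f p q) (seg g p' q') =
      tw (seg f x p) (seg g y p') - tw (seg f x q) (seg g y p') - tw (seg f x p) (seg g y q')
        + tw (seg f x q) (seg g y q') := by
  rw [k1]
  simp only [tw, seg_one]
  rw [turn_seg_rev hf h1, turn_seg_rev hf h2, turn_seg_rev hg h3, turn_seg_rev hg h4]
  ring

/-- Two paths with a single common point: the algebraic intersection number is the twist
expression of `four_arms`. -/
lemma itx_cross {f g : ℝ → ℂ} (hf : Continuous f) (hg : Continuous g) {x y p q p' q' : ℝ}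
    (hx : x ∈ Icc (0 : ℝ) 1) (hp : p ∈ Icc (0 : ℝ) 1) (hq : q ∈ Icc (0 : ℝ) 1)
    (hy : y ∈ Icc (0 : ℝ) 1) (hp' : p' ∈ Icc (0 : ℝ) 1) (hq' : q' ∈ Icc (0 : ℝ) 1)
    (h1 : Off f (g p')) (h2 : Off f (g q')) (h3 : Off g (f p)) (h4 : Off g (f q)) :
    itx (seg f p q) (seg g p' q') =
      tw (seg f x p) (seg g y p') - tw (seg f x q) (seg g y p') - tw (seg f x p) (seg g y q')
        + tw (seg f x q) (seg g y q') := by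
  refine itx_eq_tw hf hg (h1.seg hp hx) (h2.seg hp hx) (h3.seg hp' hy) (h4.seg hp' hy) ?_
  unfold itx
  simp only [seg_zero, seg_one]
  rw [turn_seg_add hf h1 hp hx hq, turn_seg_add hf h2 hp hx hq, turn_seg_add hg h3 hp' hy hq',
    turn_seg_add hg h4 hp' hy hq']

/-- The case of `cycle_false` in which `f` meets `g1` before `g2`. The part of `f` between the two
common points cuts the closed curve into two closed curves, each of which has the same winding number
around `f 0` and `f 1`; hence so does the whole curve, whereas two crossings in the same direction
change its winding number by two. -/
lemma cycle_aux {g1 g2 f : ℝ → ℂ} (c1 : Continuous g1) (c2 : Continuous g2) (cf : Continuous f)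
    (i1 : InjOn g1 (Icc 0 1)) (i2 : InjOn g2 (Icc 0 1)) (i3 : InjOn f (Icc 0 1))
    (e1 : g1 1 = g2 0) (e2 : g2 1 = g1 0)
    (h12 : ∀ s ∈ Icc (0 : ℝ) 1, ∀ t ∈ Icc (0 : ℝ) 1, g1 s = g2 t → (s = 0 ∧ t = 1) ∨ (s = 1 ∧ t = 0))
    {x x' y y' : ℝ} (hx : x ∈ Ioo (0 : ℝ) 1) (hx' : x' ∈ Ioo (0 : ℝ) 1) (hy : y ∈ Ioo (0 : ℝ) 1)
    (hy' : y' ∈ Ioo (0 : ℝ) 1) (hX : g1 x' = f x) (hY : g2 y' = f y)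
    (u1 : ∀ s ∈ Icc (0 : ℝ) 1, ∀ t ∈ Icc (0 : ℝ) 1, g1 t = f s → t = x' ∧ s = x)
    (u2 : ∀ s ∈ Icc (0 : ℝ) 1, ∀ t ∈ Icc (0 : ℝ) 1, g2 t = f s → t = y' ∧ s = y)
    (k1 : itx g1 f = 2 * Real.pi) (k2 : itx g2 f = 2 * Real.pi) (hxy : x < y) : False := by
  obtain ⟨hx0, hx1⟩ := hx
  obtain ⟨hx0', hx1'⟩ := hx'
  obtain ⟨hy0, hy1⟩ := hy
  obtain ⟨hy0', hy1'⟩ := hy'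
  obtain ⟨m, hxm, hmy⟩ := exists_between hxy
  have m0 : (0 : ℝ) ∈ Icc (0 : ℝ) 1 := by simp
  have m1 : (1 : ℝ) ∈ Icc (0 : ℝ) 1 := by simp
  have mx : x ∈ Icc (0 : ℝ) 1 := ⟨by linarith, by linarith⟩
  have mx' : x' ∈ Icc (0 : ℝ) 1 := ⟨by linarith, by linarith⟩
  have my : y ∈ Icc (0 : ℝ) 1 := ⟨by linarith, by linarith⟩
  have my' : y' ∈ Icc (0 : ℝ) 1 := ⟨by linarith, by linarith⟩
  have mm : m ∈ Icc (0 : ℝ) 1 := ⟨by linarith, by linarith⟩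
  have o1 : ∀ s ∈ Icc (0 : ℝ) 1, s ≠ x → Off g1 (f s) := fun s hs hsx t ht he =>
    hsx (u1 s hs t ht he).2
  have o2 : ∀ s ∈ Icc (0 : ℝ) 1, s ≠ y → Off g2 (f s) := fun s hs hsx t ht he =>
    hsx (u2 s hs t ht he).2
  have p1 : ∀ t ∈ Icc (0 : ℝ) 1, t ≠ x' → Off f (g1 t) := fun t ht hsx s hs he =>
    hsx (u1 s hs t ht he.symm).1
  have p2 : ∀ t ∈ Icc (0 : ℝ) 1, t ≠ y' → Off f (g2 t) := fun t ht hsx s hs he =>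
    hsx (u2 s hs t ht he.symm).1
  -- the four arms at the two crossings
  have AX := four_arms (cross_arms c1 cf i1 i3 (x := x') (y := x) (p := 0) (q := 1) (p' := 0)
    (q' := m) le_rfl hx0' hx1' le_rfl le_rfl hx0 hxm mm.2 hX
    (fun s hs t ht h => u1 t ⟨ht.1, ht.2.trans mm.2⟩ s hs h))
  have AY := four_arms (cross_arms c2 cf i2 i3 (x := y') (y := y) (p := 0) (q := 1) (p' := m)
    (q' := 1) le_rfl hy0' hy1' le_rfl mm.1 hmy hy1 le_rfl hY
    (fun s hs t ht h => u2 t ⟨mm.1.trans ht.1, ht.2⟩ s hs h))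
  simp only [Matrix.cons_val] at AX AY
  rw [← itx_cross c1 cf mx' m0 m1 mx m0 mm (o1 0 m0 hx0.ne) (o1 m mm hxm.ne') (p1 0 m0 hx0'.ne)
    (p1 1 m1 hx1'.ne')] at AX
  rw [← itx_cross c2 cf my' m0 m1 my mm m1 (o2 m mm hmy.ne) (o2 1 m1 hy1.ne') (p2 0 m0 hy0'.ne)
    (p2 1 m1 hy1'.ne')] at AY
  have qX : itx (seg g1 0 1) (seg f 0 m) = 2 * Real.pi := by
    rw [seg_self]
    have h1 := itx_seg_add cf (g := g1) (p1 0 m0 hx0'.ne) (p1 1 m1 hx1'.ne') m0 mm m1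
    have h2 : itx (seg f m 1) g1 = 0 := itx_disj (seg_cont cf _ _) c1 (by
      rw [← seg_self g1]
      refine seg_disj fun s hs t ht he => ?_
      rw [uIcc_of_le mm.2] at hs
      rw [uIcc_of_le zero_le_one] at ht
      have := (u1 s ⟨mm.1.trans hs.1, hs.2⟩ t ht he.symm).2
      linarith [hs.1])
    rw [seg_self] at h1
    linarith [itx_swap g1 f, itx_swap g1 (seg f 0 m)]
  have qY : itx (seg g2 0 1) (seg f m 1) = 2 * Real.pi := by
    rw [seg_self]
    have h1 := itx_seg_add cf (g := g2) (p2 0 m0 hy0'.ne) (p2 1 m1 hy1'.ne') m0 mm m1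
    have h2 : itx (seg f 0 m) g2 = 0 := itx_disj (seg_cont cf _ _) c2 (by
      rw [← seg_self g2]
      refine seg_disj fun s hs t ht he => ?_
      rw [uIcc_of_le mm.1] at hs
      rw [uIcc_of_le zero_le_one] at ht
      have := (u2 s ⟨hs.1, hs.2.trans mm.2⟩ t ht he.symm).2
      linarith [hs.2])
    rw [seg_self] at h1
    linarith [itx_swap g2 f, itx_swap g2 (seg f m 1)]
  have hpi := Real.pi_pos
  obtain ⟨-, X1, X2⟩ := AX.resolve_left (by rw [qX]; positivity)
  obtain ⟨-, Y1, Y2⟩ := AY.resolve_left (by rw [qY]; positivity)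
  -- pairs of disjoint arms at the two different crossings
  have dff : ∀ r ∈ Icc (0 : ℝ) 1, ∀ r' ∈ Icc (0 : ℝ) 1, uIcc x r ∩ uIcc y r' = ∅ →
      itx (seg f x r) (seg f y r') = 0 := fun r hr r' hr' hd =>
    itx_disj (seg_cont cf _ _) (seg_cont cf _ _) (seg_disj fun s hs t ht he => by
      have := i3 (uIcc_subset_Icc mx hr hs) (uIcc_subset_Icc my hr' ht) he
      subst this
      exact (Set.ext_iff.1 hd s).1 ⟨hs, ht⟩)
  have dfg : ∀ r ∈ Icc (0 : ℝ) 1, y ∉ uIcc x r → ∀ r' ∈ Icc (0 : ℝ) 1,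
      itx (seg f x r) (seg g2 y' r') = 0 := fun r hr hyr r' hr' =>
    itx_disj (seg_cont cf _ _) (seg_cont c2 _ _) (seg_disj fun s hs t ht he => by
      have := (u2 s (uIcc_subset_Icc mx hr hs) t (uIcc_subset_Icc my' hr' ht) he.symm).2
      subst this; exact hyr hs)
  have dgf : ∀ r ∈ Icc (0 : ℝ) 1, x ∉ uIcc y r → ∀ r' ∈ Icc (0 : ℝ) 1,
      itx (seg g1 x' r') (seg f y r) = 0 := fun r hr hyr r' hr' =>
    itx_disj (seg_cont c1 _ _) (seg_cont cf _ _) (seg_disj fun t ht s hs he => by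
      have := (u1 s (uIcc_subset_Icc my hr hs) t (uIcc_subset_Icc mx' hr' ht) he).2
      subst this; exact hyr hs)
  have dgg0 : itx (seg g1 x' 0) (seg g2 y' 0) = 0 :=
    itx_disj (seg_cont c1 _ _) (seg_cont c2 _ _) (seg_disj fun s hs t ht he => by
      rw [uIcc_of_ge (by linarith)] at hs ht
      rcases h12 s ⟨hs.1, hs.2.trans mx'.2⟩ t ⟨ht.1, ht.2.trans my'.2⟩ he with ⟨h, h'⟩ | ⟨h, h'⟩ <;>
        linarith [hs.2, ht.2])
  have dgg1 : itx (seg g1 x' 1) (seg g2 y' 1) = 0 :=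
    itx_disj (seg_cont c1 _ _) (seg_cont c2 _ _) (seg_disj fun s hs t ht he => by
      rw [uIcc_of_le (by linarith)] at hs ht
      rcases h12 s ⟨mx'.1.trans hs.1, hs.2⟩ t ⟨my'.1.trans ht.1, ht.2⟩ he with ⟨h, h'⟩ | ⟨h, h'⟩ <;>
        linarith [hs.1, ht.1])
  have uxm : uIcc x m = Icc x m := uIcc_of_le hxm.le
  have ux0 : uIcc x 0 = Icc 0 x := uIcc_of_ge hx0.le
  have uym : uIcc y m = Icc m y := uIcc_of_ge hmy.le
  have uy1 : uIcc y 1 = Icc y 1 := uIcc_of_le hy1.le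
  have nyx0 : y ∉ uIcc x 0 := by rw [ux0]; exact fun h => by linarith [h.2]
  have nyxm : y ∉ uIcc x m := by rw [uxm]; exact fun h => by linarith [h.2]
  have nxym : x ∉ uIcc y m := by rw [uym]; exact fun h => by linarith [h.1]
  have nxy1 : x ∉ uIcc y 1 := by rw [uy1]; exact fun h => by linarith [h.1]
  have d1 := dff 0 m0 m mm (by
    rw [ux0, uym]; ext t; simp only [mem_inter_iff, mem_Icc, mem_empty_iff_false, iff_false]
    rintro ⟨⟨-, h⟩, h', -⟩; linarith)
  have d2 := dff m mm 1 m1 (by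
    rw [uxm, uy1]; ext t; simp only [mem_inter_iff, mem_Icc, mem_empty_iff_false, iff_false]
    rintro ⟨⟨-, h⟩, h', -⟩; linarith)
  have d3 := dfg 0 m0 nyx0 0 m0
  have d4 := dfg 0 m0 nyx0 1 m1
  have d5 := dfg m mm nyxm 0 m0
  have d6 := dfg m mm nyxm 1 m1
  have d7 := dgf m mm nxym 0 m0
  have d8 := dgf m mm nxym 1 m1
  have d9 := dgf 1 m1 nxy1 0 m0
  have d10 := dgf 1 m1 nxy1 1 m1
  simp only [itx, tw, seg_zero, seg_one] at d1 d2 d3 d4 d5 d6 d7 d8 d9 d10 dgg0 dgg1 X1 X2 Y1 Y2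
  -- the two cycles through `X, M, Y, m` and `X, m, Y, S` wind equally often around `f 0` and `f 1`
  have g1v := turn_seg_add c1 (o1 0 m0 hx0.ne) m0 mx' m1
  have g1w := turn_seg_add c1 (o1 1 m1 hx1.ne') m0 mx' m1
  have g2v := turn_seg_add c2 (o2 0 m0 hy0.ne) m0 my' m1
  have g2w := turn_seg_add c2 (o2 1 m1 hy1.ne') m0 my' m1
  have r1 := turn_seg_rev c1 ((o1 0 m0 hx0.ne).seg mx' m0)
  have r2 := turn_seg_rev c1 ((o1 1 m1 hx1.ne').seg mx' m0)
  have r3 := turn_seg_rev c2 ((o2 0 m0 hy0.ne).seg my' m0)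
  have r4 := turn_seg_rev c2 ((o2 1 m1 hy1.ne').seg my' m0)
  simp only [itx] at k1 k2
  rw [seg_self] at g1v g1w g2v g2w
  simp only [e1, e2, hX, hY] at k1 k2 d1 d2 d3 d4 d5 d6 d7 d8 d9 d10 dgg0 dgg1 X1 X2 Y1 Y2
  have W1 : turn (seg g1 x' 1) (f 0) - turn (seg g2 y' 0) (f 0) + turn (seg f y m) (f 0)
      - turn (seg f x m) (f 0) = turn (seg g1 x' 1) (f 1) - turn (seg g2 y' 0) (f 1)
      + turn (seg f y m) (f 1) - turn (seg f x m) (f 1) := by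
    linarith
  have W2 : turn (seg f x m) (f 0) - turn (seg f y m) (f 0) + turn (seg g2 y' 1) (f 0)
      - turn (seg g1 x' 0) (f 0) = turn (seg f x m) (f 1) - turn (seg f y m) (f 1)
      + turn (seg g2 y' 1) (f 1) - turn (seg g1 x' 0) (f 1) := by
    linarith
  -- `k1` and `k2` force the winding numbers of the whole curve around `f 0` and `f 1` to differ
  linarith

/-- A simple closed curve, made of two paths `g1` and `g2`, cannot be crossed in the same
direction by a path `f` that meets `g1` once and `g2` once. -/
lemma cycle_false {g1 g2 f : ℝ → ℂ} (c1 : Continuous g1) (c2 : Continuous g2) (cf : Continuous f)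
    (i1 : InjOn g1 (Icc 0 1)) (i2 : InjOn g2 (Icc 0 1)) (i3 : InjOn f (Icc 0 1))
    (e1 : g1 1 = g2 0) (e2 : g2 1 = g1 0)
    (h12 : ∀ s ∈ Icc (0 : ℝ) 1, ∀ t ∈ Icc (0 : ℝ) 1, g1 s = g2 t → (s = 0 ∧ t = 1) ∨ (s = 1 ∧ t = 0))
    {x x' y y' : ℝ} (hx : x ∈ Ioo (0 : ℝ) 1) (hx' : x' ∈ Ioo (0 : ℝ) 1) (hy : y ∈ Ioo (0 : ℝ) 1)
    (hy' : y' ∈ Ioo (0 : ℝ) 1) (hX : g1 x' = f x) (hY : g2 y' = f y)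
    (u1 : ∀ s ∈ Icc (0 : ℝ) 1, ∀ t ∈ Icc (0 : ℝ) 1, g1 t = f s → t = x' ∧ s = x)
    (u2 : ∀ s ∈ Icc (0 : ℝ) 1, ∀ t ∈ Icc (0 : ℝ) 1, g2 t = f s → t = y' ∧ s = y)
    (k1 : itx g1 f = 2 * Real.pi) (k2 : itx g2 f = 2 * Real.pi) : False := by
  rcases lt_trichotomy x y with h | h | h
  · exact cycle_aux c1 c2 cf i1 i2 i3 e1 e2 h12 hx hx' hy hy' hX hY u1 u2 k1 k2 h
  · subst h
    rcases h12 x' ⟨hx'.1.le, hx'.2.le⟩ y' ⟨hy'.1.le, hy'.2.le⟩ (hX.trans hY.symm) with h | h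
    · exact hx'.1.ne' h.1
    · exact hx'.2.ne h.1
  · exact cycle_aux c2 c1 cf i2 i1 i3 e2 e1 (fun s hs t ht he => (h12 t ht s hs he.symm).symm.imp
      And.symm And.symm) hy hy' hx hx' hY hX u2 u1 k2 k1 h

/-! ### Algebraic nonplanarity of `K₃,₃` and parametrised drawings -/

lemma arg_sub_arg_neg {w : ℂ} (hw : w ≠ 0) :
    ∃ k : ℤ, Complex.arg w - Complex.arg (-w) = Real.pi * (2 * k + 1) := by
  have h : Complex.exp (Complex.log w) =
      Complex.exp (Complex.log (-w) + Real.pi * Complex.I) := by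
    rw [Complex.exp_add, Complex.exp_log hw, Complex.exp_log (neg_ne_zero.2 hw),
      Complex.exp_pi_mul_I]; ring
  obtain ⟨n, hn⟩ := Complex.exp_eq_exp_iff_exists_int.1 h
  refine ⟨n, ?_⟩
  have := congrArg Complex.im hn
  simp [Complex.log_im] at this
  rw [this]; ring

/-- Modulo `2π`, the change of argument is the difference of the principal arguments of the
endpoints. -/
lemma turn_mod {f : ℝ → ℂ} (hf : Continuous f) {z : ℂ} (h : Off f z) :
    ∃ k : ℤ, turn f z = Complex.arg (f 1 - z) - Complex.arg (f 0 - z) + 2 * Real.pi * k := by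
  obtain ⟨L, hL, hL'⟩ := exists_log hf.continuousOn h
  have key : ∀ t ∈ Icc (0 : ℝ) 1, ∃ k : ℤ,
      (L t).im = Complex.arg (f t - z) + 2 * Real.pi * k := fun t ht => by
    have h1 : Complex.exp (L t) = Complex.exp (Complex.log (f t - z)) := by
      rw [hL' t ht, Complex.exp_log (sub_ne_zero.2 (h t ht))]
    obtain ⟨n, hn⟩ := Complex.exp_eq_exp_iff_exists_int.1 h1
    refine ⟨n, ?_⟩
    have := congrArg Complex.im hn
    simp [Complex.log_im] at this
    rw [this]; ring
  obtain ⟨k1, h1⟩ := key 1 (by simp)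
  obtain ⟨k0, h0⟩ := key 0 (by simp)
  refine ⟨k1 - k0, ?_⟩
  rw [turn_eq hL.continuousOn hL', Complex.sub_im, h1, h0]; push_cast; ring

/-- An algebraic form of the nonplanarity of `K₃,₃` (strong Hanani–Tutte): in a drawing with nine
paths from `a i` to `b j`, some two independent paths have nonzero algebraic intersection. -/
lemma K33 {a b : Fin 3 → ℂ} {γ : Fin 3 → Fin 3 → ℝ → ℂ} (ha : Function.Injective a)
    (hb : Function.Injective b) (hab : ∀ i j, a i ≠ b j) (hc : ∀ i j, Continuous (γ i j))
    (h0 : ∀ i j, γ i j 0 = a i) (h1 : ∀ i j, γ i j 1 = b j)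
    (ho : ∀ i j k, k ≠ i → Off (γ i j) (a k)) (ho' : ∀ i j l, l ≠ j → Off (γ i j) (b l))
    (hI : ∀ i k j l, i < k → j ≠ l → itx (γ i j) (γ k l) = 0) : False := by
  -- all changes of argument are replaced by principal arguments, which cancel up to multiples of `π`
  have hw : ∀ i j k, ∃ w : ℤ, k ≠ i → turn (γ i j) (a k) =
      Complex.arg (b j - a k) - Complex.arg (a i - a k) + 2 * Real.pi * w := fun i j k => by
    by_cases hk : k = i
    · exact ⟨0, fun h => absurd hk h⟩
    · obtain ⟨w, hw⟩ := turn_mod (hc i j) (ho i j k hk)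
      exact ⟨w, fun _ => by rw [hw, h0, h1]⟩
  have hu : ∀ i j l, ∃ w : ℤ, l ≠ j → turn (γ i j) (b l) =
      Complex.arg (b j - b l) - Complex.arg (a i - b l) + 2 * Real.pi * w := fun i j l => by
    by_cases hk : l = j
    · exact ⟨0, fun h => absurd hk h⟩
    · obtain ⟨w, hw⟩ := turn_mod (hc i j) (ho' i j l hk)
      exact ⟨w, fun _ => by rw [hw, h0, h1]⟩
  choose w hw using hw
  choose u hu using hu
  have hr : ∀ x y : ℂ, ∃ k : ℤ, x ≠ y →
      Complex.arg (x - y) - Complex.arg (y - x) = Real.pi * (2 * k + 1) := fun x y => by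
    by_cases hxy : x = y
    · exact ⟨0, fun h => absurd hxy h⟩
    · obtain ⟨k, hk⟩ := arg_sub_arg_neg (sub_ne_zero.2 hxy)
      exact ⟨k, fun _ => by rw [← hk, neg_sub]⟩
  choose r hr using hr
  have hpi := Real.pi_pos
  have eqn : ∀ i k j l, i < k → j ≠ l →
      -(2 * r (a k) (b j) + 1) - (2 * r (a i) (a k) + 1) - (2 * r (b j) (b l) + 1)
        + (2 * r (a i) (b l) + 1) + 2 * (w i j k - u i j l + u k l j - w k l i) = 0 := by
    intro i k j l hik hjl
    have h := hI i k j l hik hjl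
    have r1 := hr _ _ (hab k j)
    have r2 := hr _ _ (ha.ne hik.ne)
    have r3 := hr _ _ (hb.ne hjl)
    have r4 := hr _ _ (hab i l)
    unfold itx at h
    rw [h0, h1, h0, h1, hw i j k hik.ne', hu i j l hjl.symm, hu k l j hjl, hw k l i hik.ne] at h
    have : Real.pi * (-(2 * r (a k) (b j) + 1) - (2 * r (a i) (a k) + 1) -
        (2 * r (b j) (b l) + 1) + (2 * r (a i) (b l) + 1) +
        2 * (w i j k - u i j l + u k l j - w k l i)) = 0 := by linarith
    have := (mul_eq_zero.1 this).resolve_left hpi.ne'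
    exact_mod_cast this
  have anti : ∀ j l, j ≠ l → (2 * r (b j) (b l) + 1) = -(2 * r (b l) (b j) + 1) := by
    intro j l hjl
    have r1 := hr _ _ (hb.ne hjl)
    have r2 := hr _ _ (hb.ne hjl.symm)
    have : Real.pi * ((2 * r (b j) (b l) + 1) + (2 * r (b l) (b j) + 1)) = 0 := by linarith
    have := (mul_eq_zero.1 this).resolve_left hpi.ne'
    have h3 : (2 * r (b j) (b l) + 1) + (2 * r (b l) (b j) + 1) = 0 := by exact_mod_cast this
    linarith
  -- the vanishing intersection numbers have become jointly contradictory integer equations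
  have A01 := anti 0 1 (by decide)
  have A02 := anti 0 2 (by decide)
  have A12 := anti 1 2 (by decide)
  have E : ∀ i k, i < k → _ := fun i k hik =>
    And.intro (eqn i k 0 1 hik (by decide)) (And.intro (eqn i k 1 0 hik (by decide))
    (And.intro (eqn i k 0 2 hik (by decide)) (And.intro (eqn i k 2 0 hik (by decide))
    (And.intro (eqn i k 1 2 hik (by decide)) (eqn i k 2 1 hik (by decide))))))
  obtain ⟨a1, a2, a3, a4, a5, a6⟩ := E 0 1 (by decide)
  obtain ⟨b1, b2, b3, b4, b5, b6⟩ := E 0 2 (by decide)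
  obtain ⟨c1, c2, c3, c4, c5, c6⟩ := E 1 2 (by decide)
  clear E eqn anti hI hw hu hr ho ho' hc h0 h1 ha hb hab hpi
  omega

/-- A drawing of the complete graph on `V` in the complex plane. The edge from `i` to `j` is the
restriction to `[0, 1]` of the path `e i j`, which is continuous on all of `ℝ`, and `e j i` is the
reversed path. Independent edges meet at most once; they may touch without crossing. The paths `e i i`
carry no information. -/
structure Drw (V : Type) where
  p : V → ℂ
  e : V → V → ℝ → ℂ
  p_inj : Function.Injective p
  cont : ∀ i j, Continuous (e i j)
  inj : ∀ i j, i ≠ j → InjOn (e i j) (Icc 0 1)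
  zero : ∀ i j, e i j 0 = p i
  one : ∀ i j, e i j 1 = p j
  rev : ∀ i j, e j i = seg (e i j) 1 0
  off : ∀ i j k, i ≠ j → k ≠ i → k ≠ j → Off (e i j) (p k)
  adj : ∀ i j k, i ≠ j → i ≠ k → j ≠ k → ∀ s ∈ Icc (0 : ℝ) 1, ∀ t ∈ Icc (0 : ℝ) 1,
    e i j s = e i k t → s = 0 ∧ t = 0
  ind : ∀ i j k l, i ≠ j → k ≠ l → i ≠ k → i ≠ l → j ≠ k → j ≠ l →
    ∀ s ∈ Icc (0 : ℝ) 1, ∀ t ∈ Icc (0 : ℝ) 1, ∀ s' ∈ Icc (0 : ℝ) 1, ∀ t' ∈ Icc (0 : ℝ) 1,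
    e i j s = e k l t → e i j s' = e k l t' → s = s' ∧ t = t'

/-- Restricting a path to a part avoiding the only common point with `g`, or containing it. -/
lemma itx_seg_cases {f g : ℝ → ℂ} (hf : Continuous f) (hg : Continuous g) {x a b : ℝ}
    (hu : ∀ s ∈ Icc (0 : ℝ) 1, ∀ t ∈ Icc (0 : ℝ) 1, f s = g t → s = x)
    (o0 : Off f (g 0)) (o1 : Off f (g 1)) (ha : a ∈ Icc (0 : ℝ) 1) (hb : b ∈ Icc (0 : ℝ) 1) :
    (x ∉ uIcc a b → itx (seg f a b) g = 0) ∧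
    (a < x → x < b → itx (seg f a b) g = itx f g) ∧
    (b < x → x < a → itx (seg f a b) g = - itx f g) := by
  have m0 : (0 : ℝ) ∈ Icc (0 : ℝ) 1 := by simp
  have m1 : (1 : ℝ) ∈ Icc (0 : ℝ) 1 := by simp
  have key : ∀ a ∈ Icc (0 : ℝ) 1, ∀ b ∈ Icc (0 : ℝ) 1, x ∉ uIcc a b → itx (seg f a b) g = 0 :=
    fun a ha b hb hx => itx_disj (seg_cont hf _ _) hg (by
      rw [← seg_self g]
      refine seg_disj fun s hs t ht he => ?_
      rw [uIcc_of_le zero_le_one] at ht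
      have := hu s (uIcc_subset_Icc ha hb hs) t ht he
      subst this; exact hx hs)
  have key2 : ∀ a ∈ Icc (0 : ℝ) 1, ∀ b ∈ Icc (0 : ℝ) 1, a < x → x < b →
      itx (seg f a b) g = itx f g := fun a ha b hb h1 h2 => by
    have e1 := itx_seg_add hf o0 o1 m0 ha m1
    have e2 := itx_seg_add hf o0 o1 ha hb m1
    have e3 := key 0 m0 a ha (by rw [uIcc_of_le ha.1]; exact fun h => by linarith [h.2])
    have e4 := key b hb 1 m1 (by rw [uIcc_of_le hb.2]; exact fun h => by linarith [h.1])
    rw [seg_self] at e1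
    linarith
  refine ⟨key a ha b hb, key2 a ha b hb, fun h1 h2 => ?_⟩
  rw [itx_seg_rev hf (o0.seg hb ha) (o1.seg hb ha), key2 b hb a ha h1 h2]

lemma itx_seg_zero {f g : ℝ → ℂ} (hf : Continuous f) (hg : Continuous g) {a b : ℝ}
    (hu : ∀ s ∈ Icc (0 : ℝ) 1, ∀ t ∈ Icc (0 : ℝ) 1, ∀ s' ∈ Icc (0 : ℝ) 1, ∀ t' ∈ Icc (0 : ℝ) 1,
      f s = g t → f s' = g t' → s = s')
    (o0 : Off f (g 0)) (o1 : Off f (g 1)) (ha : a ∈ Icc (0 : ℝ) 1) (hb : b ∈ Icc (0 : ℝ) 1)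
    (oa : Off g (f a)) (ob : Off g (f b)) (h : itx f g = 0) : itx (seg f a b) g = 0 := by
  by_cases hd : Disj f g
  · refine itx_disj (seg_cont hf _ _) hg ?_
    rw [← seg_self g]
    refine seg_disj fun s hs t ht => ?_
    rw [uIcc_of_le zero_le_one] at ht
    exact hd s (uIcc_subset_Icc ha hb hs) t ht
  · unfold Disj at hd
    push Not at hd
    obtain ⟨x, hx, y, hy, hxy⟩ := hd
    have hc := itx_seg_cases hf hg (x := x) (fun s hs t ht he => hu s hs t ht x hx y hy he hxy)
      o0 o1 ha hb
    have hax : a ≠ x := by rintro rfl; exact oa y hy hxy.symm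
    have hbx : b ≠ x := by rintro rfl; exact ob y hy hxy.symm
    by_cases hm : x ∈ uIcc a b
    · rcases le_total a b with hab | hab
      · rw [uIcc_of_le hab] at hm
        rw [hc.2.1 (lt_of_le_of_ne hm.1 hax) (lt_of_le_of_ne hm.2 hbx.symm), h]
      · rw [uIcc_of_ge hab] at hm
        rw [hc.2.2 (lt_of_le_of_ne hm.1 hbx) (lt_of_le_of_ne hm.2 hax.symm), h, neg_zero]
    · exact hc.1 hm

/-! ### Touching edges and detours -/

/-- Four pairwise distinct vertices. -/
structure Ind4 {V : Type} (i j k l : V) : Prop where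
  ij : i ≠ j
  kl : k ≠ l
  ik : i ≠ k
  il : i ≠ l
  jk : j ≠ k
  jl : j ≠ l

/-- The paths `p`, from the start of `g` to the start of `f`, and `q`, from the end of `f` to the end
of `g`, avoid the interiors of the crossing paths `f` and `g`. If `f` and `g` cross, then `f` and `g`
reconnected at the crossing point as `f 0 → g 0` and `f 1 → g 1` have intersection zero by
`four_arms`, and this is carried over to `p` and `q`. -/
lemma k4_aux {f g p q : ℝ → ℂ} (cf : Continuous f) (cg : Continuous g) (cp : Continuous p)
    (cq : Continuous q) (hfi : InjOn f (Icc 0 1)) (hgi : InjOn g (Icc 0 1)) {x y : ℝ}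
    (hx : x ∈ Ioo (0 : ℝ) 1) (hy : y ∈ Ioo (0 : ℝ) 1) (hX : f x = g y)
    (hu : ∀ s ∈ Icc (0 : ℝ) 1, ∀ t ∈ Icc (0 : ℝ) 1, f s = g t → s = x ∧ t = y)
    (p0 : p 0 = g 0) (p1 : p 1 = f 0) (q0 : q 0 = f 1) (q1 : q 1 = g 1)
    (pf : ∀ s ∈ Icc (0 : ℝ) 1, ∀ t ∈ Icc (0 : ℝ) 1, p s = f t → t = 0)
    (pg : ∀ s ∈ Icc (0 : ℝ) 1, ∀ t ∈ Icc (0 : ℝ) 1, p s = g t → t = 0)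
    (qf : ∀ s ∈ Icc (0 : ℝ) 1, ∀ t ∈ Icc (0 : ℝ) 1, q s = f t → t = 1)
    (qg : ∀ s ∈ Icc (0 : ℝ) 1, ∀ t ∈ Icc (0 : ℝ) 1, q s = g t → t = 1) :
    itx f g = 0 ∨ ((itx f g = 2 * Real.pi ∨ itx f g = -(2 * Real.pi)) ∧ itx p q = 0) := by
  have m0 : (0 : ℝ) ∈ Icc (0 : ℝ) 1 := by simp
  have m1 : (1 : ℝ) ∈ Icc (0 : ℝ) 1 := by simp
  have mx : x ∈ Icc (0 : ℝ) 1 := ⟨hx.1.le, hx.2.le⟩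
  have my : y ∈ Icc (0 : ℝ) 1 := ⟨hy.1.le, hy.2.le⟩
  have A := four_arms (cross_arms cf cg hfi hgi le_rfl hx.1 hx.2 le_rfl le_rfl hy.1 hy.2 le_rfl hX hu)
  simp only [Matrix.cons_val] at A
  rw [← itx_cross cf cg mx m0 m1 my m0 m1 (fun s hs he => hy.1.ne (hu s hs 0 m0 he).2)
    (fun s hs he => hy.2.ne' (hu s hs 1 m1 he).2) (fun t ht he => hx.1.ne (hu 0 m0 t ht he.symm).1)
    (fun t ht he => hx.2.ne' (hu 1 m1 t ht he.symm).1), seg_self, seg_self] at A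
  refine A.imp_right fun h => ⟨h.1, ?_⟩
  have d : ∀ {u h : ℝ → ℂ} {z r e : ℝ}, Continuous u → Continuous h → z ∈ Icc (0 : ℝ) 1 →
      r ∈ Icc (0 : ℝ) 1 → e ∉ uIcc z r →
      (∀ s ∈ Icc (0 : ℝ) 1, ∀ t ∈ Icc (0 : ℝ) 1, u s = h t → t = e) → itx u (seg h z r) = 0 :=
    fun {u h z r e} cu ch hz hr hn hd => itx_disj cu (seg_cont ch _ _) fun s hs t ht he => by
      have := hd s hs _ (uIcc_subset_Icc hz hr (seg_param_mem ht)) he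
      exact hn (this ▸ seg_param_mem ht)
  have n0x : (0 : ℝ) ∉ uIcc x 1 := by rw [uIcc_of_le hx.2.le]; exact fun h => by linarith [h.1, hx.1]
  have n0y : (0 : ℝ) ∉ uIcc y 1 := by rw [uIcc_of_le hy.2.le]; exact fun h => by linarith [h.1, hy.1]
  have n1x : (1 : ℝ) ∉ uIcc x 0 := by rw [uIcc_of_ge hx.1.le]; exact fun h => by linarith [h.2, hx.2]
  have n1y : (1 : ℝ) ∉ uIcc y 0 := by rw [uIcc_of_ge hy.1.le]; exact fun h => by linarith [h.2, hy.2]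
  have d1 := d cp cf mx m1 n0x pf
  have d2 := d cp cg my m1 n0y pg
  have d3 := d cq cf mx m0 n1x qf
  have d4 := d cq cg my m0 n1y qg
  have h3 := h.2.1
  simp only [itx, tw, seg_zero, seg_one, p0, p1, q0, q1, hX] at d1 d2 d3 d4 h3 ⊢
  linarith

namespace Drw

variable {V : Type} (D : Drw V)

/-- `2π` times the algebraic intersection number of two (independent) edges. -/
noncomputable def I (i j k l : V) : ℝ := itx (D.e i j) (D.e k l)

variable {D}

lemma I_swap (i j k l : V) : D.I k l i j = - D.I i j k l := itx_swap _ _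

lemma off_left {i j k l : V} (h : Ind4 i j k l) : Off (D.e i j) (D.e k l 0) := by
  rw [D.zero]; exact D.off _ _ _ h.ij h.ik.symm h.jk.symm

lemma off_right {i j k l : V} (h : Ind4 i j k l) : Off (D.e i j) (D.e k l 1) := by
  rw [D.one]; exact D.off _ _ _ h.ij h.il.symm h.jl.symm

end Drw

lemma Ind4.swap {V : Type} {i j k l : V} (h : Ind4 i j k l) : Ind4 k l i j :=
  ⟨h.kl, h.ij, h.ik.symm, h.jk.symm, h.il.symm, h.jl.symm⟩

lemma Ind4.rev {V : Type} {i j k l : V} (h : Ind4 i j k l) : Ind4 j i k l :=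
  ⟨h.ij.symm, h.kl, h.jk, h.jl, h.ik, h.il⟩

namespace Drw

variable {V : Type} {D : Drw V}

lemma I_rev {i j k l : V} (h : Ind4 i j k l) : D.I j i k l = - D.I i j k l := by
  unfold I
  rw [D.rev i j, itx_seg_rev (D.cont i j)] <;> rw [seg_self]
  · exact off_left h
  · exact off_right h

lemma I_rev' {i j k l : V} (h : Ind4 i j k l) : D.I i j l k = - D.I i j k l := by
  rw [I_swap, I_rev h.swap, I_swap i j k l, neg_neg]

lemma rev_apply (i j : V) (t : ℝ) : D.e j i t = D.e i j (1 - t) := by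
  rw [D.rev i j]; simp only [seg]; congr 1; ring

lemma mem_Ioo {i j k l : V} (h : Ind4 i j k l) {s t : ℝ} (hs : s ∈ Icc (0 : ℝ) 1)
    (ht : t ∈ Icc (0 : ℝ) 1) (he : D.e i j s = D.e k l t) : s ∈ Ioo (0 : ℝ) 1 := by
  refine ⟨lt_of_le_of_ne hs.1 ?_, lt_of_le_of_ne hs.2 ?_⟩
  · rintro rfl; exact off_left h.swap t ht he.symm
  · rintro rfl; exact off_right h.swap t ht he.symm

lemma ind' {i j k l : V} (h : Ind4 i j k l) {x y : ℝ} (hx : x ∈ Icc (0 : ℝ) 1)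
    (hy : y ∈ Icc (0 : ℝ) 1) (hX : D.e i j x = D.e k l y) :
    ∀ s ∈ Icc (0 : ℝ) 1, ∀ t ∈ Icc (0 : ℝ) 1, D.e i j s = D.e k l t → s = x ∧ t = y :=
  fun s hs t ht he => D.ind i j k l h.ij h.kl h.ik h.il h.jk h.jl s hs t ht x hx y hy he hX

lemma exists_meet {i j k l : V} (h : D.I i j k l ≠ 0) :
    ∃ s ∈ Icc (0 : ℝ) 1, ∃ t ∈ Icc (0 : ℝ) 1, D.e i j s = D.e k l t := by
  by_contra hcon
  push Not at hcon
  exact h (itx_disj (D.cont _ _) (D.cont _ _) hcon)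

lemma sub_mem {t : ℝ} (ht : t ∈ Icc (0 : ℝ) 1) : 1 - t ∈ Icc (0 : ℝ) 1 :=
  ⟨by linarith [ht.2], by linarith [ht.1]⟩

/-- Two edges with a common endpoint meet only there; version for two edges ending at it. -/
lemma adj_end {i j k : V} (hij : i ≠ j) (hik : i ≠ k) (hjk : j ≠ k) {s t : ℝ}
    (hs : s ∈ Icc (0 : ℝ) 1) (ht : t ∈ Icc (0 : ℝ) 1) (he : D.e j i s = D.e k i t) :
    s = 1 ∧ t = 1 := by
  rw [rev_apply i j, rev_apply i k] at he
  obtain ⟨h1, h2⟩ := D.adj i j k hij hik hjk _ (sub_mem hs) _ (sub_mem ht) he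
  constructor <;> linarith

lemma adj_mid {i j k : V} (hij : i ≠ j) (hik : i ≠ k) (hjk : j ≠ k) {s t : ℝ}
    (hs : s ∈ Icc (0 : ℝ) 1) (ht : t ∈ Icc (0 : ℝ) 1) (he : D.e j i s = D.e i k t) :
    s = 1 ∧ t = 0 := by
  rw [rev_apply i j] at he
  obtain ⟨h1, h2⟩ := D.adj i j k hij hik hjk _ (sub_mem hs) _ ht he
  constructor <;> linarith

/-- The `K₄` argument: if the algebraic intersection of `ij` and `kl` is nonzero, then it is `±2π`
and the opposite edges `ki` and `jl` have algebraic intersection zero. (The remaining pair of opposite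
edges is covered by reversing `ij`.) -/
lemma k4 {i j k l : V} (h : Ind4 i j k l) : D.I i j k l = 0 ∨
    ((D.I i j k l = 2 * Real.pi ∨ D.I i j k l = -(2 * Real.pi)) ∧ D.I k i j l = 0) := by
  by_cases h0 : D.I i j k l = 0
  · exact Or.inl h0
  · obtain ⟨x, hx, y, hy, hX⟩ := exists_meet h0
    exact k4_aux (D.cont i j) (D.cont k l) (D.cont k i) (D.cont j l) (D.inj _ _ h.ij)
      (D.inj _ _ h.kl) (mem_Ioo h hx hy hX) (mem_Ioo h.swap hy hx hX.symm) hX (ind' h hx hy hX)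
      (by simp [D.zero]) (by simp [D.zero, D.one]) (by simp [D.zero, D.one]) (by simp [D.one])
      (fun s hs t ht he => (adj_mid h.ik h.ij h.jk.symm hs ht he).2)
      (fun s hs t ht he => (D.adj k i l h.ik.symm h.kl h.il _ hs _ ht he).2)
      (fun s hs t ht he => (adj_mid h.ij.symm h.jl h.il ht hs he.symm).1)
      (fun s hs t ht he => (adj_end h.jl.symm h.kl.symm h.jk hs ht he).2)

lemma I_values {i j k l : V} (h : Ind4 i j k l) :
    D.I i j k l = 0 ∨ D.I i j k l = 2 * Real.pi ∨ D.I i j k l = -(2 * Real.pi) :=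
  (k4 h).imp_right fun h => h.1

/-- Two edges touch: they are not disjoint but their algebraic intersection is zero. -/
def Touch (D : Drw V) (i j k l : V) : Prop :=
  D.I i j k l = 0 ∧ ¬ Disj (D.e i j) (D.e k l)

/-- The path from `k` to `l` along the edges `kp` and `ql`, which meet in a common point. -/
noncomputable def detour (D : Drw V) (p q k l : V) (s t : ℝ) : ℝ → ℂ :=
  cat (seg (D.e p k) 1 s) (seg (D.e q l) t 1)

section touch

variable {p q k l k' l' : V} {s t s' t' : ℝ}

lemma detour_cont (hX : D.e p k s = D.e q l t) : Continuous (D.detour p q k l s t) :=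
  cat_cont (seg_cont (D.cont _ _) _ _) (seg_cont (D.cont _ _) _ _) (by simpa using hX)

/-- A detour avoids all vertices other than its endpoints. -/
lemma detour_off (h : Ind4 p k q l) (hs : s ∈ Icc (0 : ℝ) 1) (ht : t ∈ Icc (0 : ℝ) 1)
    (hX : D.e p k s = D.e q l t) {v : V} (hk : v ≠ k) (hl : v ≠ l) :
    Off (D.detour p q k l s t) (D.p v) := by
  have hs0 := mem_Ioo h hs ht hX
  have ht0 := mem_Ioo h.swap ht hs hX.symm
  apply cat_off
  · by_cases hv : v = p
    · subst hv
      refine seg_off.2 fun x hx he => ?_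
      rw [← D.zero v k] at he
      have := D.inj v k h.ij (uIcc_subset_Icc (by simp) hs hx) (by simp) he
      rw [uIcc_of_ge hs.2] at hx
      linarith [hx.1, hs0.1]
    · exact (D.off _ _ _ h.ij hv hk).seg (by simp) hs
  · by_cases hv : v = q
    · subst hv
      refine seg_off.2 fun x hx he => ?_
      rw [← D.zero v l] at he
      have := D.inj v l h.kl (uIcc_subset_Icc ht (by simp) hx) (by simp) he
      rw [uIcc_of_le ht.2] at hx
      linarith [hx.1, ht0.1]
    · exact (D.off _ _ _ h.kl hv hl).seg ht (by simp)

lemma touch_seg (h : Ind4 p k q l) (hI : D.I p k q l = 0) (hs : s ∈ Icc (0 : ℝ) 1)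
    (hoff : Off (D.e q l) (D.e p k s)) : itx (seg (D.e p k) 1 s) (D.e q l) = 0 :=
  itx_seg_zero (D.cont _ _) (D.cont _ _) (fun a ha b hb a' ha' b' hb' e e' =>
    (ind' h ha' hb' e' a ha b hb e).1) (off_left h) (off_right h) (by simp) hs
    (off_right h.swap) hoff hI

lemma touch_seg' (h : Ind4 p k q l) (hI : D.I p k q l = 0) (hs : s ∈ Icc (0 : ℝ) 1)
    (hoff : Off (D.e p k) (D.e q l s)) : itx (seg (D.e q l) s 1) (D.e p k) = 0 :=
  itx_seg_zero (D.cont _ _) (D.cont _ _) (fun a ha b hb a' ha' b' hb' e e' =>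
    (ind' h hb' ha' e'.symm b hb a ha e.symm).2) (off_left h.swap) (off_right h.swap) hs (by simp)
    hoff (off_right h) (by rw [← neg_eq_zero, ← itx_swap]; exact hI)

/-- A point of `pk` other than `p` is not on `pk'`. -/
lemma off_adj (h1 : p ≠ k) (h2 : p ≠ k') (h3 : k ≠ k') (hs : s ∈ Icc (0 : ℝ) 1) (hs0 : 0 < s) :
    Off (D.e p k') (D.e p k s) := fun x hx he =>
  hs0.ne' (D.adj p k k' h1 h2 h3 s hs x hx he.symm).1

lemma touch_seg2 (h : Ind4 p k q l) (hI : D.I p k q l = 0) (hs : s ∈ Icc (0 : ℝ) 1)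
    (ht : t ∈ Icc (0 : ℝ) 1) (hoff : Off (D.e q l) (D.e p k s))
    (hoff' : Off (D.e p k) (D.e q l t)) :
    itx (seg (D.e q l) t 1) (seg (D.e p k) 1 s) = 0 := by
  have m1 : (1 : ℝ) ∈ Icc (0 : ℝ) 1 := by simp
  refine itx_seg_zero (D.cont _ _) (seg_cont (D.cont _ _) _ _) ?_ ?_ ?_ ht m1
    (hoff'.seg m1 hs) ((off_right h).seg m1 hs) ?_
  · intro a ha b hb a' ha' b' hb' e e'
    exact (ind' h (uIcc_subset_Icc m1 hs (seg_param_mem hb')) ha' e'.symm _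
      (uIcc_subset_Icc m1 hs (seg_param_mem hb)) a ha e.symm).2
  · rw [seg_zero]; exact off_right h.swap
  · simpa using hoff
  · rw [itx_swap, touch_seg h hI hs hoff, neg_zero]

lemma seg_adj_disj (h1 : p ≠ k) (h2 : p ≠ k') (h3 : k ≠ k') {a b : ℝ} (ha : a ∈ Ioc (0 : ℝ) 1)
    (hb : b ∈ Ioc (0 : ℝ) 1) {g : ℝ → ℂ} (hg : ∀ t ∈ Icc (0 : ℝ) 1, ∃ t' ∈ Icc (0 : ℝ) 1,
      g t = D.e p k' t') : Disj (seg (D.e p k) a b) g := by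
  intro x hx y hy he
  obtain ⟨t', ht', e'⟩ := hg y hy
  rw [e'] at he
  have hm := seg_param_mem (a := a) (b := b) hx
  have := (D.adj p k k' h1 h2 h3 _ (uIcc_subset_Icc ⟨ha.1.le, ha.2⟩ ⟨hb.1.le, hb.2⟩ hm) _ ht' he).1
  have h0 : 0 < min a b := lt_min ha.1 hb.1
  exact absurd hm.1 (by rw [this]; exact not_le.2 h0)

lemma seg_sub {f : ℝ → ℂ} {a b : ℝ} (ha : a ∈ Icc (0 : ℝ) 1) (hb : b ∈ Icc (0 : ℝ) 1) :
    ∀ t ∈ Icc (0 : ℝ) 1, ∃ t' ∈ Icc (0 : ℝ) 1, seg f a b t = f t' :=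
  fun _ ht => ⟨_, uIcc_subset_Icc ha hb (seg_param_mem ht), rfl⟩

/-- Two detours without common endpoints have intersection zero if the edges `pk` and `ql'`, as well
as `pk'` and `ql`, do. -/
lemma detour_detour (h : Ind4 p k q l) (h' : Ind4 p k' q l') (hk : k ≠ k')
    (hl : l ≠ l') (g1 : Ind4 p k q l') (g2 : Ind4 p k' q l)
    (hs : s ∈ Icc (0 : ℝ) 1) (ht : t ∈ Icc (0 : ℝ) 1) (hs' : s' ∈ Icc (0 : ℝ) 1)
    (ht' : t' ∈ Icc (0 : ℝ) 1) (hX : D.e p k s = D.e q l t) (hX' : D.e p k' s' = D.e q l' t')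
    (hI1 : D.I p k q l' = 0) (hI2 : D.I p k' q l = 0) :
    itx (D.detour p q k l s t) (D.detour p q k' l' s' t') = 0 := by
  have hs0 := mem_Ioo h hs ht hX
  have ht0 := mem_Ioo h.swap ht hs hX.symm
  have hs0' := mem_Ioo h' hs' ht' hX'
  have ht0' := mem_Ioo h'.swap ht' hs' hX'.symm
  have m1 : (1 : ℝ) ∈ Icc (0 : ℝ) 1 := by simp
  have i1 : (1 : ℝ) ∈ Ioc (0 : ℝ) 1 := by simp
  have oX1 : Off (D.e p k') (D.e p k s) := off_adj h.ij h'.ij hk hs hs0.1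
  have oX2 : Off (D.e q l') (D.e p k s) := by
    rw [hX]; exact off_adj h.kl h'.kl hl ht ht0.1
  have oX1' : Off (D.e p k) (D.e q l' t') := by
    rw [← hX']; exact off_adj h'.ij h.ij hk.symm hs' hs0'.1
  have oX2' : Off (D.e q l) (D.e q l' t') := off_adj h'.kl h.kl hl.symm ht' ht0'.1
  have z0 : D.detour p q k' l' s' t' 0 = D.p k' := by simp [detour, cat_zero, D.one]
  have z1 : D.detour p q k' l' s' t' 1 = D.p l' := by simp [detour, cat_one, D.one]
  have c := @D.cont
  rw [detour, itx_cat (seg_cont (c _ _) _ _) (seg_cont (c _ _) _ _) (by simpa using hX)]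
  rotate_left
  · rw [z0]; exact (D.off _ _ _ h.ij h'.ij.symm hk.symm).seg m1 hs
  · rw [z1]; exact (D.off _ _ _ h.ij g1.il.symm g1.jl.symm).seg m1 hs
  · rw [z0]; exact (D.off _ _ _ h.kl g2.jk g2.jl).seg ht m1
  · rw [z1]; exact (D.off _ _ _ h.kl h'.kl.symm hl.symm).seg ht m1
  have e1 : itx (D.detour p q k' l' s' t') (seg (D.e p k) 1 s) = 0 := by
    rw [detour, itx_cat (seg_cont (c _ _) _ _) (seg_cont (c _ _) _ _) (by simpa using hX')]
    · rw [itx_disj (seg_cont (c _ _) _ _) (seg_cont (c _ _) _ _)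
        (seg_adj_disj h'.ij h.ij hk.symm i1 ⟨hs0'.1, hs'.2⟩ (seg_sub m1 hs)),
        touch_seg2 g1 hI1 hs ht' oX2 oX1', add_zero]
    · rw [seg_zero, D.one]; exact (D.off _ _ _ h'.ij h.ij.symm hk).seg m1 hs'
    · rw [seg_one]; exact oX1.seg m1 hs'
    · rw [seg_zero, D.one]; exact (D.off _ _ _ h'.kl g1.jk g1.jl).seg ht' m1
    · rw [seg_one]; exact oX2.seg ht' m1
  have e2 : itx (D.detour p q k' l' s' t') (seg (D.e q l) t 1) = 0 := by
    rw [detour, itx_cat (seg_cont (c _ _) _ _) (seg_cont (c _ _) _ _) (by simpa using hX')]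
    · rw [itx_swap, touch_seg2 g2 hI2 hs' ht (hX' ▸ oX2') (hX ▸ oX1), neg_zero, zero_add]
      exact itx_disj (seg_cont (c _ _) _ _) (seg_cont (c _ _) _ _)
        (seg_adj_disj h'.kl h.kl hl.symm ⟨ht0'.1, ht'.2⟩ i1 (seg_sub ht m1))
    · rw [seg_zero]; exact (hX ▸ oX1).seg m1 hs'
    · rw [seg_one, D.one]; exact (D.off _ _ _ h'.ij g2.il.symm g2.jl.symm).seg m1 hs'
    · rw [seg_zero]; exact (hX ▸ oX2).seg ht' m1
    · rw [seg_one, D.one]; exact (D.off _ _ _ h'.kl h.kl.symm hl).seg ht' m1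
  rw [itx_swap, e1, itx_swap, e2]; simp

/-- A detour `k → X → l` has zero intersection with the remaining edge `q l'`. -/
lemma detour_edge (h : Ind4 p k q l) (hl : l ≠ l') (g1 : Ind4 p k q l')
    (hs : s ∈ Icc (0 : ℝ) 1) (ht : t ∈ Icc (0 : ℝ) 1) (hX : D.e p k s = D.e q l t)
    (hI : D.I p k q l' = 0) :
    itx (D.detour p q k l s t) (D.e q l') = 0 := by
  have ht0 := mem_Ioo h.swap ht hs hX.symm
  have m1 : (1 : ℝ) ∈ Icc (0 : ℝ) 1 := by simp
  have i1 : (1 : ℝ) ∈ Ioc (0 : ℝ) 1 := by simp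
  have oX2 : Off (D.e q l') (D.e p k s) := by
    rw [hX]; exact off_adj h.kl g1.kl hl ht ht0.1
  have c := @D.cont
  rw [detour, itx_cat (seg_cont (c _ _) _ _) (seg_cont (c _ _) _ _) (by simpa using hX),
    touch_seg g1 hI hs oX2, zero_add]
  · exact itx_disj (seg_cont (c _ _) _ _) (c _ _)
      (seg_adj_disj h.kl g1.kl hl ⟨ht0.1, ht.2⟩ i1 fun t ht => ⟨t, ht, rfl⟩)
  · rw [D.zero]; exact (D.off _ _ _ h.ij g1.ik.symm g1.jk.symm).seg m1 hs
  · rw [D.one]; exact (D.off _ _ _ h.ij g1.il.symm g1.jl.symm).seg m1 hs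
  · rw [D.zero]
    refine seg_off.2 fun x hx he => ?_
    rw [← D.zero q l] at he
    have := D.inj q l h.kl (uIcc_subset_Icc ht (by simp) hx) (by simp) he
    rw [uIcc_of_le ht.2] at hx
    linarith [hx.1, ht0.1]
  · rw [D.one]; exact (D.off _ _ _ h.kl g1.kl.symm hl.symm).seg ht m1

lemma Touch.symm (h : D.Touch p k q l) : D.Touch q l p k :=
  ⟨by rw [I_swap, h.1, neg_zero], fun hd => h.2 hd.symm⟩

lemma Touch.meet (h : D.Touch p k q l) : ∃ s ∈ Icc (0 : ℝ) 1, ∃ t ∈ Icc (0 : ℝ) 1,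
    D.e p k s = D.e q l t := by
  by_contra hcon
  push Not at hcon
  exact h.2 hcon

end touch

end Drw

/-! ### Touching pairs have no four-cycle -/

namespace Drw

variable {V : Type} {D : Drw V} {p q k l k' l' : V} {s t : ℝ}

lemma itx_rev_right {f : ℝ → ℂ} {i j : V} (h0 : Off (D.e i j) (f 0)) (h1 : Off (D.e i j) (f 1))
    (h : itx f (D.e i j) = 0) : itx f (D.e j i) = 0 := by
  rw [itx_swap] at h ⊢
  rw [D.rev i j, itx_seg_rev (D.cont _ _) (by rwa [seg_self]) (by rwa [seg_self]), seg_self]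
  simpa using h

lemma detour_zero : D.detour p q k l s t 0 = D.p k := by simp [detour, cat_zero, D.one]

lemma detour_one : D.detour p q k l s t 1 = D.p l := by simp [detour, cat_one, D.one]

/-- A detour `k → X → l` has zero intersection with the remaining edge `k' p`. -/
lemma detour_edge' (h : Ind4 p k q l) (hk : k ≠ k') (g1 : Ind4 p k' q l)
    (hs : s ∈ Icc (0 : ℝ) 1) (ht : t ∈ Icc (0 : ℝ) 1) (hX : D.e p k s = D.e q l t)
    (hI : D.I p k' q l = 0) : itx (D.detour p q k l s t) (D.e k' p) = 0 := by
  have hs0 := mem_Ioo h hs ht hX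
  have m1 : (1 : ℝ) ∈ Icc (0 : ℝ) 1 := by simp
  have i1 : (1 : ℝ) ∈ Ioc (0 : ℝ) 1 := by simp
  have oX1 : Off (D.e p k') (D.e p k s) := off_adj h.ij g1.ij hk hs hs0.1
  have c := @D.cont
  refine itx_rev_right ?_ ?_ ?_
  · rw [detour_zero]; exact D.off _ _ _ g1.ij h.ij.symm hk
  · rw [detour_one]; exact D.off _ _ _ g1.ij h.il.symm g1.jl.symm
  rw [detour, itx_cat (seg_cont (c _ _) _ _) (seg_cont (c _ _) _ _) (by simpa using hX),
    touch_seg' g1 hI ht (hX ▸ oX1), add_zero]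
  · exact itx_disj (seg_cont (c _ _) _ _) (c _ _)
      (seg_adj_disj h.ij g1.ij hk i1 ⟨hs0.1, hs.2⟩ fun t ht => ⟨t, ht, rfl⟩)
  · rw [D.zero]
    refine seg_off.2 fun x hx he => ?_
    rw [← D.zero p k] at he
    have := D.inj p k h.ij (uIcc_subset_Icc m1 hs hx) (by simp) he
    rw [uIcc_of_ge hs.2] at hx
    linarith [hx.1, hs0.1]
  · rw [D.one]; exact (D.off _ _ _ h.ij g1.ij.symm hk.symm).seg m1 hs
  · rw [D.zero]; exact (D.off _ _ _ h.kl h.ik h.il).seg ht m1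
  · rw [D.one]; exact (D.off _ _ _ h.kl g1.jk g1.jl).seg ht m1

/-- A detour `k → X → l` has zero intersection with the edge `q p`. -/
lemma detour_edge'' (h : Ind4 p k q l) (hs : s ∈ Icc (0 : ℝ) 1) (ht : t ∈ Icc (0 : ℝ) 1)
    (hX : D.e p k s = D.e q l t) : itx (D.detour p q k l s t) (D.e q p) = 0 := by
  have hs0 := mem_Ioo h hs ht hX
  have ht0 := mem_Ioo h.swap ht hs hX.symm
  refine itx_disj (detour_cont hX) (D.cont _ _) fun x hx y hy he => ?_
  rcases cat_mem (f := seg (D.e p k) 1 s) (g := seg (D.e q l) t 1) hx with ⟨z, hz, hz'⟩ | ⟨z, hz, hz'⟩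
  · rw [detour, hz'] at he
    exact seg_adj_disj (D := D) h.ij h.ik h.jk (by simp) ⟨hs0.1, hs.2⟩
      (fun t ht => ⟨1 - t, sub_mem ht, rev_apply p q t⟩) z hz y hy he
  · rw [detour, hz'] at he
    exact seg_adj_disj (D := D) h.kl h.ik.symm h.il.symm ⟨ht0.1, ht.2⟩ (by simp)
      (fun t ht => ⟨t, ht, rfl⟩) z hz y hy he

/-- For fixed `p, q`, the bipartite graph of touching pairs `pk`, `ql` has no four-cycle:
rerouting at the touching points would contradict the nonplanarity of `K₃,₃`. -/
lemma touch_C4 {k1 k2 l1 l2 : V} (h11 : Ind4 p k1 q l1) (h12 : Ind4 p k1 q l2)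
    (h21 : Ind4 p k2 q l1) (h22 : Ind4 p k2 q l2) (hk : k1 ≠ k2) (hl : l1 ≠ l2)
    (t11 : D.Touch p k1 q l1) (t12 : D.Touch p k1 q l2) (t21 : D.Touch p k2 q l1)
    (t22 : D.Touch p k2 q l2) : False := by
  obtain ⟨x11, hx11, y11, hy11, e11⟩ := t11.meet
  obtain ⟨x12, hx12, y12, hy12, e12⟩ := t12.meet
  obtain ⟨x21, hx21, y21, hy21, e21⟩ := t21.meet
  obtain ⟨x22, hx22, y22, hy22, e22⟩ := t22.meet
  have T : ∀ {k l}, Ind4 p k q l → D.Touch p k q l → itx (D.e k p) (D.e q l) = 0 :=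
    fun h t => by have := I_rev (D := D) h; rw [t.1, neg_zero] at this; exact this
  -- the edges `k1 l1`, …, `k2 l2` of the `K₃,₃` are the detours, the other five are edges of `D`
  refine K33 (a := ![D.p k1, D.p k2, D.p q]) (b := ![D.p l1, D.p l2, D.p p])
    (γ := ![![D.detour p q k1 l1 x11 y11, D.detour p q k1 l2 x12 y12, D.e k1 p],
      ![D.detour p q k2 l1 x21 y21, D.detour p q k2 l2 x22 y22, D.e k2 p],
      ![D.e q l1, D.e q l2, D.e q p]]) ?_ ?_ ?_ ?_ ?_ ?_ ?_ ?_ ?_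
  · intro i j h
    fin_cases i <;> fin_cases j <;> simp [D.p_inj.eq_iff] at h ⊢
    · exact hk h
    · exact h11.jk h
    · exact hk h.symm
    · exact h21.jk h
    · exact h11.jk h.symm
    · exact h21.jk h.symm
  · intro i j h
    fin_cases i <;> fin_cases j <;> simp [D.p_inj.eq_iff] at h ⊢
    · exact hl h
    · exact h11.il h.symm
    · exact hl h.symm
    · exact h12.il h.symm
    · exact h11.il h
    · exact h12.il h
  · intro i j
    fin_cases i <;> fin_cases j <;> simp [D.p_inj.eq_iff]
    exacts [h11.jl, h12.jl, h11.ij.symm, h21.jl, h22.jl, h22.ij.symm, h11.kl, h22.kl, h11.ik.symm]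
  · intro i j
    fin_cases i <;> fin_cases j
    exacts [detour_cont e11, detour_cont e12, D.cont _ _, detour_cont e21, detour_cont e22,
      D.cont _ _, D.cont _ _, D.cont _ _, D.cont _ _]
  · intro i j
    fin_cases i <;> fin_cases j
    exacts [detour_zero, detour_zero, D.zero _ _, detour_zero, detour_zero,
      D.zero _ _, D.zero _ _, D.zero _ _, D.zero _ _]
  · intro i j
    fin_cases i <;> fin_cases j
    exacts [detour_one, detour_one, D.one _ _, detour_one, detour_one,
      D.one _ _, D.one _ _, D.one _ _, D.one _ _]
  · intro i j k hki
    fin_cases i <;> fin_cases j <;> fin_cases k <;> first | exact absurd rfl hki | skip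
    · exact detour_off h11 hx11 hy11 e11 hk.symm h21.jl
    · exact detour_off h11 hx11 hy11 e11 h11.jk.symm h11.kl
    · exact detour_off h12 hx12 hy12 e12 hk.symm h22.jl
    · exact detour_off h12 hx12 hy12 e12 h11.jk.symm h12.kl
    · exact D.off _ _ _ h11.ij.symm hk.symm h21.ij.symm
    · exact D.off _ _ _ h11.ij.symm h11.jk.symm h11.ik.symm
    · exact detour_off h21 hx21 hy21 e21 hk h11.jl
    · exact detour_off h21 hx21 hy21 e21 h21.jk.symm h11.kl
    · exact detour_off h22 hx22 hy22 e22 hk h12.jl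
    · exact detour_off h22 hx22 hy22 e22 h21.jk.symm h12.kl
    · exact D.off _ _ _ h21.ij.symm hk h11.ij.symm
    · exact D.off _ _ _ h21.ij.symm h21.jk.symm h11.ik.symm
    · exact D.off _ _ _ h11.kl h11.jk h11.jl
    · exact D.off _ _ _ h11.kl h21.jk h21.jl
    · exact D.off _ _ _ h12.kl h11.jk h12.jl
    · exact D.off _ _ _ h12.kl h21.jk h22.jl
    · exact D.off _ _ _ h11.ik.symm h11.jk h11.ij.symm
    · exact D.off _ _ _ h11.ik.symm h21.jk h21.ij.symm
  · intro i j k hki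
    fin_cases i <;> fin_cases j <;> fin_cases k <;> first | exact absurd rfl hki | skip
    · exact detour_off h11 hx11 hy11 e11 h12.jl.symm hl.symm
    · exact detour_off h11 hx11 hy11 e11 h11.ij h11.il
    · exact detour_off h12 hx12 hy12 e12 h11.jl.symm hl
    · exact detour_off h12 hx12 hy12 e12 h11.ij h12.il
    · exact D.off _ _ _ h11.ij.symm h11.jl.symm h11.il.symm
    · exact D.off _ _ _ h11.ij.symm h12.jl.symm h12.il.symm
    · exact detour_off h21 hx21 hy21 e21 h22.jl.symm hl.symm
    · exact detour_off h21 hx21 hy21 e21 h21.ij h11.il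
    · exact detour_off h22 hx22 hy22 e22 h21.jl.symm hl
    · exact detour_off h22 hx22 hy22 e22 h21.ij h12.il
    · exact D.off _ _ _ h21.ij.symm h21.jl.symm h11.il.symm
    · exact D.off _ _ _ h21.ij.symm h22.jl.symm h12.il.symm
    · exact D.off _ _ _ h11.kl h12.kl.symm hl.symm
    · exact D.off _ _ _ h11.kl h11.ik h11.il
    · exact D.off _ _ _ h12.kl h11.kl.symm hl
    · exact D.off _ _ _ h12.kl h11.ik h12.il
    · exact D.off _ _ _ h11.ik.symm h11.kl.symm h11.il.symm
    · exact D.off _ _ _ h11.ik.symm h12.kl.symm h12.il.symm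
  · have S : ∀ {f g : ℝ → ℂ}, itx f g = 0 → itx g f = 0 := fun h => by rw [itx_swap, h, neg_zero]
    intro i k j l hik hjl
    fin_cases i <;> fin_cases k <;> first | exact absurd hik (by decide) | skip
    all_goals fin_cases j <;> fin_cases l <;> first | exact absurd rfl hjl | skip
    · exact detour_detour h11 h22 hk hl h12 h21 hx11 hy11 hx22 hy22 e11 e22 t12.1 t21.1
    · exact detour_edge' h11 hk h21 hx11 hy11 e11 t21.1
    · exact detour_detour h12 h21 hk hl.symm h11 h22 hx12 hy12 hx21 hy21 e12 e21 t11.1 t22.1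
    · exact detour_edge' h12 hk h22 hx12 hy12 e12 t22.1
    · exact S (detour_edge' h21 hk.symm h11 hx21 hy21 e21 t11.1)
    · exact S (detour_edge' h22 hk.symm h12 hx22 hy22 e22 t12.1)
    · exact detour_edge h11 hl h12 hx11 hy11 e11 t12.1
    · exact detour_edge'' h11 hx11 hy11 e11
    · exact detour_edge h12 hl.symm h11 hx12 hy12 e12 t11.1
    · exact detour_edge'' h12 hx12 hy12 e12
    · exact T h11 t11
    · exact T h12 t12
    · exact detour_edge h21 hl h22 hx21 hy21 e21 t22.1
    · exact detour_edge'' h21 hx21 hy21 e21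
    · exact detour_edge h22 hl.symm h21 hx22 hy22 e22 t21.1
    · exact detour_edge'' h22 hx22 hy22 e22
    · exact T h21 t21
    · exact T h22 t22

end Drw

/-! ### An extremal bound and sampling -/

/-- The Kővári–Sós–Turán bound for bipartite graphs without a four-cycle. -/
lemma c4_bound {L : ℕ} (R : Fin (L ^ 2) → Fin (L ^ 2) → Prop) [∀ x y, Decidable (R x y)]
    (hR : ∀ x x' y y', x ≠ x' → y ≠ y' → R x y → R x y' → R x' y → R x' y' → False) :
    ∑ x, ∑ y, (if R x y then 1 else 0) ≤ L ^ 3 + L ^ 2 := by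
  set e : ℕ := ∑ x, ∑ y, (if R x y then 1 else 0) with he
  have h1 : e ^ 2 ≤ L ^ 2 * ∑ x, (∑ y, (if R x y then 1 else 0)) ^ 2 := by
    have := sq_sum_le_card_mul_sum_sq (s := (Finset.univ : Finset (Fin (L ^ 2))))
      (f := fun x => ∑ y, (if R x y then 1 else 0 : ℕ))
    rwa [Finset.card_univ, Fintype.card_fin] at this
  have h2 : ∑ x, (∑ y, (if R x y then 1 else 0)) ^ 2 ≤ L ^ 2 * L ^ 2 + e := by
    calc ∑ x, (∑ y, (if R x y then 1 else 0)) ^ 2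
        = ∑ x, ∑ y, ∑ y', (if R x y ∧ R x y' then 1 else 0) := by
          refine Finset.sum_congr rfl fun x _ => ?_
          rw [sq, Finset.sum_mul_sum]
          refine Finset.sum_congr rfl fun y _ => Finset.sum_congr rfl fun y' _ => ?_
          by_cases h : R x y <;> by_cases h' : R x y' <;> simp [h, h']
      _ = ∑ y, ∑ y', ∑ x, (if R x y ∧ R x y' then 1 else 0) := by
          rw [Finset.sum_comm]
          exact Finset.sum_congr rfl fun y _ => Finset.sum_comm
      _ ≤ ∑ y, ∑ y', (1 + if y = y' then ∑ x, (if R x y then 1 else 0) else 0) := by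
          refine Finset.sum_le_sum fun y _ => Finset.sum_le_sum fun y' _ => ?_
          by_cases h : y = y'
          · subst h; simp
          · simp only [h, if_false, add_zero, ← Finset.card_filter]
            refine Finset.card_le_one.2 fun a ha b hb => by_contra fun hab => ?_
            simp only [Finset.mem_filter, Finset.mem_univ, true_and] at ha hb
            exact hR a b y y' hab h ha.1 ha.2 hb.1 hb.2
      _ = L ^ 2 * L ^ 2 + e := by
          simp only [Finset.sum_add_distrib, Finset.sum_ite_eq, Finset.mem_univ, if_true]
          rw [he, Finset.sum_comm (f := fun x y => if R x y then 1 else 0)]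
          simp
  by_contra hc
  push Not at hc
  have h3 : e ^ 2 ≤ L ^ 2 * (L ^ 2 * L ^ 2 + e) := h1.trans (Nat.mul_le_mul_left _ h2)
  obtain ⟨d, hd⟩ := Nat.exists_eq_add_of_lt hc
  rw [hd] at h3
  nlinarith [sq_nonneg L, Nat.zero_le (L ^ 3), Nat.zero_le d, Nat.zero_le (L ^ 3 * L ^ 2)]

/-- The number of functions with prescribed values on `S` is `M ^ (N - |S|)`. -/
lemma card_ext {N M : ℕ} (S : Finset (Fin N)) (g : Fin N → Fin M) :
    (∑ f : Fin N → Fin M, if ∀ v ∈ S, f v = g v then 1 else 0) * M ^ S.card = M ^ N := by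
  rw [← Finset.card_filter]
  have : (Finset.univ.filter fun f : Fin N → Fin M => ∀ v ∈ S, f v = g v) =
      Fintype.piFinset fun v => if v ∈ S then {g v} else Finset.univ := by
    ext f
    simp only [Finset.mem_filter, Finset.mem_univ, true_and, Fintype.mem_piFinset]
    refine forall_congr' fun v => ?_
    by_cases h : v ∈ S <;> simp [h]
  rw [this, Fintype.card_piFinset, ← Finset.prod_const,
    ← Finset.prod_filter_mul_prod_filter_not Finset.univ (· ∈ S)]
  have hS : (Finset.univ.filter fun v => v ∈ S) = S := by ext; simp
  rw [hS, Finset.prod_congr rfl (g := fun _ => 1) (fun v hv => by simp [hv]),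
    Finset.prod_congr (s₁ := Finset.univ.filter fun v => v ∉ S) rfl (g := fun _ => M)
      (fun v hv => by simp at hv; simp [hv])]
  rw [Finset.prod_const_one, one_mul, Finset.prod_const, Finset.prod_const, ← pow_add]
  congr 1
  have := Finset.card_filter_add_card_filter_not (s := (Finset.univ : Finset (Fin N))) (· ∈ S)
  rw [hS, Finset.card_univ, Fintype.card_fin] at this
  omega

/-- First moment argument: one vertex per block can be chosen avoiding all bad quadruples. -/
lemma sample {N L : ℕ} (hL : N ^ 4 * (L ^ 3 + L ^ 2) < L ^ 4)
    (B : Fin N → Fin N → Fin N → Fin N → Fin (L ^ 2) → Fin (L ^ 2) → Fin (L ^ 2) → Fin (L ^ 2) →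
      Prop)
    (hB : ∀ a b c d, Ind4 a b c d → ∀ i k, ∀ j j' l l', j ≠ j' → l ≠ l' → B a b c d i j k l →
      B a b c d i j k l' → B a b c d i j' k l → B a b c d i j' k l' → False) :
    ∃ f : Fin N → Fin (L ^ 2), ∀ a b c d, Ind4 a b c d → ¬ B a b c d (f a) (f b) (f c) (f d) := by
  classical
  by_contra hcon
  push Not at hcon
  have hL0 : 0 < L := by
    rcases Nat.eq_zero_or_pos L with h | h
    · simp [h] at hL
    · exact h
  set W : Finset (Fin N × Fin N × Fin N × Fin N) :=
    Finset.univ.filter fun w => Ind4 w.1 w.2.1 w.2.2.1 w.2.2.2 with hW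
  have hWc : W.card ≤ N ^ 4 := by
    refine (Finset.card_le_univ _).trans (le_of_eq ?_)
    simp; ring
  have h1 : (L ^ 2) ^ N ≤ ∑ w ∈ W, ∑ f : Fin N → Fin (L ^ 2),
      if B w.1 w.2.1 w.2.2.1 w.2.2.2 (f w.1) (f w.2.1) (f w.2.2.1) (f w.2.2.2) then 1 else 0 := by
    rw [Finset.sum_comm]
    calc (L ^ 2) ^ N = ∑ f : Fin N → Fin (L ^ 2), 1 := by simp
      _ ≤ _ := Finset.sum_le_sum fun f _ => by
        obtain ⟨a, b, c, d, h, hb⟩ := hcon f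
        refine le_trans ?_ (Finset.single_le_sum (fun _ _ => Nat.zero_le _)
          (show (a, b, c, d) ∈ W by simp [hW, h]))
        simp [hb]
  have h2 : ∀ w ∈ W, (∑ f : Fin N → Fin (L ^ 2),
      if B w.1 w.2.1 w.2.2.1 w.2.2.2 (f w.1) (f w.2.1) (f w.2.2.1) (f w.2.2.2) then 1 else 0) *
      (L ^ 2) ^ 4 ≤ (L ^ 2) ^ N * ((L ^ 2) ^ 2 * (L ^ 3 + L ^ 2)) := by
    rintro ⟨a, b, c, d⟩ hw
    have h : Ind4 a b c d := by simpa [hW] using hw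
    simp only
    have hS : ({a, b, c, d} : Finset (Fin N)).card = 4 := by
      rw [Finset.card_insert_of_notMem, Finset.card_insert_of_notMem, Finset.card_insert_of_notMem,
        Finset.card_singleton] <;> simp [h.ij, h.ik, h.il, h.jk, h.jl, h.kl]
    calc (∑ f : Fin N → Fin (L ^ 2), if B a b c d (f a) (f b) (f c) (f d) then 1 else 0) *
          (L ^ 2) ^ 4
        ≤ (∑ f : Fin N → Fin (L ^ 2), ∑ i, ∑ k, ∑ j, ∑ l, (if B a b c d i j k l then 1 else 0) *
          if (f a = i ∧ f b = j ∧ f c = k ∧ f d = l) then 1 else 0) * (L ^ 2) ^ 4 := by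
          refine Nat.mul_le_mul_right _ (Finset.sum_le_sum fun f _ => ?_)
          refine le_trans ?_ (Finset.single_le_sum (fun _ _ => Nat.zero_le _)
            (Finset.mem_univ (f a)))
          refine le_trans ?_ (Finset.single_le_sum (fun _ _ => Nat.zero_le _)
            (Finset.mem_univ (f c)))
          refine le_trans ?_ (Finset.single_le_sum (fun _ _ => Nat.zero_le _)
            (Finset.mem_univ (f b)))
          refine le_trans ?_ (Finset.single_le_sum (fun _ _ => Nat.zero_le _)
            (Finset.mem_univ (f d)))
          simp
      _ = ∑ i, ∑ k, ∑ j, ∑ l, (if B a b c d i j k l then 1 else 0) *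
          ((∑ f : Fin N → Fin (L ^ 2), if (f a = i ∧ f b = j ∧ f c = k ∧ f d = l) then 1 else 0) *
            (L ^ 2) ^ 4) := by
          rw [Finset.sum_comm, Finset.sum_mul]
          refine Finset.sum_congr rfl fun i _ => ?_
          rw [Finset.sum_comm, Finset.sum_mul]
          refine Finset.sum_congr rfl fun k _ => ?_
          rw [Finset.sum_comm, Finset.sum_mul]
          refine Finset.sum_congr rfl fun j _ => ?_
          rw [Finset.sum_comm, Finset.sum_mul]
          refine Finset.sum_congr rfl fun l _ => ?_
          rw [← Finset.mul_sum, mul_assoc]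
      _ = ∑ i, ∑ k, ∑ j, ∑ l, (if B a b c d i j k l then 1 else 0) * (L ^ 2) ^ N := by
          refine Finset.sum_congr rfl fun i _ => Finset.sum_congr rfl fun k _ =>
            Finset.sum_congr rfl fun j _ => Finset.sum_congr rfl fun l _ => ?_
          congr 1
          rw [← card_ext {a, b, c, d} (fun v => if v = a then i else if v = b then j else
            if v = c then k else l), hS]
          congr 1
          refine Finset.sum_congr rfl fun f _ => ?_
          simp [h.ij.symm, h.ik.symm, h.il.symm, h.jk.symm, h.jl.symm, h.kl.symm]
      _ = (∑ i, ∑ k, ∑ j, ∑ l, (if B a b c d i j k l then 1 else 0)) * (L ^ 2) ^ N := by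
          simp only [Finset.sum_mul]
      _ ≤ (∑ i : Fin (L ^ 2), ∑ k : Fin (L ^ 2), (L ^ 3 + L ^ 2)) * (L ^ 2) ^ N := by
          refine Nat.mul_le_mul_right _ (Finset.sum_le_sum fun i _ => Finset.sum_le_sum fun k _ => ?_)
          exact c4_bound _ (fun x x' y y' => hB a b c d h i k x x' y y')
      _ = _ := by simp; ring
  have h3 : (L ^ 2) ^ N * (L ^ 2) ^ 4 ≤ N ^ 4 * ((L ^ 2) ^ N * ((L ^ 2) ^ 2 * (L ^ 3 + L ^ 2))) := by
    refine (Nat.mul_le_mul_right _ h1).trans ?_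
    rw [Finset.sum_mul]
    refine (Finset.sum_le_sum h2).trans ?_
    rw [Finset.sum_const, smul_eq_mul]
    exact Nat.mul_le_mul_right _ hWc
  have h4 : 0 < (L ^ 2) ^ N * (L ^ 2) ^ 2 := by positivity
  have h5 := Nat.mul_lt_mul_of_pos_left hL h4
  refine absurd h3 (not_le.2 ?_)
  calc _ = (L ^ 2) ^ N * (L ^ 2) ^ 2 * (N ^ 4 * (L ^ 3 + L ^ 2)) := by ring
    _ < (L ^ 2) ^ N * (L ^ 2) ^ 2 * L ^ 4 := h5
    _ = _ := by ring

/-! ### From simple drawings to touch-free parametrised drawings -/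

/-- The identification of the plane with `ℂ`. -/
noncomputable def cpx (x : Pt) : ℂ := ⟨x.1, x.2⟩

lemma cpx_inj : Function.Injective cpx := fun x y h => by
  have := Complex.ext_iff.1 h
  exact Prod.ext this.1 this.2

lemma cpx_cont : Continuous cpx := by
  have : cpx = Complex.equivRealProdCLM.symm := by
    funext x
    apply Complex.ext <;> simp [cpx]
  rw [this]; exact Complex.equivRealProdCLM.symm.continuous

/-- Every simple drawing has a parametrization. -/
lemma exists_drw {n : ℕ} (D : SimpleDrawing n) : ∃ E : Drw (Fin n), ∀ i j, i ≠ j →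
    E.e i j '' Icc 0 1 = cpx '' D.arc i j := by
  have h : ∀ i j, ∃ f : ℝ → ℂ, Continuous f ∧ (i ≠ j → f 0 = cpx (D.vtx i) ∧ f 1 = cpx (D.vtx j) ∧
      InjOn f (Icc 0 1) ∧ f '' Icc 0 1 = cpx '' D.arc i j) := fun i j => by
    by_cases hij : i = j
    · exact ⟨fun _ => 0, continuous_const, fun h => absurd hij h⟩
    obtain ⟨f, cf, inf, f0, f1, fi⟩ := D.arc_simple i j hij
    have e : ∀ t ∈ Icc (0 : ℝ) 1, (fun t => cpx (f (clamp t))) t = cpx (f t) := fun t ht => by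
      simp only [clamp_of_mem ht]
    refine ⟨fun t => cpx (f (clamp t)), cpx_cont.comp (cf.comp_continuous clamp_cont clamp_mem),
      fun _ => ⟨?_, ?_, ?_, ?_⟩⟩
    · rw [e 0 (by simp), f0]
    · rw [e 1 (by simp), f1]
    · intro s hs t ht hst
      rw [e s hs, e t ht] at hst
      exact inf hs ht (cpx_inj hst)
    · rw [fi, image_congr e, image_image]
  choose F cF hF using h
  set e : Fin n → Fin n → ℝ → ℂ := fun i j => if i < j then F i j else if j < i then
    seg (F j i) 1 0 else fun _ => cpx (D.vtx i) with he
  have ss : ∀ f : ℝ → ℂ, seg (seg f 1 0) 1 0 = f := fun f => by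
    funext t; simp only [seg]; congr 1; ring
  have cont : ∀ i j, Continuous (e i j) := fun i j => by
    simp only [he]
    split_ifs
    exacts [cF _ _, seg_cont (cF _ _) _ _, continuous_const]
  have im : ∀ i j, i ≠ j → e i j '' Icc 0 1 = cpx '' D.arc i j := fun i j hij => by
    simp only [he]
    rcases lt_or_gt_of_ne hij with h | h
    · rw [if_pos h, (hF i j hij).2.2.2]
    · rw [if_neg h.not_gt, if_pos h, D.arc_symm, ← (hF j i hij.symm).2.2.2]
      ext z; constructor
      · rintro ⟨t, ht, rfl⟩; exact ⟨1 - t, Drw.sub_mem ht, by simp only [seg]; congr 1; ring⟩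
      · rintro ⟨t, ht, rfl⟩; exact ⟨1 - t, Drw.sub_mem ht, by simp only [seg]; congr 1; ring⟩
  have inj : ∀ i j, i ≠ j → InjOn (e i j) (Icc 0 1) := fun i j hij => by
    simp only [he]
    rcases lt_or_gt_of_ne hij with h | h
    · rw [if_pos h]; exact (hF i j hij).2.2.1
    · rw [if_neg h.not_gt, if_pos h]
      intro s hs t ht hst
      have := (hF j i hij.symm).2.2.1 (Drw.sub_mem hs) (Drw.sub_mem ht)
        (by simp only [seg] at hst; convert hst using 2 <;> ring)
      linarith
  have zero : ∀ i j, e i j 0 = cpx (D.vtx i) := fun i j => by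
    simp only [he]
    split_ifs with h h
    · exact (hF i j h.ne).1
    · rw [seg_zero]; exact (hF j i h.ne).2.1
    · rfl
  have one : ∀ i j, e i j 1 = cpx (D.vtx j) := fun i j => by
    simp only [he]
    split_ifs with h h'
    · exact (hF i j h.ne).2.1
    · rw [seg_one]; exact (hF j i h'.ne).1
    · rw [show i = j by omega]
  have rev : ∀ i j, e j i = seg (e i j) 1 0 := fun i j => by
    simp only [he]
    rcases lt_trichotomy i j with h | h | h
    · simp [h, h.not_gt]
    · subst h; simp only [lt_irrefl, if_false]; rfl
    · simp [h, h.not_gt, ss]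
  -- a common point of two edges is the image of a common point of the two arcs
  have pt : ∀ i j k l, i ≠ j → k ≠ l → ∀ s ∈ Icc (0 : ℝ) 1, ∀ t ∈ Icc (0 : ℝ) 1,
      e i j s = e k l t → ∃ x, x ∈ D.arc i j ∩ D.arc k l ∧ e i j s = cpx x :=
    fun i j k l hij hkl s hs t ht hst => by
      obtain ⟨x, hx, hx'⟩ : e i j s ∈ cpx '' D.arc i j := im i j hij ▸ mem_image_of_mem _ hs
      obtain ⟨y, hy, hy'⟩ : e k l t ∈ cpx '' D.arc k l := im k l hkl ▸ mem_image_of_mem _ ht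
      have : x = y := cpx_inj (by rw [hx', hy', hst])
      exact ⟨x, ⟨hx, this ▸ hy⟩, hx'.symm⟩
  refine ⟨⟨fun i => cpx (D.vtx i), e, cpx_inj.comp D.vtx_inj, cont, inj, zero, one, rev, ?_, ?_, ?_⟩,
    im⟩
  · intro i j k hij hki hkj t ht heq
    obtain ⟨x, hx, hx'⟩ : e i j t ∈ cpx '' D.arc i j := im i j hij ▸ mem_image_of_mem _ ht
    rw [heq] at hx'
    exact D.vtx_not_mem i j k hij hki hkj (cpx_inj hx' ▸ hx)
  · intro i j k hij hik hjk s hs t ht hst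
    obtain ⟨x, hx, hx'⟩ := pt i j i k hij hik s hs t ht hst
    rw [D.adj_inter i j k hij hik hjk, mem_singleton_iff] at hx
    rw [hx] at hx'
    exact ⟨inj i j hij hs (by simp) (by rw [hx', zero]),
      inj i k hik ht (by simp) (by rw [← hst, hx', zero])⟩
  · intro i j k l hij hkl hik hil hjk hjl s hs t ht s' hs' t' ht' h1 h2
    obtain ⟨x, hx, hx'⟩ := pt i j k l hij hkl s hs t ht h1
    obtain ⟨y, hy, hy'⟩ := pt i j k l hij hkl s' hs' t' ht' h2
    have := D.indep_inter i j k l hij hkl hik hil hjk hjl hx hy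
    subst this
    exact ⟨inj i j hij hs hs' (hx'.trans hy'.symm),
      inj k l hkl ht ht' (by rw [← h1, ← h2, hx', hy'])⟩

namespace Drw

/-- The subdrawing on a subset of the vertices. -/
def comap {V W : Type} (D : Drw V) (g : W → V) (hg : Function.Injective g) : Drw W where
  p i := D.p (g i)
  e i j := D.e (g i) (g j)
  p_inj := D.p_inj.comp hg
  cont _ _ := D.cont _ _
  inj _ _ h := D.inj _ _ (hg.ne h)
  zero _ _ := D.zero _ _
  one _ _ := D.one _ _
  rev _ _ := D.rev _ _
  off _ _ _ h1 h2 h3 := D.off _ _ _ (hg.ne h1) (hg.ne h2) (hg.ne h3)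
  adj _ _ _ h1 h2 h3 := D.adj _ _ _ (hg.ne h1) (hg.ne h2) (hg.ne h3)
  ind _ _ _ _ h1 h2 h3 h4 h5 h6 := D.ind _ _ _ _ (hg.ne h1) (hg.ne h2) (hg.ne h3) (hg.ne h4)
    (hg.ne h5) (hg.ne h6)

/-- A drawing in which no two independent edges touch. -/
def NoTouch {V : Type} (D : Drw V) : Prop := ∀ i j k l, Ind4 i j k l → ¬ D.Touch i j k l

/-- A drawing with many vertices has a touch-free subdrawing on `N` vertices. The vertices are split
into `N` blocks of size `L ^ 2` with `L = 3 * N ^ 4`, and one vertex is chosen from each block: for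
fixed blocks, only about `1 / L` of the quadruples touch by `touch_C4` and `c4_bound`. -/
lemma exists_noTouch {n N : ℕ} (D : Drw (Fin n)) (hN : 0 < N) (hn : 9 * N ^ 9 ≤ n) :
    ∃ (g : Fin N → Fin n) (hg : Function.Injective g), (D.comap g hg).NoTouch := by
  set L := 3 * N ^ 4 with hL
  have hn' : N * L ^ 2 ≤ n := by rw [hL]; convert hn using 1; ring
  set b : Fin N → Fin (L ^ 2) → Fin n := fun a i => Fin.castLE hn' (finProdFinEquiv (a, i)) with hb
  have bi : ∀ {a i a' i'}, b a i = b a' i' → a = a' ∧ i = i' := fun {a i a' i'} h => by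
    have := finProdFinEquiv.injective (Fin.castLE_injective hn' h)
    simpa using this
  have hI : ∀ {a c d f : Fin N} (i j k l), Ind4 a c d f → Ind4 (b a i) (b c j) (b d k) (b f l) :=
    fun i j k l h => ⟨fun e => h.ij (bi e).1, fun e => h.kl (bi e).1, fun e => h.ik (bi e).1,
      fun e => h.il (bi e).1, fun e => h.jk (bi e).1, fun e => h.jl (bi e).1⟩
  obtain ⟨f, hf⟩ := sample (N := N) (L := L) (by
      have h1 : 0 < N ^ 4 := by positivity
      have h3 : N ^ 4 * (L + 1) < L ^ 2 := by rw [hL]; nlinarith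
      calc N ^ 4 * (L ^ 3 + L ^ 2) = L ^ 2 * (N ^ 4 * (L + 1)) := by ring
        _ < L ^ 2 * L ^ 2 := Nat.mul_lt_mul_of_pos_left h3 (by positivity)
        _ = L ^ 4 := by ring)
    (fun a c d f i j k l => D.Touch (b a i) (b c j) (b d k) (b f l))
    (fun a c d f h i k j j' l l' hj hl t1 t2 t3 t4 =>
      touch_C4 (hI i j k l h) (hI i j k l' h) (hI i j' k l h) (hI i j' k l' h)
        (fun e => hj (bi e).2) (fun e => hl (bi e).2) t1 t2 t3 t4)
  exact ⟨fun a => b a (f a), fun a a' h => (bi h).1, fun i j k l h ht => hf i j k l h ht⟩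

/-- The distinct vertices `w 0, …, w m` span a path with `m` edges, no two nonconsecutive edges of
which have a nonzero algebraic intersection. The values `w a` for `a > m` are irrelevant. -/
def PlaneSeq {V : Type} (D : Drw V) (m : ℕ) (w : ℕ → V) : Prop :=
  (∀ a b, a ≤ m → b ≤ m → w a = w b → a = b) ∧
    ∀ a b, a + 1 < b → b < m → D.I (w a) (w (a + 1)) (w b) (w (b + 1)) = 0

end Drw

open Drw in
/-- A path in a touch-free subdrawing is a plane path in the drawing. -/
lemma plane_transfer {n N m : ℕ} (D : SimpleDrawing n) {E : Drw (Fin n)}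
    (hE : ∀ i j, i ≠ j → E.e i j '' Icc 0 1 = cpx '' D.arc i j) {g : Fin N → Fin n}
    (hg : Function.Injective g) (hT : (E.comap g hg).NoTouch) {w : ℕ → Fin N}
    (hw : (E.comap g hg).PlaneSeq m w) :
    ∃ w' : Fin (m + 1) → Fin n, Function.Injective w' ∧
      ∀ (a b : ℕ) (ha : a + 1 < m + 1) (hb : b + 1 < m + 1), a ≠ b →
          ¬ D.Crosses (w' ⟨a, by omega⟩) (w' ⟨a + 1, ha⟩)
              (w' ⟨b, by omega⟩) (w' ⟨b + 1, hb⟩) := by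
  refine ⟨fun i => g (w i), fun i j h => ?_, ?_⟩
  · exact Fin.ext (hw.1 _ _ (by omega) (by omega) (hg h))
  have ne : ∀ {a b}, a ≤ m → b ≤ m → a ≠ b → g (w a) ≠ g (w b) := fun ha hb hab h =>
    hab (hw.1 _ _ ha hb (hg h))
  have main : ∀ a b, a < b → b < m → ¬ D.Crosses (g (w a)) (g (w (a + 1))) (g (w b))
      (g (w (b + 1))) := by
    rintro a b hab hbm ⟨x, hx1, hx2, hx3⟩
    rcases Nat.lt_or_ge (a + 1) b with h | h
    · have h4 : Ind4 (w a) (w (a + 1)) (w b) (w (b + 1)) := by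
        constructor <;> exact fun e => absurd (hw.1 _ _ (by omega) (by omega) e) (by omega)
      have hd : Disj (E.e (g (w a)) (g (w (a + 1)))) (E.e (g (w b)) (g (w (b + 1)))) := by
        by_contra hd
        exact hT _ _ _ _ h4 ⟨hw.2 a b h hbm, hd⟩
      obtain ⟨s, hs, hs'⟩ := (hE _ _ (ne (a := a) (b := a + 1) (by omega) (by omega) (by omega))).symm ▸
        mem_image_of_mem cpx hx1
      obtain ⟨t, ht, ht'⟩ := (hE _ _ (ne (a := b) (b := b + 1) (by omega) (by omega) (by omega))).symm ▸
        mem_image_of_mem cpx hx2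
      exact hd s hs t ht (hs'.trans ht'.symm)
    · obtain rfl : b = a + 1 := by omega
      have : x ∈ D.arc (g (w (a + 1))) (g (w a)) ∩ D.arc (g (w (a + 1))) (g (w (a + 1 + 1))) :=
        ⟨D.arc_symm _ _ ▸ hx1, hx2⟩
      rw [D.adj_inter _ _ _ (ne (by omega) (by omega) (by omega))
        (ne (by omega) (by omega) (by omega)) (ne (by omega) (by omega) (by omega))] at this
      exact hx3 ⟨Or.inr this, Or.inl this⟩
  intro a b ha hb hab
  rcases lt_or_gt_of_ne hab with h | h
  · exact main a b h (by omega)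
  · rintro ⟨x, hx1, hx2, hx3⟩
    exact main b a h (by omega) ⟨x, hx2, hx1, fun h => hx3 h.symm⟩

/-! ### Triangles and quadrilaterals crossed by a path -/

lemma cat_inj {f g : ℝ → ℂ} (hf : InjOn f (Icc 0 1)) (hg : InjOn g (Icc 0 1))
    (h : ∀ s ∈ Icc (0 : ℝ) 1, ∀ t ∈ Icc (0 : ℝ) 1, f s = g t → s = 1 ∧ t = 0) :
    InjOn (cat f g) (Icc 0 1) := by
  intro s hs t ht he
  unfold cat at he
  have m1 : ∀ {s : ℝ}, s ∈ Icc (0 : ℝ) 1 → s ≤ 1 / 2 → 2 * s ∈ Icc (0 : ℝ) 1 := fun hs h =>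
    ⟨by linarith [hs.1], by linarith⟩
  have m2 : ∀ {s : ℝ}, s ∈ Icc (0 : ℝ) 1 → ¬ s ≤ 1 / 2 → 2 * s - 1 ∈ Icc (0 : ℝ) 1 := fun hs h =>
    ⟨by linarith, by linarith [hs.2]⟩
  split_ifs at he with h1 h2 h2
  · have := hf (m1 hs h1) (m1 ht h2) he; linarith
  · have := h _ (m1 hs h1) _ (m2 ht h2) he; linarith [this.2]
  · have := h _ (m1 ht h2) _ (m2 hs h1) he.symm; linarith [this.2]
  · have := hg (m2 hs h1) (m2 ht h2) he; linarith

lemma cat_disj {f g h : ℝ → ℂ} (h1 : Disj f h) (h2 : Disj g h) : Disj (cat f g) h := by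
  intro s hs t ht he
  rcases cat_mem (f := f) (g := g) hs with ⟨u, hu, e⟩ | ⟨u, hu, e⟩ <;> rw [e] at he
  · exact h1 u hu t ht he
  · exact h2 u hu t ht he

/-- The path `g` meets `f` exactly once, at the parameter `x` of `f`, with sign `+1`. -/
def PosAt (g f : ℝ → ℂ) (x : ℝ) : Prop :=
  x ∈ Ioo (0 : ℝ) 1 ∧ itx g f = 2 * Real.pi ∧ ∃ x' ∈ Ioo (0 : ℝ) 1, g x' = f x ∧
    ∀ s ∈ Icc (0 : ℝ) 1, ∀ t ∈ Icc (0 : ℝ) 1, g t = f s → t = x' ∧ s = x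

lemma PosAt.off {g f : ℝ → ℂ} {x : ℝ} (h : PosAt g f x) : Off g (f 0) ∧ Off g (f 1) := by
  obtain ⟨hx, -, x', hx', hX, hu⟩ := h
  exact ⟨fun t ht he => hx.1.ne (hu 0 (by simp) t ht he).2,
    fun t ht he => hx.2.ne' (hu 1 (by simp) t ht he).2⟩

lemma Disj.off {g f : ℝ → ℂ} (h : Disj g f) : Off g (f 0) ∧ Off g (f 1) :=
  ⟨fun t ht => h t ht 0 (by simp), fun t ht => h t ht 1 (by simp)⟩

lemma PosAt.cat_left {a b f : ℝ → ℂ} {x : ℝ} (ca : Continuous a) (cb : Continuous b)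
    (cf : Continuous f) (hab : a 1 = b 0) (hi : InjOn (cat a b) (Icc 0 1)) (h : PosAt a f x)
    (hd : Disj b f) : PosAt (cat a b) f x := by
  obtain ⟨o0, o1⟩ := h.off
  obtain ⟨hx, hI, x', hx', hX, hu⟩ := h
  have hm : x' / 2 ∈ Ioo (0 : ℝ) 1 := ⟨by linarith [hx'.1], by linarith [hx'.1, hx'.2]⟩
  have hc : cat a b (x' / 2) = a x' := by
    unfold cat; rw [if_pos (by linarith [hx'.2])]; congr 1; ring
  refine ⟨hx, ?_, x' / 2, hm, hc.trans hX, fun s hs t ht he => ?_⟩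
  · rw [itx_cat ca cb hab o0 o1 hd.off.1 hd.off.2, hI, itx_disj cb cf hd, add_zero]
  · rcases cat_mem (f := a) (g := b) ht with ⟨u, hu', e⟩ | ⟨u, hu', e⟩
    · obtain ⟨h1, h2⟩ := hu s hs u hu' (e ▸ he)
      exact ⟨hi ht ⟨hm.1.le, hm.2.le⟩ (by rw [e, hc, h1]), h2⟩
    · exact absurd (e ▸ he) (hd u hu' s hs)

lemma PosAt.cat_right {a b f : ℝ → ℂ} {x : ℝ} (ca : Continuous a) (cb : Continuous b)
    (cf : Continuous f) (hab : a 1 = b 0) (hi : InjOn (cat a b) (Icc 0 1)) (h : PosAt b f x)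
    (hd : Disj a f) : PosAt (cat a b) f x := by
  obtain ⟨o0, o1⟩ := h.off
  obtain ⟨hx, hI, x', hx', hX, hu⟩ := h
  have hm : (x' + 1) / 2 ∈ Ioo (0 : ℝ) 1 := ⟨by linarith [hx'.1], by linarith [hx'.1, hx'.2]⟩
  have hc : cat a b ((x' + 1) / 2) = b x' := by
    unfold cat; rw [if_neg (by linarith [hx'.1])]; congr 1; ring
  refine ⟨hx, ?_, (x' + 1) / 2, hm, hc.trans hX, fun s hs t ht he => ?_⟩
  · rw [itx_cat ca cb hab hd.off.1 hd.off.2 o0 o1, hI, itx_disj ca cf hd, zero_add]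
  · rcases cat_mem (f := a) (g := b) ht with ⟨u, hu', e⟩ | ⟨u, hu', e⟩
    · exact absurd (e ▸ he) (hd u hu' s hs)
    · obtain ⟨h1, h2⟩ := hu s hs u hu' (e ▸ he)
      exact ⟨hi ht ⟨hm.1.le, hm.2.le⟩ (by rw [e, hc, h1]), h2⟩

/-- `cycle_false` in terms of `PosAt`. -/
lemma cycle_false' {g1 g2 f : ℝ → ℂ} (c1 : Continuous g1) (c2 : Continuous g2) (cf : Continuous f)
    (i1 : InjOn g1 (Icc 0 1)) (i2 : InjOn g2 (Icc 0 1)) (i3 : InjOn f (Icc 0 1))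
    (e1 : g1 1 = g2 0) (e2 : g2 1 = g1 0)
    (h12 : ∀ s ∈ Icc (0 : ℝ) 1, ∀ t ∈ Icc (0 : ℝ) 1, g1 s = g2 t → (s = 0 ∧ t = 1) ∨ (s = 1 ∧ t = 0))
    {x y : ℝ} (h1 : PosAt g1 f x) (h2 : PosAt g2 f y) : False := by
  obtain ⟨hx, hI, x', hx', hX, hu⟩ := h1
  obtain ⟨hy, hJ, y', hy', hY, hv⟩ := h2
  exact cycle_false c1 c2 cf i1 i2 i3 e1 e2 h12 hx hx' hy hy' hX hY hu hv hI hJ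

namespace Drw

variable {V : Type} {D : Drw V}

lemma Ind4_rot {i j k l : V} (h : Ind4 i j k l) : Ind4 j k l i :=
  ⟨h.jk, h.il.symm, h.jl, h.ij.symm, h.kl, h.ik.symm⟩

/-- A path cannot cross two sides of a triangle in the same direction and avoid the third side. -/
lemma cyc3 {a b c : V} (hab : a ≠ b) (hbc : b ≠ c) (hca : c ≠ a) {f : ℝ → ℂ} (cf : Continuous f)
    (hf : InjOn f (Icc 0 1)) {x y : ℝ} (h1 : PosAt (D.e a b) f x) (h2 : PosAt (D.e b c) f y)
    (h3 : Disj (D.e c a) f) : False := by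
  have E := D.cont
  have e1 : D.e b c 1 = D.e c a 0 := by rw [D.one, D.zero]
  have hi := cat_inj (D.inj b c hbc) (D.inj c a hca) (fun s hs t ht he =>
    adj_mid hbc.symm hca hab.symm hs ht he)
  refine cycle_false' (E _ _) (cat_cont (E _ _) (E _ _) e1) cf (D.inj _ _ hab) hi hf
    (by rw [cat_zero, D.one, D.zero]) (by rw [cat_one, D.one, D.zero]) ?_ h1
    (h2.cat_left (E _ _) (E _ _) cf e1 hi h3)
  intro s hs t ht he
  rcases cat_mem (f := D.e b c) (g := D.e c a) ht with ⟨u, hu, e⟩ | ⟨u, hu, e⟩ <;> rw [e] at he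
  · obtain ⟨rfl, rfl⟩ := adj_mid hab.symm hbc hca.symm hs hu he
    exact Or.inr ⟨rfl, hi ht (by simp) (by rw [e, cat_zero])⟩
  · obtain ⟨rfl, rfl⟩ := adj_mid hca.symm hab hbc.symm hu hs he.symm
    exact Or.inl ⟨rfl, hi ht (by simp) (by rw [e, cat_one])⟩

/-- A path cannot cross exactly two sides of a simple quadrilateral, both in the same direction. -/
lemma cyc4 {i j k l : V} (h : Ind4 i j k l) (d1 : Disj (D.e i j) (D.e k l))
    (d2 : Disj (D.e j k) (D.e l i)) {f : ℝ → ℂ} (cf : Continuous f)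
    (hf : InjOn f (Icc 0 1)) {x y : ℝ} (h1 : PosAt (D.e i j) f x)
    (h2 : (PosAt (D.e j k) f y ∧ Disj (D.e k l) f) ∨ (Disj (D.e j k) f ∧ PosAt (D.e k l) f y))
    (h3 : Disj (D.e l i) f) : False := by
  have E := D.cont
  have e1 : D.e k l 1 = D.e l i 0 := by rw [D.one, D.zero]
  have e2 : D.e j k 1 = cat (D.e k l) (D.e l i) 0 := by rw [cat_zero, D.one, D.zero]
  have hi1 := cat_inj (D.inj k l h.kl) (D.inj l i h.il.symm) (fun s hs t ht he =>
    adj_mid h.kl.symm h.il.symm h.ik.symm hs ht he)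
  have hi := cat_inj (D.inj j k h.jk) hi1 (fun s hs t ht he => by
    rcases cat_mem (f := D.e k l) (g := D.e l i) ht with ⟨u, hu, e⟩ | ⟨u, hu, e⟩ <;> rw [e] at he
    · obtain ⟨rfl, rfl⟩ := adj_mid h.jk.symm h.kl h.jl hs hu he
      exact ⟨rfl, hi1 ht (by simp) (by rw [e, cat_zero])⟩
    · exact absurd he (d2 s hs u hu))
  have c1 := cat_cont (E _ _) (E _ _) e1
  refine cycle_false' (E _ _) (cat_cont (E _ _) c1 e2) cf (D.inj _ _ h.ij) hi hf
    (by rw [cat_zero, D.one, D.zero]) (by rw [cat_one, cat_one, D.one, D.zero]) ?_ h1 (y := y) ?_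
  · intro s hs t ht he
    rcases cat_mem (f := D.e j k) (g := cat (D.e k l) (D.e l i)) ht with ⟨u, hu, e⟩ | ⟨u, hu, e⟩ <;>
      rw [e] at he
    · obtain ⟨rfl, rfl⟩ := adj_mid h.ij.symm h.jk h.ik hs hu he
      exact Or.inr ⟨rfl, hi ht (by simp) (by rw [e, cat_zero])⟩
    rcases cat_mem (f := D.e k l) (g := D.e l i) hu with ⟨u', hu', e'⟩ | ⟨u', hu', e'⟩ <;>
      rw [e'] at he
    · exact absurd he (d1 s hs u' hu')
    · obtain ⟨rfl, rfl⟩ := adj_mid h.il h.ij h.jl.symm hu' hs he.symm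
      exact Or.inl ⟨rfl, hi ht (by simp) (by rw [e, e', cat_one, cat_one])⟩
  · rcases h2 with ⟨h2, h4⟩ | ⟨h2, h4⟩
    · exact h2.cat_left (E _ _) c1 cf e2 hi (cat_disj h4 h3)
    · exact (h4.cat_left (E _ _) (E _ _) cf e1 hi1 h3).cat_right (E _ _) c1 cf e2 hi h2

lemma posAt_edge {i j k l : V} (h : Ind4 i j k l) (hI : D.I i j k l = 2 * Real.pi) :
    ∃ x, PosAt (D.e i j) (D.e k l) x := by
  obtain ⟨s, hs, t, ht, he⟩ := exists_meet (D := D) (i := i) (j := j) (k := k) (l := l)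
    (by rw [hI]; positivity)
  exact ⟨t, mem_Ioo h.swap ht hs he.symm, hI, s, mem_Ioo h hs ht he, he,
    fun t' ht' s' hs' he' => ind' h hs ht he s' hs' t' ht' he'⟩

end Drw

/-- A crossing is inherited by every sub-path of `f` containing it. -/
lemma PosAt.window {g f : ℝ → ℂ} {x a b : ℝ} (cg : Continuous g) (cf : Continuous f)
    (h : PosAt g f x) (ha : 0 ≤ a) (hax : a < x) (hxb : x < b) (hb : b ≤ 1) :
    PosAt g (seg f a b) ((x - a) / (b - a)) := by
  have hab : 0 < b - a := by linarith
  have hIc : ∀ u ∈ Icc (0 : ℝ) 1, a + u * (b - a) ∈ Icc (0 : ℝ) 1 := fun u hu =>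
    uIcc_subset_Icc ⟨ha, by linarith⟩ ⟨by linarith, hb⟩ (seg_param_mem hu)
  obtain ⟨o0, o1⟩ := h.off
  obtain ⟨hx, hI, x', hx', hX, hu⟩ := h
  have hxa : a + (x - a) / (b - a) * (b - a) = x := by field_simp; ring
  refine ⟨⟨by apply div_pos <;> linarith, by rw [div_lt_one hab]; linarith⟩, ?_, x', hx', ?_, ?_⟩
  · have m0 : (0 : ℝ) ∈ Icc (0 : ℝ) 1 := by simp
    have m1 : (1 : ℝ) ∈ Icc (0 : ℝ) 1 := by simp
    have := (itx_seg_cases cf cg (x := x) (a := a) (b := b)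
      (fun s hs t ht he => (hu s hs t ht he.symm).2)
      (fun s hs he => hx'.1.ne (hu s hs 0 m0 he.symm).1)
      (fun s hs he => hx'.2.ne' (hu s hs 1 m1 he.symm).1) ⟨ha, by linarith⟩ ⟨by linarith, hb⟩).2.1
      hax hxb
    rw [itx_swap, this, ← itx_swap, hI]
  · simp only [seg]; rw [hxa, hX]
  · intro s hs t ht he
    obtain ⟨h1, h2⟩ := hu _ (hIc s hs) t ht he
    refine ⟨h1, ?_⟩
    rw [eq_div_iff hab.ne']; linarith

lemma disj_window {g f : ℝ → ℂ} {x a b : ℝ} (h : ∀ s ∈ Icc (0 : ℝ) 1, ∀ t ∈ Icc (0 : ℝ) 1,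
    g t = f s → s = x) (ha : 0 ≤ a) (hab : a < b) (hb : b ≤ 1) (hx : x ∉ Icc a b) :
    Disj g (seg f a b) := by
  intro t ht s hs he
  have hm := seg_param_mem (a := a) (b := b) hs
  rw [uIcc_of_le hab.le] at hm
  have := h _ ⟨ha.trans hm.1, hm.2.trans hb⟩ t ht he
  exact hx (this ▸ hm)

lemma seg_inj {f : ℝ → ℂ} (hf : InjOn f (Icc 0 1)) {a b : ℝ} (ha : 0 ≤ a) (hab : a < b)
    (hb : b ≤ 1) : InjOn (seg f a b) (Icc 0 1) := by
  have hIc : ∀ u ∈ Icc (0 : ℝ) 1, a + u * (b - a) ∈ Icc (0 : ℝ) 1 := fun u hu =>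
    uIcc_subset_Icc ⟨ha, by linarith⟩ ⟨by linarith, hb⟩ (seg_param_mem hu)
  intro s hs t ht he
  have := hf (hIc s hs) (hIc t ht) he
  exact mul_right_cancel₀ (sub_ne_zero.2 hab.ne') (by linarith)

/-- An interval `[p, q]` avoiding `z` and `y` can be slightly enlarged. -/
lemma window_aux {p q z y : ℝ} (hp : p ∈ Ioo (0 : ℝ) 1) (hq : q ∈ Ioo (0 : ℝ) 1)
    (hz : z ∉ Icc p q) (hy : y ∉ Icc p q) : ∃ a b, 0 ≤ a ∧ a < p ∧ q < b ∧ b ≤ 1 ∧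
      z ∉ Icc a b ∧ y ∉ Icc a b := by
  have key : ∀ z, z ∉ Icc p q → ∃ ε > 0, ∀ δ ≤ ε, z ∉ Icc (p - δ) (q + δ) := fun z hz => by
    by_cases h : z < p
    · exact ⟨(p - z) / 2, by linarith, fun δ hδ hm => by linarith [hm.1]⟩
    · have : q < z := by
        by_contra hc
        exact hz ⟨not_lt.1 h, not_lt.1 hc⟩
      exact ⟨(z - q) / 2, by linarith, fun δ hδ hm => by linarith [hm.2]⟩
  obtain ⟨e1, h1, h1'⟩ := key z hz
  obtain ⟨e2, h2, h2'⟩ := key y hy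
  have h3 := hp.1
  have h4 := hq.2
  set δ := min (min e1 e2) (min p (1 - q)) with hδ
  have hδ0 : 0 < δ := lt_min (lt_min h1 h2) (lt_min h3 (by linarith))
  have i1 : δ ≤ e1 := (min_le_left _ _).trans (min_le_left _ _)
  have i2 : δ ≤ e2 := (min_le_left _ _).trans (min_le_right _ _)
  have i3 : δ ≤ p := (min_le_right _ _).trans (min_le_left _ _)
  have i4 : δ ≤ 1 - q := (min_le_right _ _).trans (min_le_right _ _)
  exact ⟨p - δ, q + δ, by linarith, by linarith, by linarith, by linarith, h1' _ i1, h2' _ i2⟩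

/-- Among three points and a forbidden one, some interval contains exactly two of the points. -/
lemma window3 {x1 x2 x3 y : ℝ} (h1 : x1 ∈ Ioo (0 : ℝ) 1) (h2 : x2 ∈ Ioo (0 : ℝ) 1)
    (h3 : x3 ∈ Ioo (0 : ℝ) 1) (h12 : x1 ≠ x2) (h13 : x1 ≠ x3) (h23 : x2 ≠ x3) (hy2 : y ≠ x2)
    (hy1 : y ≠ x1) (hy3 : y ≠ x3) :
    ∃ a b, 0 ≤ a ∧ a < b ∧ b ≤ 1 ∧ y ∉ Icc a b ∧
      ((x1 ∈ Ioo a b ∧ x2 ∈ Ioo a b ∧ x3 ∉ Icc a b) ∨ (x2 ∈ Ioo a b ∧ x3 ∈ Ioo a b ∧ x1 ∉ Icc a b) ∨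
        (x1 ∈ Ioo a b ∧ x3 ∈ Ioo a b ∧ x2 ∉ Icc a b)) := by
  have key : ∀ {x1 x2 x3 : ℝ}, x1 ∈ Ioo (0 : ℝ) 1 → x2 ∈ Ioo (0 : ℝ) 1 → x3 ∈ Ioo (0 : ℝ) 1 →
      x1 < x2 → x2 < x3 → y ≠ x2 → ∃ a b, 0 ≤ a ∧ a < b ∧ b ≤ 1 ∧ y ∉ Icc a b ∧
      ((x1 ∈ Ioo a b ∧ x2 ∈ Ioo a b ∧ x3 ∉ Icc a b) ∨
        (x2 ∈ Ioo a b ∧ x3 ∈ Ioo a b ∧ x1 ∉ Icc a b)) := by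
    intro x1 x2 x3 h1 h2 h3 h12 h23 hy
    by_cases hc : y ∈ Icc x1 x2
    · obtain ⟨a, b, ha, hp, hq, hb, hz, hy'⟩ := window_aux (y := y) (z := x1) h2 h3
        (fun h => by linarith [h.1]) (fun h => hy (le_antisymm hc.2 h.1))
      exact ⟨a, b, ha, by linarith, hb, hy', Or.inr ⟨⟨hp, by linarith⟩, ⟨by linarith, hq⟩, hz⟩⟩
    · obtain ⟨a, b, ha, hp, hq, hb, hz, hy'⟩ := window_aux (y := y) (z := x3) h1 h2
        (fun h => by linarith [h.2]) hc
      exact ⟨a, b, ha, by linarith, hb, hy', Or.inl ⟨⟨hp, by linarith⟩, ⟨by linarith, hq⟩, hz⟩⟩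
  rcases lt_or_gt_of_ne h12 with i12 | i12 <;> rcases lt_or_gt_of_ne h13 with i13 | i13 <;>
    rcases lt_or_gt_of_ne h23 with i23 | i23
  · obtain ⟨a, b, ha, hab, hb, hy, h⟩ := key h1 h2 h3 i12 i23 hy2
    exact ⟨a, b, ha, hab, hb, hy, by tauto⟩
  · obtain ⟨a, b, ha, hab, hb, hy, h⟩ := key h1 h3 h2 i13 i23 hy3
    exact ⟨a, b, ha, hab, hb, hy, by tauto⟩
  · linarith
  · obtain ⟨a, b, ha, hab, hb, hy, h⟩ := key h3 h1 h2 i13 i12 hy1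
    exact ⟨a, b, ha, hab, hb, hy, by tauto⟩
  · obtain ⟨a, b, ha, hab, hb, hy, h⟩ := key h2 h1 h3 i12 i13 hy1
    exact ⟨a, b, ha, hab, hb, hy, by tauto⟩
  · linarith
  · obtain ⟨a, b, ha, hab, hb, hy, h⟩ := key h2 h3 h1 i23 i13 hy3
    exact ⟨a, b, ha, hab, hb, hy, by tauto⟩
  · obtain ⟨a, b, ha, hab, hb, hy, h⟩ := key h3 h2 h1 i23 i12 hy2
    exact ⟨a, b, ha, hab, hb, hy, by tauto⟩

/-! ### The order of the vertices along an edge and plane paths -/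

namespace Drw

variable {V : Type} {D : Drw V}

lemma NoTouch.disj (hT : D.NoTouch) {i j k l : V} (h : Ind4 i j k l) (hI : D.I i j k l = 0) :
    Disj (D.e i j) (D.e k l) := by
  by_contra hd
  exact hT _ _ _ _ h ⟨hI, hd⟩

/-- `s` precedes `s'` with respect to the edge `vw`: the edge `ss'` crosses `vw` with sign `+1`. -/
def Prec (D : Drw V) (v w s s' : V) : Prop := Ind4 s s' v w ∧ D.I s s' v w = 2 * Real.pi

lemma two_pi_ne : (2 * Real.pi : ℝ) ≠ -(2 * Real.pi) := by
  have := Real.pi_pos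
  intro h; linarith

/-- A path crosses two edges with a common endpoint at different parameters. -/
lemma PosAt_ne {a b c : V} (hab : a ≠ b) (hbc : b ≠ c) (hac : a ≠ c) {f : ℝ → ℂ} {x y : ℝ}
    (h1 : PosAt (D.e a b) f x) (h2 : PosAt (D.e b c) f y) : x ≠ y := by
  rintro rfl
  obtain ⟨-, -, x1, hx1, e1, -⟩ := h1
  obtain ⟨-, -, x2, hx2, e2, -⟩ := h2
  have := adj_mid hab.symm hbc hac ⟨hx1.1.le, hx1.2.le⟩ ⟨hx2.1.le, hx2.2.le⟩ (e1.trans e2.symm)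
  exact hx1.2.ne this.1

lemma _root_.PlanePath.PosAt.only {g f : ℝ → ℂ} {x : ℝ} (h : PosAt g f x) : ∀ s ∈ Icc (0 : ℝ) 1,
    ∀ t ∈ Icc (0 : ℝ) 1, g t = f s → s = x := by
  obtain ⟨-, -, x', -, -, hu⟩ := h
  exact fun s hs t ht he => (hu s hs t ht he).2

lemma _root_.PlanePath.PosAt.ne_of_disj {g g' f : ℝ → ℂ} {x y : ℝ} (h : PosAt g f x) (h' : PosAt g' f y)
    (hd : Disj g g') : x ≠ y := by
  rintro rfl
  obtain ⟨-, -, x1, hx1, e1, -⟩ := h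
  obtain ⟨-, -, x2, hx2, e2, -⟩ := h'
  exact hd x1 ⟨hx1.1.le, hx1.2.le⟩ x2 ⟨hx2.1.le, hx2.2.le⟩ (e1.trans e2.symm)

/-- Transitivity of `Prec`: if `vw` crosses `ab` and `bc` with sign `+1`, then it crosses `ac` with
sign `+1`. Otherwise it crosses exactly two sides of the triangle `abc` in the same direction, or all
three, and in the latter case a part of it crosses exactly two. -/
lemma Prec.trans (hT : D.NoTouch) {v w a b c : V} (h1 : D.Prec v w a b) (h2 : D.Prec v w b c) :
    D.Prec v w a c := by
  obtain ⟨h1, i1⟩ := h1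
  obtain ⟨h2, i2⟩ := h2
  have hac : a ≠ c := by
    rintro rfl
    rw [I_rev h1, i1] at i2
    exact two_pi_ne i2.symm
  have h3 : Ind4 c a v w := ⟨hac.symm, h1.kl, h2.jk, h2.jl, h1.ik, h1.il⟩
  obtain ⟨x1, p1⟩ := posAt_edge h1 i1
  obtain ⟨x2, p2⟩ := posAt_edge h2 i2
  have cf := D.cont v w
  have hf := D.inj v w h1.kl
  refine ⟨h3.rev, ?_⟩
  rcases I_values (D := D) h3 with h | h | h
  · exact (cyc3 h1.ij h2.ij h3.ij cf hf p1 p2 (hT.disj h3 h)).elim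
  · obtain ⟨x3, p3⟩ := posAt_edge h3 h
    have y0 : ∀ {x}, x ∈ Ioo (0 : ℝ) 1 → (-1 : ℝ) ≠ x := fun hx => by
      rintro rfl; linarith [hx.1]
    obtain ⟨α, β, hα, hαβ, hβ, -, hh⟩ := window3 (y := -1) p1.1 p2.1 p3.1
      (PosAt_ne h1.ij h2.ij hac p1 p2) (PosAt_ne h3.ij h1.ij h2.ij.symm p3 p1).symm
      (PosAt_ne h2.ij h3.ij h1.ij.symm p2 p3) (y0 p2.1) (y0 p1.1) (y0 p3.1)
    have cs := seg_cont cf α β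
    have hs := seg_inj hf hα hαβ hβ
    have P : ∀ {g x}, Continuous g → PosAt g (D.e v w) x → x ∈ Ioo α β → _ :=
      fun cg p hx => p.window cg cf hα hx.1 hx.2 hβ
    rcases hh with ⟨g1, g2, g3⟩ | ⟨g1, g2, g3⟩ | ⟨g1, g2, g3⟩
    · exact (cyc3 h1.ij h2.ij h3.ij cs hs (P (D.cont _ _) p1 g1) (P (D.cont _ _) p2 g2)
        (disj_window p3.only hα hαβ hβ g3)).elim
    · exact (cyc3 h2.ij h3.ij h1.ij cs hs (P (D.cont _ _) p2 g1) (P (D.cont _ _) p3 g2)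
        (disj_window p1.only hα hαβ hβ g3)).elim
    · exact (cyc3 h3.ij h1.ij h2.ij cs hs (P (D.cont _ _) p3 g2) (P (D.cont _ _) p1 g1)
        (disj_window p2.only hα hαβ hβ g3)).elim
  · rw [I_rev h3, h, neg_neg]

lemma disj_rev {i j : V} {g : ℝ → ℂ} (h : Disj (D.e i j) g) : Disj (D.e j i) g :=
  fun s hs t ht he => h _ (sub_mem hs) t ht (by rw [← rev_apply]; exact he)

/-- For four vertices `i ≺ j ≺ k ≺ l`, the edges `ik` and `jl` do not cross: otherwise, by `k4`, the
quadrilateral `ijkl` would be simple, and `vw` would cross `ij`, `jk`, `kl` in one direction and `li`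
in the other. By `window3`, a part of `vw` avoids `li` and crosses exactly two of the other sides,
which contradicts `cyc4`. -/
lemma interleaved (hT : D.NoTouch) {v w i j k l : V} (hij : D.Prec v w i j) (hjk : D.Prec v w j k)
    (hkl : D.Prec v w k l) : D.I i k j l = 0 := by
  by_contra hne
  obtain ⟨hik, -⟩ := hij.trans hT hjk
  obtain ⟨hjl, -⟩ := hjk.trans hT hkl
  obtain ⟨hil, Iil⟩ := (hij.trans hT hjk).trans hT hkl
  obtain ⟨hij, Iij⟩ := hij
  obtain ⟨hjk, Ijk⟩ := hjk
  obtain ⟨hkl, Ikl⟩ := hkl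
  have h : Ind4 i j k l := ⟨hij.ij, hkl.ij, hik.ij, hil.ij, hjk.ij, hjl.ij⟩
  have h' : Ind4 i k j l := ⟨h.ik, h.jl, h.ij, h.il, h.jk.symm, h.kl⟩
  have h'' : Ind4 j k l i := Ind4_rot h
  have z1 : D.I i j k l = 0 := by
    have := ((k4 h').resolve_left hne).2
    rwa [I_rev h, neg_eq_zero] at this
  have z2 : D.I j k l i = 0 := by
    have hne' : D.I k i j l ≠ 0 := by rw [I_rev h']; exact neg_ne_zero.2 hne
    have := ((k4 h'.rev).resolve_left hne').2
    rw [I_rev' h'', neg_eq_zero] at this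
    exact this
  have d1 := hT.disj h z1
  have d2 := hT.disj h'' z2
  obtain ⟨x1, p1⟩ := posAt_edge hij Iij
  obtain ⟨x2, p2⟩ := posAt_edge hjk Ijk
  obtain ⟨x3, p3⟩ := posAt_edge hkl Ikl
  obtain ⟨y, p4⟩ := posAt_edge hil Iil
  have cf := D.cont v w
  have hf := D.inj v w hij.kl
  have y1 : y ≠ x1 := by
    rintro rfl
    obtain ⟨-, -, u, hu, e, -⟩ := p4
    obtain ⟨-, -, u', hu', e', -⟩ := p1
    exact hu.1.ne' (D.adj i l j h.il h.ij h.jl.symm u ⟨hu.1.le, hu.2.le⟩ u' ⟨hu'.1.le, hu'.2.le⟩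
      (e.trans e'.symm)).1
  have y3 : y ≠ x3 := by
    rintro rfl
    obtain ⟨-, -, u, hu, e, -⟩ := p4
    obtain ⟨-, -, u', hu', e', -⟩ := p3
    exact hu.2.ne (adj_end h.il.symm h.kl.symm h.ik ⟨hu.1.le, hu.2.le⟩ ⟨hu'.1.le, hu'.2.le⟩
      (e.trans e'.symm)).1
  obtain ⟨α, β, hα, hαβ, hβ, hy, hh⟩ := window3 (y := y) p1.1 p2.1 p3.1
      (PosAt_ne h.ij h.jk h.ik p1 p2) (p1.ne_of_disj p3 d1)
      (PosAt_ne h.jk h.kl h.jl p2 p3) (p4.ne_of_disj p2 (disj_rev d2.symm)) y1 y3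
  have cs := seg_cont cf α β
  have hs := seg_inj hf hα hαβ hβ
  have P : ∀ {g x}, Continuous g → PosAt g (D.e v w) x → x ∈ Ioo α β → _ :=
    fun cg p hx => p.window cg cf hα hx.1 hx.2 hβ
  have q4 : Disj (D.e l i) (seg (D.e v w) α β) := disj_rev (disj_window p4.only hα hαβ hβ hy)
  rcases hh with ⟨g1, g2, g3⟩ | ⟨g1, g2, g3⟩ | ⟨g1, g2, g3⟩
  · exact cyc4 h d1 d2 cs hs (P (D.cont _ _) p1 g1) (Or.inl ⟨P (D.cont _ _) p2 g2,
      disj_window p3.only hα hαβ hβ g3⟩) q4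
  · exact cyc4 h'' d2 d1.symm cs hs (P (D.cont _ _) p2 g1) (Or.inl ⟨P (D.cont _ _) p3 g2,
      q4⟩) (disj_window p1.only hα hαβ hβ g3)
  · exact cyc4 h d1 d2 cs hs (P (D.cont _ _) p1 g1) (Or.inr ⟨disj_window p2.only hα hαβ hβ g3,
      P (D.cont _ _) p3 g2⟩) q4

end Drw

/-- Mirsky's theorem: a finite set without a chain of `d + 1` elements contains an antichain of at
least `|S| / d` elements. -/
lemma mirsky {V : Type} [DecidableEq V] (r : V → V → Prop) (hr : ∀ a b c, r a b → r b c → r a c)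
    (d : ℕ) (S : Finset V) :
    (∃ c : ℕ → V, (∀ a, a < d + 1 → c a ∈ S) ∧ ∀ a b, a < b → b < d + 1 → r (c a) (c b)) ∨
    ∃ A ⊆ S, (∀ x ∈ A, ∀ y ∈ A, ¬ r x y) ∧ S.card ≤ d * A.card := by
  classical
  induction d generalizing S with
  | zero =>
    rcases S.eq_empty_or_nonempty with h | ⟨s, hs⟩
    · exact Or.inr ⟨∅, by simp, by simp, by simp [h]⟩
    · exact Or.inl ⟨fun _ => s, fun _ _ => hs, fun a b _ _ => by omega⟩
  | succ d ih =>
    set A := S.filter fun x => ∀ y ∈ S, ¬ r y x with hA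
    rcases ih (S \ A) with ⟨c, h1, h2⟩ | ⟨B, hB, h1, h2⟩
    · have h0 := h1 0 (by omega)
      simp only [hA, Finset.mem_sdiff, Finset.mem_filter, not_and, not_forall, not_not] at h0
      obtain ⟨y, hy, hyc⟩ := h0.2 h0.1
      refine Or.inl ⟨fun n => if n = 0 then y else c (n - 1), fun a ha => ?_, fun a b hab hb => ?_⟩
      · by_cases h : a = 0
        · simpa [h] using hy
        · simp only [h, if_false]; exact (Finset.mem_sdiff.1 (h1 _ (by omega))).1
      · have hb0 : b ≠ 0 := by omega
        simp only [hb0, if_false]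
        by_cases h : a = 0
        · simp only [h, if_true]
          by_cases hb1 : b = 1
          · simpa [hb1] using hyc
          · exact hr _ _ _ hyc (h2 _ _ (by omega) (by omega))
        · simp only [h, if_false]; exact h2 _ _ (by omega) (by omega)
    · right
      have hc : S.card = (S \ A).card + A.card :=
        (Finset.card_sdiff_add_card_eq_card (Finset.filter_subset _ _)).symm
      rcases le_total A.card B.card with h | h
      · exact ⟨B, hB.trans Finset.sdiff_subset, h1, by rw [hc]; nlinarith⟩
      · refine ⟨A, Finset.filter_subset _ _, fun x hx y hy => ?_, by rw [hc]; nlinarith⟩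
        exact (Finset.mem_filter.1 hy).2 x (Finset.mem_filter.1 hx).1

namespace Drw

variable {V : Type} {D : Drw V}

/-- If no `Prec` has a chain of `d + 1` elements, plane paths can be built greedily: the next edge `vw`
is chosen arbitrarily, and the path continues in an antichain for `vw`. -/
lemma path_of_no_chain [DecidableEq V] (hT : D.NoTouch) {d : ℕ} (hd : 1 ≤ d)
    (hc : ∀ v w (c : ℕ → V), ¬ ∀ a b, a < b → b < d + 1 → D.Prec v w (c a) (c b)) (k : ℕ) :
    ∀ (S : Finset V) (v : V), v ∈ S → (d + 1) ^ k ≤ S.card →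
      ∃ p, D.PlaneSeq k p ∧ p 0 = v ∧ ∀ a ≤ k, p a ∈ S := by
  induction k with
  | zero =>
    intro S v hv _
    exact ⟨fun _ => v, ⟨fun a b ha hb _ => by omega, fun a b _ h => by omega⟩, rfl, fun _ _ => hv⟩
  | succ k ih =>
    intro S v hv hS
    have hk : 1 ≤ (d + 1) ^ k := Nat.one_le_pow _ _ (by omega)
    have h2 : 1 < S.card := lt_of_lt_of_le (by rw [pow_succ]; nlinarith) hS
    obtain ⟨w, hw, hwv⟩ := Finset.exists_mem_ne h2 v
    rcases mirsky (D.Prec v w) (fun a b c => Prec.trans hT) d ((S.erase v).erase w) with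
      ⟨c, -, h⟩ | ⟨A, hA, hA', hcard⟩
    · exact absurd h (hc v w c)
    have hAS : ∀ x ∈ A, x ≠ w ∧ x ≠ v ∧ x ∈ S := fun x hx => by
      have := hA hx
      simp only [Finset.mem_erase] at this
      exact this
    rw [Finset.card_erase_of_mem (Finset.mem_erase.2 ⟨hwv, hw⟩), Finset.card_erase_of_mem hv] at hcard
    have hwA : w ∉ A := fun h => (hAS w h).1 rfl
    obtain ⟨p, hp, hp0, hpS⟩ := ih (insert w A) w (Finset.mem_insert_self _ _) (by
      rw [Finset.card_insert_of_notMem hwA]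
      by_contra hlt
      push Not at hlt
      have e : (d + 1) ^ (k + 1) = d * (d + 1) ^ k + (d + 1) ^ k := by ring
      have h3 : (d + 1) ^ (k + 1) ≤ d * A.card + 2 := by omega
      have h4 : A.card + 2 ≤ (d + 1) ^ k := by omega
      nlinarith)
    have hpA : ∀ a, 1 ≤ a → a ≤ k → p a ∈ A := fun a h1 ha => by
      rcases Finset.mem_insert.1 (hpS a ha) with h | h
      · have := hp.1 a 0 ha (by omega) (by rw [h, hp0]); omega
      · exact h
    have hpv : ∀ a, a ≤ k → p a ≠ v := fun a ha => by
      rcases Finset.mem_insert.1 (hpS a ha) with h | h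
      · rw [h]; exact hwv
      · exact (hAS _ h).2.1
    refine ⟨fun n => if n = 0 then v else p (n - 1), ⟨fun a b ha hb h => ?_, fun a b hab hb => ?_⟩,
      by simp, fun a ha => ?_⟩
    · by_cases h0 : a = 0 <;> by_cases h1 : b = 0 <;> simp only [h0, h1, if_true, if_false] at h
      · omega
      · exact absurd h.symm (hpv _ (by omega))
      · exact absurd h (hpv _ (by omega))
      · have := hp.1 _ _ (by omega) (by omega) h; omega
    · have hb0 : b ≠ 0 := by omega
      simp only [hb0, if_false, Nat.add_one_ne_zero, Nat.add_sub_cancel]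
      by_cases h0 : a = 0
      · simp only [h0, if_true, hp0]
        have m1 := hpA (b - 1) (by omega) (by omega)
        have m2 := hpA b (by omega) (by omega)
        have hne : p (b - 1) ≠ p b := fun h => by
          have := hp.1 _ _ (by omega) (by omega) h; omega
        have h4 : Ind4 (p (b - 1)) (p b) v w := ⟨hne, hwv.symm, (hAS _ m1).2.1, (hAS _ m1).1,
          (hAS _ m2).2.1, (hAS _ m2).1⟩
        rw [I_swap]
        rcases I_values (D := D) h4 with h | h | h
        · rw [h, neg_zero]
        · exact absurd ⟨h4, h⟩ (hA' _ m1 _ m2)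
        · exact absurd ⟨h4.rev, by rw [I_rev h4, h, neg_neg]⟩ (hA' _ m2 _ m1)
      · simp only [h0, if_false]
        have := hp.2 (a - 1) (b - 1) (by omega) (by omega)
        rwa [Nat.sub_add_cancel (by omega), Nat.sub_add_cancel (by omega)] at this
    · by_cases h0 : a = 0
      · simpa [h0] using hv
      · simp only [h0, if_false]
        rcases Finset.mem_insert.1 (hpS (a - 1) (by omega)) with h | h
        · rw [h]; exact hw
        · exact (hAS _ h).2.2

/-- A chain `c 0 ≺ c 1 ≺ … ≺ c (2h - 1)` yields the plane zigzag path
`c 0, c h, c 1, c (h + 1), …`. -/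
lemma path_of_chain (hT : D.NoTouch) {h : ℕ} {v w : V} {c : ℕ → V}
    (hc : ∀ a b, a < b → b < 2 * h → D.Prec v w (c a) (c b)) :
    D.PlaneSeq (2 * h - 1) (fun n => if n % 2 = 0 then c (n / 2) else c (h + n / 2)) := by
  have inj : ∀ a b, a < 2 * h → b < 2 * h → c a = c b → a = b := fun a b ha hb e => by
    rcases lt_trichotomy a b with hl | hl | hl
    · exact absurd e (hc a b hl hb).1.ij
    · exact hl
    · exact absurd e.symm (hc b a hl ha).1.ij
  refine ⟨fun a b ha hb e => ?_, fun a b hab hb => ?_⟩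
  · by_cases h0 : h = 0
    · omega
    simp only at e
    split_ifs at e with h1 h2 h2
    · have := inj _ _ (by omega) (by omega) e; omega
    · have := inj _ _ (by omega) (by omega) e; omega
    · have := inj _ _ (by omega) (by omega) e; omega
    · have := inj _ _ (by omega) (by omega) e; omega
  · have l1 : (a + 1) / 2 < (b + 1) / 2 := by omega
    have l2 : (b + 1) / 2 < h + a / 2 := by omega
    have l3 : h + a / 2 < h + b / 2 := by omega
    have l4 : h + b / 2 < 2 * h := by omega
    have hI := interleaved hT (hc _ _ l1 (by omega)) (hc _ _ l2 (by omega)) (hc _ _ l3 l4)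
    have h4 : Ind4 (c ((a + 1) / 2)) (c (h + a / 2)) (c ((b + 1) / 2)) (c (h + b / 2)) := by
      constructor <;> exact fun e => absurd (inj _ _ (by omega) (by omega) e) (by omega)
    have hI1 : D.I (c (h + a / 2)) (c ((a + 1) / 2)) (c ((b + 1) / 2)) (c (h + b / 2)) = 0 := by
      rw [I_rev h4, hI, neg_zero]
    -- The edge from `x` to `x + 1` joins `lo = (x + 1) / 2` to `hi = h + x / 2`, in this order
    -- for even `x` and in the opposite order for odd `x`.
    have key : ∀ x, ((if x % 2 = 0 then c (x / 2) else c (h + x / 2)) = c ((x + 1) / 2) ∧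
        (if (x + 1) % 2 = 0 then c ((x + 1) / 2) else c (h + (x + 1) / 2)) = c (h + x / 2)) ∨
        ((if x % 2 = 0 then c (x / 2) else c (h + x / 2)) = c (h + x / 2) ∧
        (if (x + 1) % 2 = 0 then c ((x + 1) / 2) else c (h + (x + 1) / 2)) = c ((x + 1) / 2)) := by
      intro x
      rcases Nat.mod_two_eq_zero_or_one x with hx | hx
      · left
        rw [if_pos hx, if_neg (by omega)]
        exact ⟨congrArg c (by omega), congrArg c (by omega)⟩
      · right
        rw [if_neg (by omega), if_pos (by omega)]
        exact ⟨rfl, rfl⟩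
    change D.I (if a % 2 = 0 then c (a / 2) else c (h + a / 2))
      (if (a + 1) % 2 = 0 then c ((a + 1) / 2) else c (h + (a + 1) / 2))
      (if b % 2 = 0 then c (b / 2) else c (h + b / 2))
      (if (b + 1) % 2 = 0 then c ((b + 1) / 2) else c (h + (b + 1) / 2)) = 0
    rcases key a with ⟨e1, e2⟩ | ⟨e1, e2⟩ <;> rcases key b with ⟨e3, e4⟩ | ⟨e3, e4⟩ <;>
      rw [e1, e2, e3, e4]
    · exact hI
    · rw [I_rev' h4, hI, neg_zero]
    · exact hI1
    · rw [I_rev' h4.rev, hI1, neg_zero]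

/-- A touch-free drawing with `(2k + 2)^k` vertices contains a plane path with `k` edges. -/
lemma exists_planeSeq {N k : ℕ} {D : Drw (Fin N)} (hT : D.NoTouch) (hN : (2 * k + 2) ^ k ≤ N) :
    ∃ p, D.PlaneSeq k p := by
  by_cases hc : ∀ v w (c : ℕ → Fin N), ¬ ∀ a b, a < b → b < 2 * k + 1 + 1 → D.Prec v w (c a) (c b)
  · have h0 : 0 < N := lt_of_lt_of_le (by positivity) hN
    obtain ⟨p, hp, -⟩ := path_of_no_chain hT (d := 2 * k + 1) (by omega) hc k Finset.univ ⟨0, h0⟩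
      (Finset.mem_univ _) (by simpa using hN)
    exact ⟨p, hp⟩
  · push Not at hc
    obtain ⟨v, w, c, hc⟩ := hc
    obtain ⟨h1, h2⟩ := path_of_chain hT (h := k + 1) (fun a b hab hb => hc a b hab (by omega))
    exact ⟨_, fun a b ha hb => h1 a b (by omega) (by omega), fun a b hab hb => h2 a b hab (by omega)⟩

end Drw

/-! ### The length of the path -/

open Drw in
/-- A drawing with enough vertices contains a plane path with `k` edges. -/
lemma exists_plane_path {n k : ℕ} (D : SimpleDrawing n) (hn : 9 * ((2 * k + 2) ^ k) ^ 9 ≤ n) :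
    ∃ w : Fin (k + 1) → Fin n, Function.Injective w ∧
      ∀ (a b : ℕ) (ha : a + 1 < k + 1) (hb : b + 1 < k + 1), a ≠ b →
        ¬ D.Crosses (w ⟨a, by omega⟩) (w ⟨a + 1, ha⟩) (w ⟨b, by omega⟩) (w ⟨b + 1, hb⟩) := by
  obtain ⟨E, hE⟩ := exists_drw D
  obtain ⟨g, hg, hT⟩ := E.exists_noTouch (by positivity) hn
  obtain ⟨p, hp⟩ := exists_planeSeq hT le_rfl
  exact plane_transfer D hE hg hT hp

/-- If `log n / log log n > 200`, some `k ≥ log n / (200 log log n)` is small enough for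
`exists_plane_path`. -/
lemma exists_length {n : ℕ} (hn : 3 ≤ n)
    (h : 1 < (1 / 200 : ℝ) * Real.log n / Real.log (Real.log n)) :
    ∃ k : ℕ, (1 / 200 : ℝ) * Real.log n / Real.log (Real.log n) ≤ k ∧
      9 * ((2 * k + 2) ^ k) ^ 9 ≤ n := by
  have hn3 : (3 : ℝ) ≤ n := by exact_mod_cast hn
  have l3 : (1.09 : ℝ) ≤ Real.log n := by
    have h1 := Real.exp_one_lt_d9
    have h2 := Real.exp_pos 1
    have h3 := Real.one_sub_inv_le_log_of_pos (x := 3 / Real.exp 1) (by positivity)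
    rw [Real.log_div (by norm_num) h2.ne', Real.log_exp, inv_div] at h3
    have h4 := Real.log_le_log (by norm_num) hn3
    linarith
  set L := Real.log n with hL
  have hl : 1 - L⁻¹ ≤ Real.log L := Real.one_sub_inv_le_log_of_pos (by linarith)
  have hLL : L * L⁻¹ = 1 := mul_inv_cancel₀ (by linarith)
  set l := Real.log L with hldef
  have hl0 : 0 < l := Real.log_pos (by linarith)
  -- the hypothesis excludes `L` close to `1`, hence forces `L` to be large
  have hbig : 100 ≤ L := by
    rw [lt_div_iff₀ hl0] at h
    by_contra! hc
    nlinarith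
  have hl1 : 1 ≤ l := by
    rw [hldef, Real.le_log_iff_exp_le (by linarith)]
    linarith [Real.exp_one_lt_d9]
  set r := (1 / 200 : ℝ) * L / l with hr
  have hrl : r * l = L / 200 := by rw [hr]; field_simp
  refine ⟨⌈r⌉₊, Nat.le_ceil r, ?_⟩
  set k := ⌈r⌉₊ with hk
  have k1 : (k : ℝ) < r + 1 := Nat.ceil_lt_add_one (by linarith)
  have k0 : (1 : ℝ) < k := lt_of_lt_of_le h (Nat.le_ceil r)
  have k2 : (2 * k + 2 : ℝ) ≤ L := by nlinarith
  have k3 : Real.log (2 * k + 2) ≤ l := Real.log_le_log (by positivity) k2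
  have k4 : 9 * (k * Real.log (2 * k + 2)) ≤ 9 * (2 * (L / 200)) := by
    have h1 : (k : ℝ) * Real.log (2 * k + 2) ≤ k * l := mul_le_mul_of_nonneg_left k3 (by linarith)
    have h2 : (k : ℝ) * l ≤ 2 * r * l := mul_le_mul_of_nonneg_right (by linarith) hl0.le
    linarith
  have k5 : Real.log 9 ≤ 8 := by linarith [Real.log_le_sub_one_of_pos (show (0 : ℝ) < 9 by norm_num)]
  have : (9 * ((2 * k + 2) ^ k) ^ 9 : ℝ) ≤ n := by
    rw [← Real.log_le_log_iff (by positivity) (by linarith), Real.log_mul (by norm_num)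
      (by positivity), Real.log_pow, Real.log_pow]
    push_cast
    linarith
  exact_mod_cast this

end PlanePath

/-- There is a constant `c > 0` such that every simple drawing of `K n`
(`n ≥ 3`) contains a plane path with at least `1 + c·(log n)/(log log n)` vertices. -/
theorem stmt_5 :
    ∃ c : ℝ, 0 < c ∧ ∀ n : ℕ, 3 ≤ n → ∀ D : SimpleDrawing n,
      ∃ (m : ℕ) (w : Fin m → Fin n), Function.Injective w ∧
        1 + c * Real.log n / Real.log (Real.log n) ≤ (m : ℝ) ∧
        ∀ (a b : ℕ) (ha : a + 1 < m) (hb : b + 1 < m), a ≠ b →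
          ¬ D.Crosses (w ⟨a, by omega⟩) (w ⟨a + 1, ha⟩)
              (w ⟨b, by omega⟩) (w ⟨b + 1, hb⟩) := by
  refine ⟨1 / 200, by norm_num, fun n hn D => ?_⟩
  rcases le_or_gt ((1 / 200 : ℝ) * Real.log n / Real.log (Real.log n)) 1 with h | h
  · -- a single edge is long enough
    refine ⟨2, Fin.castLE (by omega), Fin.castLE_injective _, by push_cast; linarith, ?_⟩
    intro a b ha hb hab
    omega
  · obtain ⟨k, hk, hkn⟩ := PlanePath.exists_length hn h
    obtain ⟨w, hw1, hw2⟩ := PlanePath.exists_plane_path D hkn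
    exact ⟨k + 1, w, hw1, by push_cast; linarith, hw2⟩
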